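/- arXiv:2401.05241 — 2 statements merged into one kernel-verified Lean document; each statement's English description precedes it below -/
import Mathlib

section
/- Uniqueness for the Laplace equation in weighted spaces: suppose u : ℝ^d → ℝ is harmonic (Δu = 0 in the sense of distributions) and ∫_{ℝ^d} (1+|x|²)^{p(θ−1−d/p)/2} |u(x)|^p dx < ∞ with 1 + d/p < θ and p > 1. Then u ≡ 0. -/
open MeasureTheory

open Set Filter Topology Metric in
/-- A smooth radial profile. -/
theorem profile_exists : ∃ g b db : ℝ → ℝ, ContDiff ℝ (⊤ : ℕ∞) g ∧
    (∀ s, HasDerivAt g (-b s) s) ∧ (∀ s, HasDerivAt b (db s) s) ∧ Continuous db ∧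
    (∀ s, 0 ≤ b s) ∧ (∀ s, 1 ≤ s → g s = 0) ∧ (∀ s, 1 ≤ s → b s = 0) ∧
    (∀ s, 1 ≤ s → db s = 0) ∧ 0 < b 0 := by
  let P : Polynomial ℝ := Polynomial.X ^ 2
  let Q : Polynomial ℝ := Polynomial.X ^ 2 * (P - Polynomial.derivative P)
  have key : ∀ (p : Polynomial ℝ) (s : ℝ), HasDerivAt
      (fun s : ℝ => p.eval (1 - s)⁻¹ * expNegInvGlue (1 - s))
      (-((Polynomial.X ^ 2 * (p - Polynomial.derivative p)).eval (1 - s)⁻¹ *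
        expNegInvGlue (1 - s))) s := by
    intro p s
    have h1 := expNegInvGlue.hasDerivAt_polynomial_eval_inv_mul p (1 - s)
    have h2 : HasDerivAt (fun s : ℝ => 1 - s) (-1) s := by
      simpa using (hasDerivAt_id s).const_sub 1
    have := h1.comp s h2
    simpa [Function.comp_def] using this
  refine ⟨fun s => expNegInvGlue (1 - s),
    fun s => P.eval (1 - s)⁻¹ * expNegInvGlue (1 - s),
    fun s => -(Q.eval (1 - s)⁻¹ * expNegInvGlue (1 - s)), ?_, ?_, ?_, ?_, ?_, ?_, ?_, ?_, ?_⟩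
  · exact expNegInvGlue.contDiff.comp (contDiff_const.sub contDiff_id)
  · intro s
    have := key 1 s
    simpa [P] using this
  · intro s
    exact key P s
  · exact ((expNegInvGlue.continuous_polynomial_eval_inv_mul Q).comp
      (continuous_const.sub continuous_id)).neg
  · intro s
    have := expNegInvGlue.nonneg (1 - s)
    simp only [P, Polynomial.eval_pow, Polynomial.eval_X]
    positivity
  · intro s hs
    exact expNegInvGlue.zero_of_nonpos (by linarith)
  · intro s hs
    simp [expNegInvGlue.zero_of_nonpos (show 1 - s ≤ 0 by linarith)]
  · intro s hs
    simp [expNegInvGlue.zero_of_nonpos (show 1 - s ≤ 0 by linarith)]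
  · have := expNegInvGlue.pos_of_pos (zero_lt_one)
    simpa [P] using this

/-- A continuous profile vanishing beyond one is bounded on the positive half line. -/
theorem profile_bound (f : ℝ → ℝ) (hf : Continuous f) (h1 : ∀ s, 1 ≤ s → f s = 0) :
    ∃ B : ℝ, 0 ≤ B ∧ ∀ s, 0 ≤ s → |f s| ≤ B := by
  obtain ⟨B, hB⟩ := (isCompact_Icc (a := (0:ℝ)) (b := 1)).exists_bound_of_continuousOn
    hf.continuousOn
  have h0 : 0 ≤ B := (norm_nonneg _).trans (hB 0 (by simp))
  refine ⟨B, h0, fun s hs => ?_⟩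
  rcases le_total s 1 with h | h
  · exact hB s ⟨hs, h⟩
  · simpa [h1 s h] using h0

/-- Laplacian of a radial function. -/
theorem radial_laplacian (d : ℕ) (g b db : ℝ → ℝ)
    (hg : ∀ s, HasDerivAt g (-b s) s) (hb : ∀ s, HasDerivAt b (db s) s)
    (y : EuclideanSpace ℝ (Fin d)) (a : ℝ) (x : EuclideanSpace ℝ (Fin d)) :
    (∑ i, iteratedFDeriv ℝ 2 (fun x => g (a * ‖x - y‖ ^ 2)) x
          ![EuclideanSpace.single i (1 : ℝ), EuclideanSpace.single i (1 : ℝ)])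
      = - (2 * a * d * b (a * ‖x - y‖ ^ 2)
          + 4 * a ^ 2 * ‖x - y‖ ^ 2 * db (a * ‖x - y‖ ^ 2)) := by
  have hn : ∀ x : EuclideanSpace ℝ (Fin d),
      HasFDerivAt (fun x => a * ‖x - y‖ ^ 2) ((2 * a) • innerSL ℝ (x - y)) x := by
    intro x
    have := (((hasFDerivAt_id x).sub_const y).norm_sq).const_mul a
    refine this.congr_fderiv ?_
    ext v
    simp
    ring
  have h1 : ∀ x : EuclideanSpace ℝ (Fin d), HasFDerivAt (fun x => g (a * ‖x - y‖ ^ 2))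
      ((-2 * a * b (a * ‖x - y‖ ^ 2)) • innerSL ℝ (x - y)) x := by
    intro x
    have := (hg (a * ‖x - y‖ ^ 2)).comp_hasFDerivAt x (hn x)
    refine this.congr_fderiv ?_
    ext v
    simp
    ring
  have h2 : fderiv ℝ (fun x => g (a * ‖x - y‖ ^ 2)) =
      fun x => (-2 * a * b (a * ‖x - y‖ ^ 2)) • innerSL ℝ (x - y) :=
    funext fun x => (h1 x).fderiv
  have h3 : HasFDerivAt (fun x => -2 * a * b (a * ‖x - y‖ ^ 2))
      ((-4 * a ^ 2 * db (a * ‖x - y‖ ^ 2)) • innerSL ℝ (x - y)) x := by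
    have := ((hb (a * ‖x - y‖ ^ 2)).comp_hasFDerivAt x (hn x)).const_mul (-2 * a)
    refine this.congr_fderiv ?_
    ext v
    simp
    ring
  have h4 : HasFDerivAt (fun x : EuclideanSpace ℝ (Fin d) => innerSL ℝ (x - y)) (innerSL ℝ) x := by
    have := (innerSL ℝ (E := EuclideanSpace ℝ (Fin d))).hasFDerivAt.comp x
      ((hasFDerivAt_id x).sub_const y)
    exact this
  have h5 := (h3.smul h4).fderiv
  have h6 : ∀ i : Fin d, iteratedFDeriv ℝ 2 (fun x => g (a * ‖x - y‖ ^ 2)) x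
          ![EuclideanSpace.single i (1 : ℝ), EuclideanSpace.single i (1 : ℝ)]
      = -2 * a * b (a * ‖x - y‖ ^ 2) - 4 * a ^ 2 * db (a * ‖x - y‖ ^ 2) * (x i - y i) ^ 2 := by
    intro i
    rw [iteratedFDeriv_two_apply, h2]
    erw [h5]
    have hone : (innerSL ℝ (EuclideanSpace.single i (1:ℝ))) (EuclideanSpace.single i (1:ℝ))
        = (1:ℝ) := by
      rw [innerSL_apply_apply]
      simp
    simp [EuclideanSpace.inner_single_right, hone]
    ring
  simp_rw [h6]
  rw [Finset.sum_sub_distrib, ← Finset.mul_sum Finset.univ (fun i => (x i - y i) ^ 2)]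
  have : ‖x - y‖ ^ 2 = ∑ i, (x i - y i) ^ 2 := by
    simp [EuclideanSpace.norm_sq_eq]
  rw [← this]
  simp
  ring

/-- Products of a locally integrable function with a continuous function vanishing outside a ball. -/
theorem integrable_mul_ball {d : ℕ} {u f : EuclideanSpace ℝ (Fin d) → ℝ}
    (hu : LocallyIntegrable u volume) (hf : Continuous f) (y : EuclideanSpace ℝ (Fin d)) (r : ℝ)
    (h0 : ∀ x, r ≤ ‖x - y‖ → f x = 0) : Integrable (fun x => u x * f x) volume := by
  have hc : HasCompactSupport f := by
    refine HasCompactSupport.intro (isCompact_closedBall y r) fun x hx => h0 x ?_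
    rw [Metric.mem_closedBall, dist_eq_norm, not_le] at hx
    exact hx.le
  simpa [mul_comm] using hu.integrable_smul_left_of_hasCompactSupport hf hc

theorem G_deriv {d : ℕ} {u : EuclideanSpace ℝ (Fin d) → ℝ}
    (hu : LocallyIntegrable u volume) (b db : ℝ → ℝ)
    (hb : ∀ s, HasDerivAt b (db s) s) (hdbc : Continuous db)
    (b0 : ∀ s, 1 ≤ s → b s = 0) (db0 : ∀ s, 1 ≤ s → db s = 0)
    (y : EuclideanSpace ℝ (Fin d)) (s : ℝ) (hs : 0 < s) :
    HasDerivAt (fun s : ℝ => ∫ x, u x * b (s ^ 2 * ‖x - y‖ ^ 2))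
      (∫ x, u x * (2 * s * ‖x - y‖ ^ 2 * db (s ^ 2 * ‖x - y‖ ^ 2))) s := by
  obtain ⟨B, hB0, hB⟩ := profile_bound db hdbc db0
  have hbc : Continuous b := continuous_iff_continuousAt.2 fun s => (hb s).continuousAt
  have hone : ∀ t : ℝ, s / 2 < t → ∀ x : EuclideanSpace ℝ (Fin d), 2 / s ≤ ‖x - y‖ →
      1 ≤ t ^ 2 * ‖x - y‖ ^ 2 := by
    intro t ht x hx
    have ht0 : 0 ≤ t := by linarith
    have : 1 ≤ t * ‖x - y‖ := by
      calc (1:ℝ) = (s / 2) * (2 / s) := by field_simp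
        _ ≤ t * ‖x - y‖ := by gcongr
    rw [← mul_pow]
    exact one_le_pow₀ this
  refine (hasDerivAt_integral_of_dominated_loc_of_deriv_le (s := Set.Ioo (s / 2) (2 * s))
    (F' := fun s x => u x * (2 * s * ‖x - y‖ ^ 2 * db (s ^ 2 * ‖x - y‖ ^ 2)))
    (bound := (Metric.closedBall y (2 / s)).indicator
      fun x => |u x| * (2 * (2 * s) * (2 / s) ^ 2 * B))
    (Ioo_mem_nhds (by linarith) (by linarith)) ?_ ?_ ?_ ?_ ?_ ?_).2
  · filter_upwards with t
    exact hu.aestronglyMeasurable.mul (by fun_prop)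
  · refine integrable_mul_ball hu (by fun_prop) y (2 / s) fun x hx => b0 _ (hone s (by linarith) x hx)
  · exact hu.aestronglyMeasurable.mul (by fun_prop)
  · filter_upwards with x t ht
    have ht0 : 0 < t := by linarith [ht.1]
    by_cases hx : ‖x - y‖ ≤ 2 / s
    · rw [Set.indicator_of_mem (by simpa [dist_eq_norm] using hx), norm_mul, Real.norm_eq_abs,
        Real.norm_eq_abs, abs_mul, abs_of_nonneg (show 0 ≤ 2 * t * ‖x - y‖ ^ 2 by positivity)]
      have := hB (t ^ 2 * ‖x - y‖ ^ 2) (by positivity)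
      have h2 := ht.2.le
      gcongr
    · rw [db0 _ (hone t ht.1 x (not_le.1 hx).le)]
      simp only [mul_zero, norm_zero]
      exact Set.indicator_nonneg (fun x _ => by positivity) x
  · rw [integrable_indicator_iff measurableSet_closedBall]
    exact ((hu.integrableOn_isCompact (isCompact_closedBall _ _)).norm).mul_const _
  · filter_upwards with x t ht
    have h1 : HasDerivAt (fun t : ℝ => t ^ 2 * ‖x - y‖ ^ 2) (2 * t * ‖x - y‖ ^ 2) t := by
      simpa using (hasDerivAt_pow 2 t).mul_const (‖x - y‖ ^ 2)
    have := ((hb _).comp t h1).const_mul (u x)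
    refine this.congr_deriv ?_
    ring

theorem scaling {d : ℕ} (f : ℝ → ℝ) (y : EuclideanSpace ℝ (Fin d)) (s : ℝ) (hs : 0 < s) :
    ∫ x : EuclideanSpace ℝ (Fin d), f (s ^ 2 * ‖x - y‖ ^ 2) =
      (s ^ d)⁻¹ * ∫ x : EuclideanSpace ℝ (Fin d), f (‖x‖ ^ 2) := by
  rw [integral_sub_right_eq_self (fun x => f (s ^ 2 * ‖x‖ ^ 2)) y]
  have := Measure.integral_comp_smul (volume : Measure (EuclideanSpace ℝ (Fin d)))
    (fun x => f (‖x‖ ^ 2)) s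
  simp only [norm_smul, mul_pow, Real.norm_eq_abs, sq_abs, finrank_euclideanSpace_fin,
    smul_eq_mul] at this
  rw [this, abs_of_pos (by positivity)]


open Filter Topology in
theorem G_zero {d : ℕ} (hd : 1 ≤ d) {p : ℝ} (hp : 1 < p) {u : EuclideanSpace ℝ (Fin d) → ℝ}
    (hu : LocallyIntegrable u volume)
    (hharm : ∀ φ : EuclideanSpace ℝ (Fin d) → ℝ, ContDiff ℝ (⊤ : ℕ∞) φ → HasCompactSupport φ →
      ∫ x, u x *
        (∑ i, iteratedFDeriv ℝ 2 φ x
          ![EuclideanSpace.single i (1 : ℝ), EuclideanSpace.single i (1 : ℝ)]) = 0)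
    (hup : MemLp u (ENNReal.ofReal p) volume)
    (g b db : ℝ → ℝ) (hgs : ContDiff ℝ (⊤ : ℕ∞) g)
    (hg : ∀ s, HasDerivAt g (-b s) s)
    (hb : ∀ s, HasDerivAt b (db s) s) (hdbc : Continuous db) (bnn : ∀ s, 0 ≤ b s)
    (g0 : ∀ s, 1 ≤ s → g s = 0)
    (b0 : ∀ s, 1 ≤ s → b s = 0) (db0 : ∀ s, 1 ≤ s → db s = 0)
    (y : EuclideanSpace ℝ (Fin d)) (s : ℝ) (hs : 0 < s) :
    ∫ x, u x * b (s ^ 2 * ‖x - y‖ ^ 2) = 0 := by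
  have hbc : Continuous b := continuous_iff_continuousAt.2 fun s => (hb s).continuousAt
  have hone : ∀ t : ℝ, 0 < t → ∀ x : EuclideanSpace ℝ (Fin d), 1 / t ≤ ‖x - y‖ →
      1 ≤ t ^ 2 * ‖x - y‖ ^ 2 := by
    intro t ht x hx
    have : 1 ≤ t * ‖x - y‖ := by
      calc (1:ℝ) = t * (1 / t) := by field_simp
        _ ≤ t * ‖x - y‖ := by gcongr
    rw [← mul_pow]
    exact one_le_pow₀ this
  have hcs : ∀ (f : ℝ → ℝ), (∀ s, 1 ≤ s → f s = 0) → ∀ t : ℝ, 0 < t →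
      HasCompactSupport (fun x : EuclideanSpace ℝ (Fin d) => f (t ^ 2 * ‖x - y‖ ^ 2)) := by
    intro f hf t ht
    refine HasCompactSupport.intro (isCompact_closedBall y (1 / t)) fun x hx => hf _ (hone t ht x ?_)
    rw [Metric.mem_closedBall, dist_eq_norm, not_le] at hx
    exact hx.le
  let G : ℝ → ℝ := fun s => ∫ x, u x * b (s ^ 2 * ‖x - y‖ ^ 2)
  let dG : ℝ → ℝ := fun s => ∫ x, u x * (2 * s * ‖x - y‖ ^ 2 * db (s ^ 2 * ‖x - y‖ ^ 2))
  have hG : ∀ s, 0 < s → HasDerivAt G (dG s) s := fun s hs =>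
    G_deriv hu b db hb hdbc b0 db0 y s hs
  have hode : ∀ s, 0 < s → d * G s + s * dG s = 0 := by
    intro s hs
    have h := hharm (fun x => g (s ^ 2 * ‖x - y‖ ^ 2))
      (hgs.comp (contDiff_const.mul ((contDiff_id.sub contDiff_const).norm_sq ℝ)))
      (hcs g g0 s hs)
    simp_rw [radial_laplacian d g b db hg hb y (s ^ 2)] at h
    have i1 : Integrable (fun x => u x * b (s ^ 2 * ‖x - y‖ ^ 2)) volume :=
      integrable_mul_ball hu (by fun_prop) y (1 / s) fun x hx => b0 _ (hone s hs x hx)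
    have i2 : Integrable (fun x => u x * (2 * s * ‖x - y‖ ^ 2 * db (s ^ 2 * ‖x - y‖ ^ 2))) volume :=
      integrable_mul_ball hu (by fun_prop) y (1 / s) fun x hx => by
        rw [db0 _ (hone s hs x hx), mul_zero]
    have e : (fun x => u x * -(2 * s ^ 2 * d * b (s ^ 2 * ‖x - y‖ ^ 2)
          + 4 * (s ^ 2) ^ 2 * ‖x - y‖ ^ 2 * db (s ^ 2 * ‖x - y‖ ^ 2))) =
        fun x => (-(2 * s ^ 2 * d)) * (u x * b (s ^ 2 * ‖x - y‖ ^ 2)) + (-(2 * s ^ 3)) *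
          (u x * (2 * s * ‖x - y‖ ^ 2 * db (s ^ 2 * ‖x - y‖ ^ 2))) := by
      funext x
      ring
    rw [e, integral_add (i1.const_mul _) (i2.const_mul _), integral_const_mul,
      integral_const_mul] at h
    change (-(2 * s ^ 2 * d)) * G s + (-(2 * s ^ 3)) * dG s = 0 at h
    have h2 : (2 * s ^ 2) * (d * G s + s * dG s) = 0 := by linarith
    exact (mul_eq_zero.1 h2).resolve_left (by positivity)
  have hF : ∀ s, 0 < s → HasDerivAt (fun s => s ^ d * G s) 0 s := by
    intro s hs
    refine ((hasDerivAt_pow d s).mul (hG s hs)).congr_deriv ?_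
    have : s ^ d = s ^ (d - 1) * s := by
      rw [← pow_succ, Nat.sub_add_cancel hd]
    rw [this]
    linear_combination s ^ (d - 1) * hode s hs
  have hconst : ∀ t, 0 < t → t ^ d * G t = s ^ d * G s := by
    intro t ht
    exact isOpen_Ioi.is_const_of_deriv_eq_zero isPreconnected_Ioi
      (fun x hx => (hF x hx).differentiableAt.differentiableWithinAt)
      (fun x hx => (hF x hx).deriv) (Set.mem_Ioi.2 ht) (Set.mem_Ioi.2 hs)
  have hpq := Real.HolderConjugate.conjExponent hp
  set q := p.conjExponent with hq
  let N : ℝ := (∫ x, |u x| ^ p) ^ (1 / p)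
  let M : ℝ := ∫ x : EuclideanSpace ℝ (Fin d), b (‖x‖ ^ 2) ^ q
  have hM : 0 ≤ M := integral_nonneg fun x => Real.rpow_nonneg (bnn _) _
  have hbound : ∀ t, 0 < t → |t ^ d * G t| ≤ N * M ^ (1 / q) * (t ^ d) ^ (1 / p) := by
    intro t ht
    have h1 : |G t| ≤ ∫ x, |u x| * b (t ^ 2 * ‖x - y‖ ^ 2) := by
      refine (abs_integral_le_integral_abs).trans_eq ?_
      congr 1
      funext x
      rw [abs_mul, abs_of_nonneg (bnn _)]
    have h2 := integral_mul_le_Lp_mul_Lq_of_nonneg (μ := volume) hpq (f := fun x => |u x|)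
      (g := fun x => b (t ^ 2 * ‖x - y‖ ^ 2))
      (Eventually.of_forall fun x => abs_nonneg _) (Eventually.of_forall fun x => bnn _)
      hup.norm
      ((show Continuous (fun x : EuclideanSpace ℝ (Fin d) => b (t ^ 2 * ‖x - y‖ ^ 2)) by
        fun_prop).memLp_of_hasCompactSupport (hcs b b0 t ht))
    rw [scaling (fun r => b r ^ q) y t ht] at h2
    have h3 := h1.trans h2
    rw [abs_mul, abs_of_pos (by positivity : 0 < t ^ d)]
    have hT : 0 < t ^ d := by positivity
    calc t ^ d * |G t| ≤ t ^ d * (N * ((t ^ d)⁻¹ * M) ^ (1 / q)) := by gcongr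
      _ = N * M ^ (1 / q) * (t ^ d * ((t ^ d)⁻¹) ^ (1 / q)) := by
        rw [Real.mul_rpow (by positivity) hM]; ring
      _ = _ := by
        congr 1
        rw [Real.inv_rpow hT.le, ← Real.rpow_neg hT.le]
        nth_rw 1 [← Real.rpow_one (t ^ d)]
        rw [← Real.rpow_add hT]
        congr 1
        have := hpq.inv_add_inv_eq_one
        rw [one_div, one_div]
        linarith
  have hlim : Tendsto (fun t : ℝ => N * M ^ (1 / q) * (t ^ d) ^ (1 / p)) (𝓝[>] 0) (𝓝 0) := by
    have hp' : 0 < 1 / p := by positivity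
    have : Continuous (fun t : ℝ => N * M ^ (1 / q) * (t ^ d) ^ (1 / p)) :=
      continuous_const.mul ((continuous_pow d).rpow_const fun _ => Or.inr hp'.le)
    have h := (this.tendsto 0).mono_left (nhdsWithin_le_nhds (s := Set.Ioi 0))
    rwa [zero_pow (by omega), Real.zero_rpow hp'.ne', mul_zero] at h
  have hle : |s ^ d * G s| ≤ 0 := by
    refine ge_of_tendsto hlim ?_
    filter_upwards [self_mem_nhdsWithin] with t ht
    rw [← hconst t ht]
    exact hbound t ht
  have h0 : s ^ d * G s = 0 := abs_nonpos_iff.1 hle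
  exact (mul_eq_zero.1 h0).resolve_left (by positivity)

open Filter Topology in
theorem ae_zero_of_G_zero {d : ℕ} {u : EuclideanSpace ℝ (Fin d) → ℝ}
    (hu : LocallyIntegrable u volume)
    (b : ℝ → ℝ) (hbc : Continuous b) (bnn : ∀ s, 0 ≤ b s)
    (b0 : ∀ s, 1 ≤ s → b s = 0) (bpos : 0 < b 0)
    (hG : ∀ (y : EuclideanSpace ℝ (Fin d)) (s : ℝ), 0 < s →
      ∫ x, u x * b (s ^ 2 * ‖x - y‖ ^ 2) = 0) : u =ᵐ[volume] 0 := by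
  obtain ⟨B, hB0, hB⟩ := profile_bound b hbc b0
  let m : ℝ := ∫ x : EuclideanSpace ℝ (Fin d), b (‖x‖ ^ 2)
  have hcs : HasCompactSupport (fun x : EuclideanSpace ℝ (Fin d) => b (‖x‖ ^ 2)) := by
    refine HasCompactSupport.intro (isCompact_closedBall 0 1) fun x hx => b0 _ ?_
    rw [Metric.mem_closedBall, dist_zero_right, not_le] at hx
    exact one_le_pow₀ hx.le
  have hc : Continuous (fun x : EuclideanSpace ℝ (Fin d) => b (‖x‖ ^ 2)) := by fun_prop
  have hm : 0 < m := hc.integral_pos_of_hasCompactSupport_nonneg_nonzero hcs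
    (fun x => bnn _) (x := 0) (by simpa using bpos.ne')
  let V : ℝ := (volume : Measure (EuclideanSpace ℝ (Fin d))).real (Metric.closedBall 0 1)
  have hV : 0 < V := ENNReal.toReal_pos (Metric.measure_closedBall_pos _ _ one_pos).ne'
    measure_closedBall_lt_top.ne
  filter_upwards [(Besicovitch.vitaliFamily (volume : Measure (EuclideanSpace ℝ (Fin d)))).ae_tendsto_average_norm_sub hu]
    with y h0
  have h1 := h0.comp (Besicovitch.tendsto_filterAt volume y)
  have h2 := tendsto_integral_smul_of_tendsto_average_norm_sub (μ := volume)
    (a := fun r : ℝ => Metric.closedBall y r) (l := 𝓝[>] (0:ℝ)) (f := u) (c := u y)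
    (g := fun r x => (r ^ d * m)⁻¹ * b (r⁻¹ ^ 2 * ‖x - y‖ ^ 2)) (m⁻¹ * B * V) h1 ?_ ?_ ?_ ?_
  · refine tendsto_nhds_unique (h2.congr' (f₂ := fun _ => (0:ℝ)) ?_) tendsto_const_nhds
    filter_upwards [self_mem_nhdsWithin] with r hr
    have := hG y r⁻¹ (inv_pos.2 hr)
    simp only [smul_eq_mul]
    calc _ = ∫ x, (r ^ d * m)⁻¹ * (u x * b (r⁻¹ ^ 2 * ‖x - y‖ ^ 2)) := by
          congr 1; funext x; ring
      _ = 0 := by rw [integral_const_mul, this, mul_zero]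
  · filter_upwards with r
    exact hu.integrableOn_isCompact (isCompact_closedBall _ _)
  · refine tendsto_const_nhds.congr' ?_
    filter_upwards [self_mem_nhdsWithin] with r hr
    have hr : 0 < r := hr
    rw [integral_const_mul, scaling b y r⁻¹ (inv_pos.2 hr)]
    change 1 = (r ^ d * m)⁻¹ * ((r⁻¹ ^ d)⁻¹ * m)
    rw [inv_pow, inv_inv]
    field_simp
  · filter_upwards [self_mem_nhdsWithin] with r hr x hx
    have hr : 0 < r := hr
    by_contra hx'
    rw [Metric.mem_closedBall, dist_eq_norm, not_le] at hx'
    apply hx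
    simp only
    rw [b0, mul_zero]
    rw [← mul_pow]
    refine one_le_pow₀ ?_
    rw [inv_mul_eq_div, one_le_div hr]
    exact hx'.le
  · filter_upwards [self_mem_nhdsWithin] with r hr x
    have hr : 0 < r := hr
    rw [Measure.addHaar_real_closedBall' _ _ hr.le, finrank_euclideanSpace_fin, abs_mul,
      abs_of_pos (by positivity)]
    calc (r ^ d * m)⁻¹ * |b (r⁻¹ ^ 2 * ‖x - y‖ ^ 2)| ≤ (r ^ d * m)⁻¹ * B := by
          gcongr
          exact hB _ (by positivity)
      _ = m⁻¹ * B * V / (r ^ d * V) := by field_simp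

theorem stmt13 (d : ℕ) (hd : 1 ≤ d) (p θ : ℝ) (hp : 1 < p)
    (hθ : 1 + (d : ℝ) / p < θ)
    (u : EuclideanSpace ℝ (Fin d) → ℝ)
    (hu : LocallyIntegrable u volume)
    -- `u` is harmonic in the sense of distributions: it annihilates the Laplacian of
    -- every smooth compactly supported test function.
    (hharm : ∀ φ : EuclideanSpace ℝ (Fin d) → ℝ, ContDiff ℝ (⊤ : ℕ∞) φ → HasCompactSupport φ →
      ∫ x, u x *
        (∑ i, iteratedFDeriv ℝ 2 φ x
          ![EuclideanSpace.single i (1 : ℝ), EuclideanSpace.single i (1 : ℝ)]) = 0)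
    -- weighted integrability: `∫ (1+|x|²)^{p(θ−1−d/p)/2} |u|^p < ∞`
    (hint : (∫⁻ x, ENNReal.ofReal
        ((1 + ‖x‖ ^ 2) ^ (p * (θ - 1 - (d : ℝ) / p) / 2) * |u x| ^ p)) < ⊤) :
    u =ᵐ[volume] 0 := by
  have hup : MemLp u (ENNReal.ofReal p) volume := by
    refine ⟨hu.aestronglyMeasurable, ?_⟩
    have hp0 : 0 < p := by linarith
    rw [eLpNorm_lt_top_iff_lintegral_rpow_enorm_lt_top (by simpa using hp0) ENNReal.ofReal_ne_top,
      ENNReal.toReal_ofReal hp0.le]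
    refine lt_of_le_of_lt (lintegral_mono fun x => ?_) hint
    rw [Real.enorm_eq_ofReal_abs, ENNReal.ofReal_rpow_of_nonneg (abs_nonneg _) hp0.le]
    apply ENNReal.ofReal_le_ofReal
    refine le_mul_of_one_le_left (by positivity) ?_
    refine Real.one_le_rpow (by nlinarith [sq_nonneg ‖x‖]) ?_
    have : 0 ≤ θ - 1 - (d : ℝ) / p := by linarith
    positivity
  obtain ⟨g, b, db, hgs, hg, hb, hdbc, bnn, g0, b0, db0, bpos⟩ := profile_exists
  exact ae_zero_of_G_zero hu b (continuous_iff_continuousAt.2 fun s => (hb s).continuousAt)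
    bnn b0 bpos fun y s hs =>
      G_zero hd hp hu hharm hup g b db hgs hg hb hdbc bnn g0 b0 db0 y s hs
end

section
/- Newton potential gradient estimate, base case: let θ ∈ (1,d), p > 1. For f ∈ C₀^∞(ℝ^d) let u(x) = ∫ ∇Γ(x−y) f(y) dy where Γ is the Newtonian potential kernel. Then there is C independent of f such that ‖w^{θ−d/p−1} u‖_{L_p} + ‖w^{θ−d/p} ∇u‖_{L_p} ≤ C ‖w^{θ−d/p} f‖_{L_p}, where w(x) = (1+|x|²)^{1/2}. -/
open MeasureTheory

set_option linter.unusedSectionVars false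

namespace CZ

/-- Bellman function -/
noncomputable def BF (p q x y : ℝ) : ℝ :=
  x ^ 2 * (x ^ (p - 1) + y) ^ (2 - q) + 6 / (q * (q - 1)) * y ^ q

noncomputable def BFx (p q x y : ℝ) : ℝ :=
  2 * x * (x ^ (p - 1) + y) ^ (2 - q) +
    x ^ 2 * ((2 - q) * (x ^ (p - 1) + y) ^ (1 - q) * ((p - 1) * x ^ (p - 2)))

noncomputable def BFy (p q x y : ℝ) : ℝ :=
  x ^ 2 * ((2 - q) * (x ^ (p - 1) + y) ^ (1 - q)) + 6 / (q - 1) * y ^ (q - 1)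

/-- a one-dimensional Taylor type lower bound -/
lemma taylor_lower (f f1 f2 : ℝ → ℝ) (m : ℝ)
    (h1 : ∀ s ∈ Set.Icc (0 : ℝ) 1, HasDerivAt f (f1 s) s)
    (h2 : ∀ s ∈ Set.Icc (0 : ℝ) 1, HasDerivAt f1 (f2 s) s)
    (hn : ∀ s ∈ Set.Icc (0 : ℝ) 1, 0 ≤ f2 s)
    (hm : ∀ s ∈ Set.Icc (1 / 4 : ℝ) (1 / 2), m ≤ f2 s) :
    m / 8 ≤ f 1 - f 0 - f1 0 := by
  have mono : ∀ a b, 0 ≤ a → a < b → b ≤ 1 → f1 a ≤ f1 b := by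
    intro a b ha hab hb
    obtain ⟨c, hc, hc2⟩ := exists_hasDerivAt_eq_slope f1 f2 hab
      (fun s hs => (h2 s ⟨ha.trans hs.1, hs.2.trans hb⟩).continuousAt.continuousWithinAt)
      (fun s hs => h2 s ⟨ha.trans hs.1.le, hs.2.le.trans hb⟩)
    have := hn c ⟨ha.trans hc.1.le, hc.2.le.trans hb⟩
    rw [hc2] at this
    have h3 : 0 < b - a := by linarith
    rw [le_div_iff₀ h3] at this
    linarith
  have key : f1 (1/4) + m / 4 ≤ f1 (1/2) := by
    obtain ⟨c, hc, hc2⟩ := exists_hasDerivAt_eq_slope f1 f2 (a := 1/4) (b := 1/2) (by norm_num)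
      (fun s hs => (h2 s ⟨by linarith [hs.1], by linarith [hs.2]⟩).continuousAt.continuousWithinAt)
      (fun s hs => h2 s ⟨by linarith [hs.1], by linarith [hs.2]⟩)
    have := hm c ⟨hc.1.le, hc.2.le⟩
    rw [hc2, le_div_iff₀ (by norm_num)] at this
    linarith
  have e0 := mono 0 (1/4) le_rfl (by norm_num) (by norm_num)
  obtain ⟨c, hc, hc2⟩ := exists_hasDerivAt_eq_slope f f1 (a := 0) (b := 1/2) (by norm_num)
      (fun s hs => (h1 s ⟨by linarith [hs.1], by linarith [hs.2]⟩).continuousAt.continuousWithinAt)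
      (fun s hs => h1 s ⟨by linarith [hs.1], by linarith [hs.2]⟩)
  obtain ⟨c', hc', hc2'⟩ := exists_hasDerivAt_eq_slope f f1 (a := 1/2) (b := 1) (by norm_num)
      (fun s hs => (h1 s ⟨by linarith [hs.1], by linarith [hs.2]⟩).continuousAt.continuousWithinAt)
      (fun s hs => h1 s ⟨by linarith [hs.1], by linarith [hs.2]⟩)
  have e1 := mono 0 c le_rfl hc.1 (by linarith [hc.2])
  have e2 := mono (1/2) c' (by norm_num) hc'.1 hc'.2.le
  rw [eq_div_iff (by norm_num)] at hc2 hc2'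
  linarith

lemma BF_alg {p q k : ℝ} (hp : 2 ≤ p) (hq1 : 1 < q) (hq2 : q ≤ 2) (hk0 : 0 ≤ k) (hk1 : k ≤ 1)
    (ξ e : ℝ) : ξ ^ 2 - 5 * e ^ 2 ≤ ξ ^ 2 * (2 + 4 * (p - 2) * k - (p - 2) * k ^ 2)
        + ξ * e * ((2 - q) * (4 - 2 * k)) - (2 - q) * (q - 1) * e ^ 2
        + ξ ^ 2 * (p - 2) * (p - 2) * k := by
  have a1 : 0 ≤ ξ ^ 2 * ((p - 2) * k * (4 - k)) :=
    mul_nonneg (sq_nonneg ξ) (mul_nonneg (mul_nonneg (by linarith) hk0) (by linarith))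
  have a2 : 0 ≤ ξ ^ 2 * (p - 2) * (p - 2) * k := by
    have : 0 ≤ p - 2 := by linarith
    positivity
  have a3 : -(ξ ^ 2 + 4 * e ^ 2) ≤ ξ * e * ((2 - q) * (4 - 2 * k)) := by
    have t0 : 0 ≤ (2 - q) * (4 - 2 * k) := mul_nonneg (by linarith) (by linarith)
    have t1 : (2 - q) * (4 - 2 * k) ≤ 4 := by nlinarith
    generalize (2 - q) * (4 - 2 * k) = t at t0 t1
    have h1 : |ξ * e| * 4 ≤ ξ ^ 2 + 4 * e ^ 2 := by
      rw [abs_mul, ← sq_abs ξ, ← sq_abs e]; nlinarith [sq_nonneg (|ξ| - 2 * |e|)]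
    have h2 := neg_abs_le (ξ * e)
    have h3 := abs_nonneg (ξ * e)
    nlinarith
  have a4 : (2 - q) * (q - 1) * e ^ 2 ≤ 1 * e ^ 2 := by
    have : (2 - q) * (q - 1) ≤ 1 := by nlinarith
    gcongr
  linarith

set_option maxHeartbeats 1000000 in
lemma BF_second {p q : ℝ} (hp : 2 ≤ p) (hpq : p.HolderConjugate q) (x y ξ η s : ℝ)
    (hX : 0 < x + s * ξ) (hY : 0 < y + s * η) :
    HasDerivAt (fun s => BF p q (x + s * ξ) (y + s * η))
      (BFx p q (x + s * ξ) (y + s * η) * ξ + BFy p q (x + s * ξ) (y + s * η) * η) s ∧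
    ∃ D, HasDerivAt (fun s => BFx p q (x + s * ξ) (y + s * η) * ξ
        + BFy p q (x + s * ξ) (y + s * η) * η) D s ∧
      ((x + s * ξ) ^ (p - 1) + (y + s * η)) ^ (2 - q) * ξ ^ 2
        + (y + s * η) ^ (-(2 - q)) * η ^ 2 ≤ D := by
  have hq1 : 1 < q := hpq.symm.lt
  have hmul : (p - 1) * (q - 1) = 1 := by
    have := hpq.mul_eq_add; linarith
  have hq2 : q ≤ 2 := by nlinarith
  have dX : HasDerivAt (fun s => x + s * ξ) ξ s := by
    simpa using ((hasDerivAt_id s).mul_const ξ).const_add x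
  have dY : HasDerivAt (fun s => y + s * η) η s := by
    simpa using ((hasDerivAt_id s).mul_const η).const_add y
  set X := x + s * ξ with hXd
  set Y := y + s * η with hYd
  have hN : 0 < X ^ (p - 1) + Y := by positivity
  have dXp : HasDerivAt (fun s => (x + s * ξ) ^ (p - 1)) ((p - 1) * X ^ (p - 2) * ξ) s := by
    have := dX.rpow_const (p := p - 1) (Or.inl hX.ne')
    convert this using 1; rw [show p - 1 - 1 = p - 2 by ring]; ring
  have dXp2 : HasDerivAt (fun s => (x + s * ξ) ^ (p - 2)) ((p - 2) * X ^ (p - 3) * ξ) s := by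
    have := dX.rpow_const (p := p - 2) (Or.inl hX.ne')
    convert this using 1; rw [show p - 2 - 1 = p - 3 by ring]; ring
  have dN : HasDerivAt (fun s => (x + s * ξ) ^ (p - 1) + (y + s * η))
      ((p - 1) * X ^ (p - 2) * ξ + η) s := dXp.add dY
  have dNs : HasDerivAt (fun s => ((x + s * ξ) ^ (p - 1) + (y + s * η)) ^ (2 - q))
      ((2 - q) * (X ^ (p - 1) + Y) ^ (1 - q) * ((p - 1) * X ^ (p - 2) * ξ + η)) s := by
    have := dN.rpow_const (p := 2 - q) (Or.inl hN.ne')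
    convert this using 1; rw [show 2 - q - 1 = 1 - q by ring]; ring
  have dNs1 : HasDerivAt (fun s => ((x + s * ξ) ^ (p - 1) + (y + s * η)) ^ (1 - q))
      ((1 - q) * (X ^ (p - 1) + Y) ^ (-q) * ((p - 1) * X ^ (p - 2) * ξ + η)) s := by
    have := dN.rpow_const (p := 1 - q) (Or.inl hN.ne')
    convert this using 1; rw [show 1 - q - 1 = -q by ring]; ring
  have dYq : HasDerivAt (fun s => (y + s * η) ^ q) (q * Y ^ (q - 1) * η) s := by
    have := dY.rpow_const (p := q) (Or.inl hY.ne')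
    convert this using 1; ring
  have dYq1 : HasDerivAt (fun s => (y + s * η) ^ (q - 1)) ((q - 1) * Y ^ (-(2 - q)) * η) s := by
    have := dY.rpow_const (p := q - 1) (Or.inl hY.ne')
    convert this using 1; rw [show q - 1 - 1 = -(2 - q) by ring]; ring
  have hq0 : q ≠ 0 := by positivity
  have hq10 : q - 1 ≠ 0 := by linarith
  constructor
  · have := ((dX.pow 2).mul dNs).add (dYq.const_mul (6 / (q * (q - 1))))
    refine this.congr_deriv ?_
    simp only [BFx, BFy, Pi.pow_apply]
    rw [← hXd, ← hYd]
    have e1 : 6 / (q * (q - 1)) * (q * Y ^ (q - 1) * η) = 6 / (q - 1) * Y ^ (q - 1) * η := by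
      field_simp
    rw [e1]
    push_cast
    ring
  · refine ⟨_, (((((dX.const_mul 2).mul dNs).add
      ((dX.pow 2).mul ((dNs1.const_mul (2 - q)).mul (dXp2.const_mul (p - 1))))).mul_const ξ).add
      ((((dX.pow 2).mul (dNs1.const_mul (2 - q))).add (dYq1.const_mul (6 / (q - 1)))).mul_const η)),
      ?_⟩
    simp only [Pi.pow_apply, Pi.mul_apply]
    rw [← hXd, ← hYd]
    -- rewrite everything in terms of N
    set N := X ^ (p - 1) + Y with hNd
    have eN1 : N ^ (1 - q) = N ^ (2 - q) / N := by
      rw [show (1 - q) = (2 - q) - 1 by ring, Real.rpow_sub_one hN.ne']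
    have eN2 : N ^ (-q) = N ^ (2 - q) / N / N := by
      rw [show (-q) = (2 - q) - 1 - 1 by ring, Real.rpow_sub_one hN.ne', Real.rpow_sub_one hN.ne']
    have eX2 : X ^ (p - 2) = X ^ (p - 1) / X := by
      rw [show (p - 2) = (p - 1) - 1 by ring, Real.rpow_sub_one hX.ne']
    have eX3 : X ^ (p - 3) = X ^ (p - 1) / X / X := by
      rw [show (p - 3) = (p - 1) - 1 - 1 by ring, Real.rpow_sub_one hX.ne',
        Real.rpow_sub_one hX.ne']
    have hYN : Y ≤ N := by
      have : 0 < X ^ (p - 1) := by positivity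
      linarith
    have hXN : X ≤ N ^ (q - 1) := by
      have h1 : X ^ (p - 1) ≤ N := by linarith
      have h2 := Real.rpow_le_rpow (by positivity) h1 (by linarith : 0 ≤ q - 1)
      rwa [← Real.rpow_mul hX.le, hmul, Real.rpow_one] at h2
    have hbad : N ^ (2 - q) * (X / N) ^ 2 ≤ Y ^ (-(2 - q)) := by
      have h1 : (X / N) ^ 2 ≤ (N ^ (q - 1) / N) ^ 2 := by gcongr
      have h2 : N ^ (2 - q) * (N ^ (q - 1) / N) ^ 2 = N ^ (-(2 - q)) := by
        rw [← Real.rpow_sub_one hN.ne', ← Real.rpow_natCast, ← Real.rpow_mul hN.le,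
          ← Real.rpow_add hN]
        congr 1; push_cast; ring
      have h3 : N ^ (-(2 - q)) ≤ Y ^ (-(2 - q)) :=
        Real.rpow_le_rpow_of_nonpos hY hYN (by linarith)
      calc _ ≤ N ^ (2 - q) * (N ^ (q - 1) / N) ^ 2 := by gcongr
        _ ≤ _ := by rw [h2]; exact h3
    have hNs : 0 < N ^ (2 - q) := by positivity
    set M := N ^ (2 - q) with hM
    set W := Y ^ (-(2 - q)) with hW
    set V := X ^ (p - 1) with hV
    have hVpos : 0 < V := by positivity
    set k := V / N with hk
    have hk0 : 0 ≤ k := by positivity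
    have hk1 : k ≤ 1 := by rw [hk, div_le_one hN]; linarith
    set e := X * η / N with he
    have hbe : M * e ^ 2 ≤ W * η ^ 2 := by
      have : M * e ^ 2 = (M * (X / N) ^ 2) * η ^ 2 := by rw [he]; ring
      rw [this]; gcongr
    have main := BF_alg hp hq1 hq2 hk0 hk1 ξ e
    have main2 := mul_le_mul_of_nonneg_left main hNs.le
    have e1 : 6 / (q - 1) * ((q - 1) * W * η) * η = 6 * W * η ^ 2 := by
      field_simp
    rw [eN1, eN2, eX2, eX3]
    have hXne := hX.ne'
    have hNne := hN.ne'
    have hqe : q = 1 + 1 / (p - 1) := by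
      have : p - 1 ≠ 0 := by intro h; rw [h] at hmul; norm_num at hmul
      field_simp; linarith
    have big : ∀ LHS : ℝ, LHS = M * (ξ ^ 2 * (2 + 4 * (p - 2) * k - (p - 2) * k ^ 2)
        + ξ * e * ((2 - q) * (4 - 2 * k)) - (2 - q) * (q - 1) * e ^ 2
        + ξ ^ 2 * (p - 2) * (p - 2) * k) + 6 / (q - 1) * ((q - 1) * W * η) * η →
        M * ξ ^ 2 + W * η ^ 2 ≤ LHS := by
      intro LHS h
      rw [h, e1]
      linarith
    apply big
    rw [hk, he]
    have hp10 : p - 1 ≠ 0 := by intro h; rw [h] at hmul; norm_num at hmul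
    have hqe' : 2 - q = (p - 2) / (p - 1) := by rw [hqe]; field_simp; ring
    have hqe1 : 1 - q = - (1 / (p - 1)) := by rw [hqe]; ring
    have hqe2 : q - 1 = (1 / (p - 1)) := by rw [hqe]; ring
    rw [hqe', hqe1, hqe2]
    clear_value M W V N
    simp only [Nat.cast_ofNat, Nat.add_one_sub_one, pow_one]
    field_simp
    ring

end CZ

namespace CZ

lemma BF_D {p q : ℝ} (hp : 2 ≤ p) (hpq : p.HolderConjugate q) (x y ξ η : ℝ)
    (hx : 0 < x) (hy : 0 < y) (hx' : 0 < x + ξ) (hy' : 0 < y + η) :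
    (((|ξ| / 4) ^ (p - 1) + y / 2) ^ (2 - q) * ξ ^ 2
      + (y + |η|) ^ (-(2 - q)) * η ^ 2) / 8 ≤
    BF p q (x + ξ) (y + η) - BF p q x y - (BFx p q x y * ξ + BFy p q x y * η) := by
  have hq1 : 1 < q := hpq.symm.lt
  have hmul : (p - 1) * (q - 1) = 1 := by
    have := hpq.mul_eq_add; linarith
  have hq2 : q ≤ 2 := by nlinarith
  have hX : ∀ s ∈ Set.Icc (0 : ℝ) 1, 0 < x + s * ξ := by
    rintro s ⟨h0, h1⟩
    rcases eq_or_lt_of_le h0 with h | h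
    · simpa [← h] using hx
    · nlinarith [mul_nonneg (sub_nonneg.2 h1) hx.le]
  have hY : ∀ s ∈ Set.Icc (0 : ℝ) 1, 0 < y + s * η := by
    rintro s ⟨h0, h1⟩
    rcases eq_or_lt_of_le h0 with h | h
    · simpa [← h] using hy
    · nlinarith [mul_nonneg (sub_nonneg.2 h1) hy.le]
  classical
  have ex : ∀ s, ∃ D, s ∈ Set.Icc (0 : ℝ) 1 →
      (HasDerivAt (fun s => BFx p q (x + s * ξ) (y + s * η) * ξ
        + BFy p q (x + s * ξ) (y + s * η) * η) D s ∧
      ((x + s * ξ) ^ (p - 1) + (y + s * η)) ^ (2 - q) * ξ ^ 2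
        + (y + s * η) ^ (-(2 - q)) * η ^ 2 ≤ D) := by
    intro s
    by_cases hs : s ∈ Set.Icc (0 : ℝ) 1
    · obtain ⟨D, hD⟩ := (BF_second hp hpq x y ξ η s (hX s hs) (hY s hs)).2
      exact ⟨D, fun _ => hD⟩
    · exact ⟨0, fun h => absurd h hs⟩
  choose f2 hf2 using ex
  have := taylor_lower (fun s => BF p q (x + s * ξ) (y + s * η))
    (fun s => BFx p q (x + s * ξ) (y + s * η) * ξ + BFy p q (x + s * ξ) (y + s * η) * η) f2
    (((|ξ| / 4) ^ (p - 1) + y / 2) ^ (2 - q) * ξ ^ 2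
      + (y + |η|) ^ (-(2 - q)) * η ^ 2)
    (fun s hs => (BF_second hp hpq x y ξ η s (hX s hs) (hY s hs)).1)
    (fun s hs => (hf2 s hs).1) ?_ ?_
  · simpa using this
  · intro s hs
    refine le_trans ?_ (hf2 s hs).2
    have h1 := hX s hs
    have h2 := hY s hs
    positivity
  · intro s hs
    have hs' : s ∈ Set.Icc (0 : ℝ) 1 := ⟨by linarith [hs.1], by linarith [hs.2]⟩
    refine le_trans ?_ (hf2 s hs').2
    have h1 := hX s hs'
    have h2 := hY s hs'
    have a1 : |ξ| / 4 ≤ x + s * ξ := by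
      rcases le_total 0 ξ with h | h
      · rw [abs_of_nonneg h]; nlinarith [hs.1]
      · rw [abs_of_nonpos h]; nlinarith [hs.2]
    have a2 : y / 2 ≤ y + s * η := by
      rcases le_total 0 η with h | h
      · nlinarith [hs.1]
      · nlinarith [hs.2]
    have a3 : y + s * η ≤ y + |η| := by
      have := le_abs_self η
      have := abs_nonneg η
      nlinarith [hs.1, hs.2]
    have a4 : (y + |η|) ^ (-(2 - q)) ≤ (y + s * η) ^ (-(2 - q)) :=
      Real.rpow_le_rpow_of_nonpos h2 a3 (by linarith)
    have b1 : 0 ≤ 2 - q := by linarith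
    have b2 : 0 ≤ p - 1 := by linarith
    gcongr

lemma pair_lower {p q : ℝ} (hp : 2 ≤ p) (hpq : p.HolderConjugate q) (y ξ η : ℝ) (hy : 0 < y) :
    (4 : ℝ) ^ (2 - p) / 2 * (|ξ| * |η|) ≤
      ((|ξ| / 4) ^ (p - 1) + y / 2) ^ (2 - q) * ξ ^ 2 + (y + |η|) ^ (-(2 - q)) * η ^ 2 := by
  have hq1 : 1 < q := hpq.symm.lt
  have hmul : (p - 1) * (q - 1) = 1 := by
    have := hpq.mul_eq_add; linarith
  have hq2 : q ≤ 2 := by nlinarith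
  have hsp : (p - 1) * (2 - q) = p - 2 := by linear_combination -hmul
  have c1 : (4 : ℝ) ^ (2 - p) ≤ 1 := Real.rpow_le_one_of_one_le_of_nonpos (by norm_num) (by linarith)
  have c0 : 0 < (4 : ℝ) ^ (2 - p) := by positivity
  rw [← sq_abs ξ, ← sq_abs η]
  generalize ha : |ξ| = a
  generalize hb : |η| = b
  have a0 : 0 ≤ a := ha ▸ abs_nonneg ξ
  have b0 : 0 ≤ b := hb ▸ abs_nonneg η
  have hb1 : 0 ≤ 2 - q := by linarith
  have hb2 : 0 ≤ p - 1 := by linarith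
  rcases le_or_gt b y with h | h
  · set Z := y + b with hZ
    have hZ0 : 0 < Z := by positivity
    have h1 : Z ^ (2 - q) / 4 ≤ ((a / 4) ^ (p - 1) + y / 2) ^ (2 - q) := by
      have h2 : Z / 4 ≤ (a / 4) ^ (p - 1) + y / 2 := by
        have : 0 ≤ (a / 4) ^ (p - 1) := by positivity
        linarith
      refine le_trans ?_ (Real.rpow_le_rpow (by positivity) h2 (by linarith))
      rw [Real.div_rpow hZ0.le (by norm_num)]
      gcongr
      calc (4 : ℝ) ^ (2 - q) ≤ 4 ^ (1 : ℝ) :=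
            Real.rpow_le_rpow_of_exponent_le (by norm_num) (by linarith)
        _ = 4 := by simp
    rw [Real.rpow_neg hZ0.le]
    set T := Z ^ (2 - q) with hT
    have hT0 : 0 < T := by positivity
    have h3 : a * b ≤ T / 4 * a ^ 2 + T⁻¹ * b ^ 2 := by
      have : T / 4 * a ^ 2 + T⁻¹ * b ^ 2 - a * b = (T * a / 2 - b) ^ 2 / T := by
        field_simp; ring
      have h4 : 0 ≤ (T * a / 2 - b) ^ 2 / T := by positivity
      linarith
    have h5 : T / 4 * a ^ 2 ≤ ((a / 4) ^ (p - 1) + y / 2) ^ (2 - q) * a ^ 2 := by gcongr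
    have h6 : (4 : ℝ) ^ (2 - p) / 2 * (a * b) ≤ 1 * (a * b) := by
      gcongr; linarith
    linarith
  · have hbp : 0 < b := hy.trans h
    have h1 : (4 : ℝ) ^ (2 - p) * a ^ p ≤ ((a / 4) ^ (p - 1) + y / 2) ^ (2 - q) * a ^ 2 := by
      rcases eq_or_lt_of_le a0 with h0 | h0
      · rw [← h0, Real.zero_rpow (by linarith)]; simp
      · have : ((a / 4) ^ (p - 1)) ^ (2 - q) = 4 ^ (2 - p) * a ^ (p - 2) := by
          rw [← Real.rpow_mul (by positivity), hsp, Real.div_rpow h0.le (by norm_num),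
            show 2 - p = -(p - 2) by ring, Real.rpow_neg (by norm_num : (0 : ℝ) ≤ 4)]
          ring
        have h2 : a ^ p = a ^ (p - 2) * a ^ 2 := by
          rw [← Real.rpow_natCast, ← Real.rpow_add h0]; congr 1; push_cast; ring
        rw [h2, ← mul_assoc, ← this]
        gcongr
        linarith
    have h2 : b ^ q / 2 ≤ (y + b) ^ (-(2 - q)) * b ^ 2 := by
      have h3 : (2 * b) ^ (-(2 - q)) ≤ (y + b) ^ (-(2 - q)) :=
        Real.rpow_le_rpow_of_nonpos (by positivity) (by linarith) (by linarith)
      have h4 : b ^ q = b ^ (-(2 - q)) * b ^ 2 := by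
          rw [← Real.rpow_natCast, ← Real.rpow_add hbp]; congr 1; push_cast; ring
      have h5 : (1 / 2 : ℝ) ≤ 2 ^ (-(2 - q)) := by
        calc (1 / 2 : ℝ) = 2 ^ (-1 : ℝ) := by rw [Real.rpow_neg_one]; norm_num
          _ ≤ _ := Real.rpow_le_rpow_of_exponent_le (by norm_num) (by linarith)
      calc b ^ q / 2 = (1 / 2) * b ^ (-(2 - q)) * b ^ 2 := by rw [h4]; ring
        _ ≤ 2 ^ (-(2 - q)) * b ^ (-(2 - q)) * b ^ 2 := by gcongr
        _ = (2 * b) ^ (-(2 - q)) * b ^ 2 := by rw [Real.mul_rpow (by norm_num) hbp.le]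
        _ ≤ _ := by gcongr
    have h3 := Real.young_inequality_of_nonneg a0 b0 hpq
    have h4 : a ^ p / p ≤ a ^ p := div_le_self (by positivity) (by linarith)
    have h5 : b ^ q / q ≤ b ^ q := div_le_self (by positivity) (by linarith)
    have h6 : 0 ≤ a ^ p := by positivity
    have h7 : 0 ≤ b ^ q := by positivity
    calc (4 : ℝ) ^ (2 - p) / 2 * (a * b) ≤ (4 : ℝ) ^ (2 - p) / 2 * (a ^ p + b ^ q) := by
          gcongr; linarith
      _ ≤ (4 : ℝ) ^ (2 - p) * a ^ p + b ^ q / 2 := by nlinarith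
      _ ≤ _ := by linarith

/-- the Bellman constant -/
noncomputable def cB (p : ℝ) : ℝ := (4 : ℝ) ^ (2 - p) / 32

lemma cB_pos (p : ℝ) : 0 < cB p := by unfold cB; positivity

lemma BF_jensen_pos {p q : ℝ} (hp : 2 ≤ p) (hpq : p.HolderConjugate q) {ι : Type*} [Fintype ι]
    (l x y : ι → ℝ) (hl : ∀ i, 0 ≤ l i) (hl1 : ∑ i, l i = 1)
    (hx : ∀ i, 0 < x i) (hy : ∀ i, 0 < y i) (r : ℝ) (hr : 0 ≤ r) (a b : ι)
    (ha : r ≤ l a) (hb : r ≤ l b) :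
    cB p * (r * (|x a - ∑ i, l i * x i| * |y b - ∑ i, l i * y i|)) ≤
      ∑ i, l i * BF p q (x i) (y i) - BF p q (∑ i, l i * x i) (∑ i, l i * y i) := by
  set X := ∑ i, l i * x i with hX
  set Y := ∑ i, l i * y i with hY
  have hXY : ∀ z : ι → ℝ, (∀ i, 0 < z i) → 0 < ∑ i, l i * z i := by
    intro z hz
    have : ∃ i, 0 < l i := by
      by_contra! h
      have : ∑ i, l i ≤ 0 := Finset.sum_nonpos fun i _ => h i
      linarith
    obtain ⟨i, hi⟩ := this
    exact Finset.sum_pos' (fun i _ => mul_nonneg (hl i) (hz i).le)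
      ⟨i, Finset.mem_univ _, mul_pos hi (hz i)⟩
  have hX0 : 0 < X := hXY x hx
  have hY0 : 0 < Y := hXY y hy
  set D : ι → ℝ := fun i => BF p q (x i) (y i) - BF p q X Y
    - (BFx p q X Y * (x i - X) + BFy p q X Y * (y i - Y)) with hD
  have hDi : ∀ i, (((|x i - X| / 4) ^ (p - 1) + Y / 2) ^ (2 - q) * (x i - X) ^ 2
      + (Y + |y i - Y|) ^ (-(2 - q)) * (y i - Y) ^ 2) / 8 ≤ D i := by
    intro i
    have := BF_D hp hpq X Y (x i - X) (y i - Y) hX0 hY0 (by simpa using hx i) (by simpa using hy i)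
    simpa [hD] using this
  have hP : ∀ i, 0 ≤ ((|x i - X| / 4) ^ (p - 1) + Y / 2) ^ (2 - q) * (x i - X) ^ 2 := by
    intro i; positivity
  have hQ : ∀ i, 0 ≤ (Y + |y i - Y|) ^ (-(2 - q)) * (y i - Y) ^ 2 := by
    intro i; positivity
  have hD0 : ∀ i, 0 ≤ D i := fun i => le_trans (by linarith [hP i, hQ i]) (hDi i)
  have hsum : ∑ i, l i * BF p q (x i) (y i) - BF p q X Y = ∑ i, l i * D i := by
    have e1 : ∑ i, l i * D i = ∑ i, l i * BF p q (x i) (y i) - (∑ i, l i) * BF p q X Y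
        - (BFx p q X Y * (∑ i, l i * x i - (∑ i, l i) * X)
          + BFy p q X Y * (∑ i, l i * y i - (∑ i, l i) * Y)) := by
      simp only [hD, Finset.mul_sum, Finset.sum_mul, ← Finset.sum_sub_distrib,
        ← Finset.sum_add_distrib]
      refine Finset.sum_congr rfl fun i _ => by ring
    rw [e1, hl1, ← hX, ← hY]; ring
  rw [hsum]
  have s1 : ∀ i, r ≤ l i → r * D i ≤ ∑ i, l i * D i := by
    intro i hi
    refine le_trans (mul_le_mul_of_nonneg_right hi (hD0 i)) ?_
    exact Finset.single_le_sum (f := fun i => l i * D i)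
      (fun j _ => mul_nonneg (hl j) (hD0 j)) (Finset.mem_univ i)
  have k1 := s1 a ha
  have k2 := s1 b hb
  have k3 := pair_lower hp hpq Y (x a - X) (y b - Y) hY0
  have k4 := hDi a
  have k5 := hDi b
  have k6 : 2 * (cB p * (|x a - X| * |y b - Y|)) ≤ D a + D b := by
    unfold cB
    linarith [hP b, hQ a]
  have k7 := mul_le_mul_of_nonneg_left k6 hr
  linarith

lemma BF_cont {p q : ℝ} (hp : 2 ≤ p) (hpq : p.HolderConjugate q) :
    Continuous fun z : ℝ × ℝ => BF p q z.1 z.2 := by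
  have hq1 : 1 < q := hpq.symm.lt
  have hmul : (p - 1) * (q - 1) = 1 := by
    have := hpq.mul_eq_add; linarith
  have hq2 : q ≤ 2 := by nlinarith
  unfold BF
  have h1 : Continuous fun z : ℝ × ℝ => z.1 ^ (p - 1) :=
    continuous_fst.rpow_const fun z => Or.inr (by linarith)
  have h2 : Continuous fun z : ℝ × ℝ => z.2 ^ q :=
    continuous_snd.rpow_const fun z => Or.inr (by linarith)
  have h3 : Continuous fun z : ℝ × ℝ => (z.1 ^ (p - 1) + z.2) ^ (2 - q) :=
    (h1.add continuous_snd).rpow_const fun z => Or.inr (by linarith)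
  fun_prop

lemma BF_jensen {p q : ℝ} (hp : 2 ≤ p) (hpq : p.HolderConjugate q) {ι : Type*} [Fintype ι]
    (l x y : ι → ℝ) (hl : ∀ i, 0 ≤ l i) (hl1 : ∑ i, l i = 1)
    (hx : ∀ i, 0 ≤ x i) (hy : ∀ i, 0 ≤ y i) (r : ℝ) (hr : 0 ≤ r) (a b : ι)
    (ha : r ≤ l a) (hb : r ≤ l b) :
    cB p * (r * (|x a - ∑ i, l i * x i| * |y b - ∑ i, l i * y i|)) ≤
      ∑ i, l i * BF p q (x i) (y i) - BF p q (∑ i, l i * x i) (∑ i, l i * y i) := by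
  have hs : ∀ (z : ι → ℝ) (ε : ℝ), ∑ i, l i * (z i + ε) = ∑ i, l i * z i + ε := by
    intro z ε
    simp only [mul_add, Finset.sum_add_distrib, ← Finset.sum_mul, hl1, one_mul]
  have key : ∀ ε > 0, cB p * (r * (|x a - ∑ i, l i * x i| * |y b - ∑ i, l i * y i|)) ≤
      ∑ i, l i * BF p q (x i + ε) (y i + ε)
        - BF p q (∑ i, l i * x i + ε) (∑ i, l i * y i + ε) := by
    intro ε hε
    have := BF_jensen_pos hp hpq l (fun i => x i + ε) (fun i => y i + ε) hl hl1
      (fun i => by linarith [hx i]) (fun i => by linarith [hy i]) r hr a b ha hb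
    rw [hs, hs] at this
    simpa using this
  have hc := BF_cont hp hpq
  have hcont : Continuous fun ε : ℝ => ∑ i, l i * BF p q (x i + ε) (y i + ε)
        - BF p q (∑ i, l i * x i + ε) (∑ i, l i * y i + ε) := by
    have hh : ∀ u v : ℝ, Continuous fun ε : ℝ => BF p q (u + ε) (v + ε) := fun u v =>
      hc.comp (by fun_prop : Continuous fun ε : ℝ => (u + ε, v + ε))
    exact (continuous_finsetSum _ fun i _ => (hh _ _).const_mul _).sub (hh _ _)
  have lim := (hcont.tendsto 0).mono_left (nhdsWithin_le_nhds (s := Set.Ioi 0))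
  simp only [add_zero] at lim
  exact ge_of_tendsto lim (Filter.eventually_of_mem self_mem_nhdsWithin key)

lemma BF_upper {p q : ℝ} (hp : 2 ≤ p) (hpq : p.HolderConjugate q) (x y : ℝ)
    (hx : 0 ≤ x) (hy : 0 ≤ y) :
    BF p q x y ≤ (4 + 6 / (q * (q - 1))) * (x ^ p + y ^ q) := by
  have hq1 : 1 < q := hpq.symm.lt
  have hmul : (p - 1) * (q - 1) = 1 := by
    have := hpq.mul_eq_add; linarith
  have hq2 : q ≤ 2 := by nlinarith
  have hq10 : 0 < q - 1 := by linarith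
  have hx1 : 0 ≤ x ^ (p - 1) := by positivity
  set N := x ^ (p - 1) + y with hN
  have hN0 : 0 ≤ N := by positivity
  have hXN : x ≤ N ^ (q - 1) := by
    have h1 : x ^ (p - 1) ≤ N := by linarith
    have h2 := Real.rpow_le_rpow (by positivity) h1 (by linarith : 0 ≤ q - 1)
    rwa [← Real.rpow_mul hx, hmul, Real.rpow_one] at h2
  have h1 : x ^ 2 * N ^ (2 - q) ≤ N ^ q := by
    rcases eq_or_lt_of_le hN0 with h0 | h0
    · have hx0 : x = 0 := by
        rw [← h0, Real.zero_rpow hq10.ne'] at hXN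
        linarith
      rw [hx0]; simp; positivity
    · calc x ^ 2 * N ^ (2 - q) ≤ (N ^ (q - 1)) ^ 2 * N ^ (2 - q) := by gcongr
        _ = N ^ q := by
          rw [← Real.rpow_natCast, ← Real.rpow_mul hN0, ← Real.rpow_add h0]
          congr 1; push_cast; ring
  have h2 : N ^ q ≤ 4 * (x ^ p + y ^ q) := by
    have e1 : (x ^ (p - 1)) ^ q = x ^ p := by
      rw [← Real.rpow_mul hx]; congr 1; have := hpq.mul_eq_add; linarith
    have e3 : N ≤ 2 * max (x ^ (p - 1)) y := by
      have := le_max_left (x ^ (p - 1)) y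
      have := le_max_right (x ^ (p - 1)) y
      linarith
    have m0 : 0 ≤ max (x ^ (p - 1)) y := le_max_of_le_right hy
    calc N ^ q ≤ (2 * max (x ^ (p - 1)) y) ^ q := by gcongr
      _ = 2 ^ q * (max (x ^ (p - 1)) y) ^ q := Real.mul_rpow (by norm_num) m0
      _ ≤ 4 * (x ^ p + y ^ q) := by
        have f1 : (2 : ℝ) ^ q ≤ 4 := by
          calc (2 : ℝ) ^ q ≤ 2 ^ (2 : ℝ) :=
              Real.rpow_le_rpow_of_exponent_le (by norm_num) hq2
            _ = 4 := by norm_num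
        have f2 : (max (x ^ (p - 1)) y) ^ q ≤ x ^ p + y ^ q := by
          have : 0 ≤ x ^ p := by positivity
          have : 0 ≤ y ^ q := by positivity
          rcases le_total (x ^ (p - 1)) y with h | h
          · rw [max_eq_right h]; linarith
          · rw [max_eq_left h, e1]; linarith
        gcongr
  have h3 : 6 / (q * (q - 1)) * y ^ q ≤ 6 / (q * (q - 1)) * (x ^ p + y ^ q) := by
    have : 0 ≤ x ^ p := by positivity
    gcongr; linarith
  unfold BF
  linarith

lemma BF_nonneg {p q : ℝ} (hpq : p.HolderConjugate q) (x y : ℝ)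
    (hx : 0 ≤ x) (hy : 0 ≤ y) : 0 ≤ BF p q x y := by
  have hq1 : 1 < q := hpq.symm.lt
  have hq10 : 0 < q - 1 := by linarith
  unfold BF
  positivity

lemma BF_zero {p q : ℝ} (hpq : p.HolderConjugate q) : BF p q 0 0 = 0 := by
  have hq1 : 1 < q := hpq.symm.lt
  unfold BF
  rw [Real.zero_rpow (by linarith : q ≠ 0)]
  simp

end CZ

namespace CZ

section flow

variable {E : Type} [NormedAddCommGroup E] [NormedSpace ℝ E] [FiniteDimensional ℝ E]
  [MeasureSpace E] [BorelSpace E] [(volume : Measure E).IsAddHaarMeasure]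

/-- continuous with compact support -/
def Cc (f : E → ℝ) : Prop := Continuous f ∧ HasCompactSupport f

lemma Cc.shift {f : E → ℝ} (hf : Cc f) (c : E) : Cc (fun x => f (x + c)) :=
  ⟨hf.1.comp (by fun_prop), hf.2.comp_homeomorph (Homeomorph.addRight c)⟩

lemma Cc.add {f g : E → ℝ} (hf : Cc f) (hg : Cc g) : Cc (fun x => f x + g x) :=
  ⟨hf.1.add hg.1, hf.2.add hg.2⟩

lemma Cc.comp2 {f g : E → ℝ} (hf : Cc f) (hg : Cc g) (B : ℝ → ℝ → ℝ)
    (hB : Continuous fun z : ℝ × ℝ => B z.1 z.2) (h0 : B 0 0 = 0) :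
    Cc (fun x => B (f x) (g x)) := by
  refine ⟨hB.comp (hf.1.prodMk hg.1), ?_⟩
  exact HasCompactSupport.comp₂_left hf.2 hg.2 h0

lemma Cc.comp1 {f : E → ℝ} (hf : Cc f) (B : ℝ → ℝ)
    (hB : Continuous B) (h0 : B 0 = 0) :
    Cc (fun x => B (f x)) := ⟨hB.comp hf.1, hf.2.comp_left h0⟩

lemma Cc.sub {f g : E → ℝ} (hf : Cc f) (hg : Cc g) : Cc (fun x => f x - g x) :=
  hf.comp2 hg (fun a b => a - b) (by fun_prop) (by simp)

lemma Cc.mul {f g : E → ℝ} (hf : Cc f) (hg : Cc g) : Cc (fun x => f x * g x) :=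
  hf.comp2 hg (fun a b => a * b) (by fun_prop) (by simp)

lemma Cc.const_mul {f : E → ℝ} (hf : Cc f) (c : ℝ) : Cc (fun x => c * f x) :=
  hf.comp1 (fun a => c * a) (by fun_prop) (by simp)

lemma Cc.abs {f : E → ℝ} (hf : Cc f) : Cc (fun x => |f x|) :=
  hf.comp1 (fun a => |a|) (by fun_prop) (by simp)

lemma Cc.zero : Cc (fun _ : E => (0 : ℝ)) :=
  ⟨continuous_const, HasCompactSupport.zero⟩

lemma Cc.abs_rpow {f : E → ℝ} (hf : Cc f) {p : ℝ} (hp : 0 < p) : Cc (fun x => |f x| ^ p) :=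
  hf.comp1 (fun a => |a| ^ p) ((continuous_abs).rpow_const fun _ => Or.inr hp.le)
    (by simp [Real.zero_rpow hp.ne'])

lemma Cc.sum {ι : Type} (s : Finset ι) {f : ι → E → ℝ} (hf : ∀ i, Cc (f i)) :
    Cc (fun x => ∑ i ∈ s, f i x) := by
  classical
  induction s using Finset.induction_on with
  | empty => simpa using Cc.zero
  | insert a s ha ih => simpa [Finset.sum_insert ha] using (hf a).add ih

lemma Cc.integrable {f : E → ℝ} (hf : Cc f) : Integrable f := hf.1.integrable_of_hasCompactSupport hf.2

variable {ι : Type} [Fintype ι]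

/-- averaging operator -/
noncomputable def Sop (l : ι → ℝ) (sh : ι → E) (f : E → ℝ) : E → ℝ :=
  fun x => ∑ i, l i * f (x + sh i)

lemma Cc.sop {f : E → ℝ} (hf : Cc f) (l : ι → ℝ) (sh : ι → E) : Cc (Sop l sh f) :=
  Cc.sum _ fun i => (hf.shift (sh i)).const_mul (l i)

lemma Cc.sopm {f : E → ℝ} (hf : Cc f) (l : ι → ℝ) (sh : ι → E) (m : ℕ) :
    Cc ((Sop l sh)^[m] f) := by
  induction m with
  | zero => simpa using hf
  | succ m ih => rw [Function.iterate_succ_apply']; exact ih.sop l sh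

lemma int_sop {f : E → ℝ} (hf : Cc f) (l : ι → ℝ) (sh : ι → E) (hl1 : ∑ i, l i = 1) :
    ∫ x, Sop l sh f x = ∫ x, f x := by
  unfold Sop
  rw [integral_finsetSum _ fun i _ => ((hf.shift (sh i)).const_mul (l i)).integrable]
  simp only [integral_const_mul, integral_add_right_eq_self (μ := (volume : Measure E)) f]
  rw [← Finset.sum_mul, hl1, one_mul]

lemma sop_nonneg {f : E → ℝ} (hf : ∀ x, 0 ≤ f x) (l : ι → ℝ) (sh : ι → E) (hl : ∀ i, 0 ≤ l i)
    (m : ℕ) : ∀ x, 0 ≤ (Sop l sh)^[m] f x := by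
  induction m with
  | zero => simpa using hf
  | succ m ih =>
    intro x
    rw [Function.iterate_succ_apply']
    exact Finset.sum_nonneg fun i _ => mul_nonneg (hl i) (ih _)

lemma sop_lin (l : ι → ℝ) (sh : ι → E) (c e : ℝ) (f g : E → ℝ) (m : ℕ) :
    (Sop l sh)^[m] (fun x => c * f x + e * g x)
     = fun x => c * (Sop l sh)^[m] f x + e * (Sop l sh)^[m] g x := by
  induction m with
  | zero => rfl
  | succ m ih =>
    simp only [Function.iterate_succ_apply', ih]
    funext x
    simp only [Sop, Finset.mul_sum, ← Finset.sum_add_distrib]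
    exact Finset.sum_congr rfl fun i _ => by ring

lemma sop_shift (l : ι → ℝ) (sh : ι → E) (f : E → ℝ) (c : E) (m : ℕ) :
    (Sop l sh)^[m] (fun x => f (x + c)) = fun x => (Sop l sh)^[m] f (x + c) := by
  induction m with
  | zero => rfl
  | succ m ih =>
    simp only [Function.iterate_succ_apply', ih]
    funext x
    simp only [Sop]
    exact Finset.sum_congr rfl fun i _ => by rw [add_right_comm]

/-- contraction -/
lemma sop_contr {f : E → ℝ} (hf : Cc f) (l : ι → ℝ) (sh : ι → E) (hl : ∀ i, 0 ≤ l i)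
    (hl1 : ∑ i, l i = 1) {q : ℝ} (hq : 1 ≤ q) (m : ℕ) :
    ∫ x, |(Sop l sh)^[m] f x| ^ q ≤ ∫ x, |f x| ^ q := by
  have hq0 : 0 < q := by linarith
  induction m with
  | zero => simp
  | succ m ih =>
    refine le_trans ?_ ih
    rw [Function.iterate_succ_apply']
    have hF := hf.sopm l sh m
    set F := (Sop l sh)^[m] f
    rw [← int_sop (hF.abs_rpow hq0) l sh hl1]
    refine integral_mono ((hF.sop l sh).abs_rpow hq0).integrable
      ((hF.abs_rpow hq0).sop l sh).integrable fun x => ?_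
    have h1 : |Sop l sh F x| ≤ ∑ i, l i * |F (x + sh i)| := by
      refine (Finset.abs_sum_le_sum_abs _ _).trans_eq ?_
      exact Finset.sum_congr rfl fun i _ => by rw [abs_mul, abs_of_nonneg (hl i)]
    have h2 := (convexOn_rpow hq).map_sum_le (t := Finset.univ) (w := l)
      (p := fun i => |F (x + sh i)|) (fun i _ => hl i) hl1 (fun i _ => Set.mem_Ici.2 (abs_nonneg _))
    simp only [smul_eq_mul] at h2
    exact (Real.rpow_le_rpow (abs_nonneg _) h1 hq0.le).trans h2

lemma K1 {p q : ℝ} (hp : 2 ≤ p) (hpq : p.HolderConjugate q)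
    (l : ι → ℝ) (sh : ι → E) (hl : ∀ i, 0 ≤ l i) (hl1 : ∑ i, l i = 1)
    {f g : E → ℝ} (hf : Cc f) (hg : Cc g) (hf0 : ∀ x, 0 ≤ f x) (hg0 : ∀ x, 0 ≤ g x)
    (r : ℝ) (hr : 0 ≤ r) (a b : ι) (ha : r ≤ l a) (hb : r ≤ l b) (M : ℕ) :
    ∑ m ∈ Finset.range M, r * ∫ x, |(Sop l sh)^[m] f (x + sh a) - (Sop l sh)^[m+1] f x| *
      |(Sop l sh)^[m] g (x + sh b) - (Sop l sh)^[m+1] g x|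
      ≤ (cB p)⁻¹ * ((4 + 6 / (q * (q - 1))) * ((∫ x, |f x| ^ p) + ∫ x, |g x| ^ q)) := by
  have hc := BF_cont hp hpq
  have h0 := BF_zero hpq
  have hcB := cB_pos p
  have hp0 : 0 < p := by linarith
  have hq0 : 0 < q := hpq.symm.pos
  have step : ∀ m, cB p * (r * ∫ x, |(Sop l sh)^[m] f (x + sh a) - (Sop l sh)^[m+1] f x| *
      |(Sop l sh)^[m] g (x + sh b) - (Sop l sh)^[m+1] g x|) ≤
      (∫ x, BF p q ((Sop l sh)^[m] f x) ((Sop l sh)^[m] g x)) -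
      ∫ x, BF p q ((Sop l sh)^[m+1] f x) ((Sop l sh)^[m+1] g x) := by
    intro m
    have hF := hf.sopm l sh m
    have hG := hg.sopm l sh m
    have hF0 := sop_nonneg hf0 l sh hl m
    have hG0 := sop_nonneg hg0 l sh hl m
    simp only [Function.iterate_succ_apply']
    set F := (Sop l sh)^[m] f
    set G := (Sop l sh)^[m] g
    have hB := hF.comp2 hG _ hc h0
    have hB' := (hF.sop l sh).comp2 (hG.sop l sh) _ hc h0
    rw [← int_sop hB l sh hl1, ← integral_sub (hB.sop l sh).integrable hB'.integrable,
      ← integral_const_mul, ← integral_const_mul]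
    refine integral_mono (((((hF.shift (sh a)).sub (hF.sop l sh)).abs.mul
      ((hG.shift (sh b)).sub (hG.sop l sh)).abs).const_mul r).const_mul _).integrable
      ((hB.sop l sh).sub hB').integrable fun x => ?_
    exact BF_jensen hp hpq l (fun i => F (x + sh i)) (fun i => G (x + sh i)) hl hl1
      (fun i => hF0 _) (fun i => hG0 _) r hr a b ha hb
  have tel := Finset.sum_le_sum (s := Finset.range M) fun m _ => step m
  rw [Finset.sum_range_sub', ← Finset.mul_sum] at tel
  have hend : 0 ≤ ∫ x, BF p q ((Sop l sh)^[M] f x) ((Sop l sh)^[M] g x) :=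
    integral_nonneg fun x => BF_nonneg hpq _ _ (sop_nonneg hf0 l sh hl M x)
      (sop_nonneg hg0 l sh hl M x)
  have hst : ∫ x, BF p q (f x) (g x) ≤
      (4 + 6 / (q * (q - 1))) * ((∫ x, |f x| ^ p) + ∫ x, |g x| ^ q) := by
    rw [← integral_add (hf.abs_rpow hp0).integrable (hg.abs_rpow hq0).integrable,
      ← integral_const_mul]
    refine integral_mono (hf.comp2 hg _ hc h0).integrable
      (((hf.abs_rpow hp0).add (hg.abs_rpow hq0)).const_mul _).integrable fun x => ?_
    have := BF_upper hp hpq (f x) (g x) (hf0 x) (hg0 x)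
    simpa only [abs_of_nonneg (hf0 x), abs_of_nonneg (hg0 x)] using this
  rw [le_inv_mul_iff₀ hcB]
  simp only [Function.iterate_zero, id_eq] at tel
  linarith

end flow
end CZ

namespace CZ

section flow

variable {E : Type} [NormedAddCommGroup E] [NormedSpace ℝ E] [FiniteDimensional ℝ E]
  [MeasureSpace E] [BorelSpace E] [(volume : Measure E).IsAddHaarMeasure]
variable {ι : Type} [Fintype ι]

noncomputable def K0 (p q : ℝ) : ℝ := (cB p)⁻¹ * (4 + 6 / (q * (q - 1)))

lemma four_terms {f1 f2 g1 g2 f g : E → ℝ} (hf : Cc f) (hg : Cc g)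
    (hf1 : Cc f1) (hf2 : Cc f2) (hg1 : Cc g1) (hg2 : Cc g2)
    (h1 : ∀ x, f x = f1 x - f2 x) (h2 : ∀ x, g x = g1 x - g2 x) :
    ∫ x, |f x| * |g x| ≤ (∫ x, |f1 x| * |g1 x|) + (∫ x, |f1 x| * |g2 x|)
      + ((∫ x, |f2 x| * |g1 x|) + ∫ x, |f2 x| * |g2 x|) := by
  have i11 := hf1.abs.mul hg1.abs
  have i12 := hf1.abs.mul hg2.abs
  have i21 := hf2.abs.mul hg1.abs
  have i22 := hf2.abs.mul hg2.abs
  rw [← integral_add i11.integrable i12.integrable, ← integral_add i21.integrable i22.integrable,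
    ← integral_add (i11.add i12).integrable (i21.add i22).integrable]
  refine integral_mono (hf.abs.mul hg.abs).integrable
    ((i11.add i12).add (i21.add i22)).integrable fun x => ?_
  have a1 : |f x| ≤ |f1 x| + |f2 x| := by rw [h1]; exact abs_sub _ _
  have a2 : |g x| ≤ |g1 x| + |g2 x| := by rw [h2]; exact abs_sub _ _
  calc |f x| * |g x| ≤ (|f1 x| + |f2 x|) * (|g1 x| + |g2 x|) := by gcongr
    _ = _ := by ring

lemma K2 {p q : ℝ} (hp : 2 ≤ p) (hpq : p.HolderConjugate q)
    (l : ι → ℝ) (sh : ι → E) (hl : ∀ i, 0 ≤ l i) (hl1 : ∑ i, l i = 1)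
    {f g : E → ℝ} (hf : Cc f) (hg : Cc g) (hf0 : ∀ x, 0 ≤ f x) (hg0 : ∀ x, 0 ≤ g x)
    (r : ℝ) (hr : 0 ≤ r) (a a' b b' : ι) (ha : r ≤ l a) (hb : r ≤ l b)
    (ha' : r ≤ l a') (hb' : r ≤ l b') (M : ℕ) :
    ∑ m ∈ Finset.range M, r * ∫ x, |(Sop l sh)^[m] f (x + sh a) - (Sop l sh)^[m] f (x + sh a')| *
      |(Sop l sh)^[m] g (x + sh b) - (Sop l sh)^[m] g (x + sh b')|
      ≤ 4 * K0 p q * ((∫ x, |f x| ^ p) + ∫ x, |g x| ^ q) := by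
  have k1 := K1 hp hpq l sh hl hl1 hf hg hf0 hg0 r hr a b ha hb M
  have k2 := K1 hp hpq l sh hl hl1 hf hg hf0 hg0 r hr a b' ha hb' M
  have k3 := K1 hp hpq l sh hl hl1 hf hg hf0 hg0 r hr a' b ha' hb M
  have k4 := K1 hp hpq l sh hl hl1 hf hg hf0 hg0 r hr a' b' ha' hb' M
  have key : ∀ m ∈ Finset.range M, r * ∫ x, |(Sop l sh)^[m] f (x + sh a) - (Sop l sh)^[m] f (x + sh a')| *
      |(Sop l sh)^[m] g (x + sh b) - (Sop l sh)^[m] g (x + sh b')| ≤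
      (r * ∫ x, |(Sop l sh)^[m] f (x + sh a) - (Sop l sh)^[m+1] f x| *
      |(Sop l sh)^[m] g (x + sh b) - (Sop l sh)^[m+1] g x|) +
      (r * ∫ x, |(Sop l sh)^[m] f (x + sh a) - (Sop l sh)^[m+1] f x| *
      |(Sop l sh)^[m] g (x + sh b') - (Sop l sh)^[m+1] g x|) +
      ((r * ∫ x, |(Sop l sh)^[m] f (x + sh a') - (Sop l sh)^[m+1] f x| *
      |(Sop l sh)^[m] g (x + sh b) - (Sop l sh)^[m+1] g x|) +
      (r * ∫ x, |(Sop l sh)^[m] f (x + sh a') - (Sop l sh)^[m+1] f x| *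
      |(Sop l sh)^[m] g (x + sh b') - (Sop l sh)^[m+1] g x|)) := by
    intro m _
    have hF := hf.sopm l sh m
    have hG := hg.sopm l sh m
    have hF' := hf.sopm l sh (m+1)
    have hG' := hg.sopm l sh (m+1)
    have := four_terms ((hF.shift (sh a)).sub (hF.shift (sh a')))
      ((hG.shift (sh b)).sub (hG.shift (sh b')))
      ((hF.shift (sh a)).sub hF') ((hF.shift (sh a')).sub hF')
      ((hG.shift (sh b)).sub hG') ((hG.shift (sh b')).sub hG')
      (fun x => by ring) (fun x => by ring)
    have := mul_le_mul_of_nonneg_left this hr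
    linarith
  refine (Finset.sum_le_sum key).trans ?_
  simp only [Finset.sum_add_distrib]
  unfold K0
  linarith

lemma K3 {p q : ℝ} (hp : 2 ≤ p) (hpq : p.HolderConjugate q)
    (l : ι → ℝ) (sh : ι → E) (hl : ∀ i, 0 ≤ l i) (hl1 : ∑ i, l i = 1)
    {f g : E → ℝ} (hf : Cc f) (hg : Cc g)
    (r : ℝ) (hr : 0 ≤ r) (a a' b b' : ι) (ha : r ≤ l a) (hb : r ≤ l b)
    (ha' : r ≤ l a') (hb' : r ≤ l b') (M : ℕ) :
    ∑ m ∈ Finset.range M, r * ∫ x, |(Sop l sh)^[m] f (x + sh a) - (Sop l sh)^[m] f (x + sh a')| *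
      |(Sop l sh)^[m] g (x + sh b) - (Sop l sh)^[m] g (x + sh b')|
      ≤ 16 * K0 p q * ((∫ x, |f x| ^ p) + ∫ x, |g x| ^ q) := by
  have hp0 : 0 < p := by linarith
  have hq0 : 0 < q := hpq.symm.pos
  have hK0 : 0 ≤ K0 p q := by
    have := cB_pos p
    have : 0 < q - 1 := by linarith [hpq.symm.lt]
    unfold K0; positivity
  have pos : ∀ {f : E → ℝ}, Cc f → Cc (fun x => max (f x) 0) := fun hf =>
    hf.comp1 (fun a => max a 0) (by fun_prop) (by simp)
  have neg : ∀ {f : E → ℝ}, Cc f → Cc (fun x => max (-f x) 0) := fun hf =>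
    hf.comp1 (fun a => max (-a) 0) (by fun_prop) (by simp)
  have ipos : ∀ {f : E → ℝ} {s : ℝ}, 0 < s → Cc f → ∫ x, |max (f x) 0| ^ s ≤ ∫ x, |f x| ^ s := by
    intro f s hs hf
    refine integral_mono ((pos hf).abs_rpow hs).integrable (hf.abs_rpow hs).integrable fun x => ?_
    refine Real.rpow_le_rpow (abs_nonneg _) ?_ hs.le
    rw [abs_of_nonneg (le_max_right _ _)]
    exact max_le (le_abs_self _) (abs_nonneg _)
  have ineg : ∀ {f : E → ℝ} {s : ℝ}, 0 < s → Cc f → ∫ x, |max (-f x) 0| ^ s ≤ ∫ x, |f x| ^ s := by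
    intro f s hs hf
    refine integral_mono ((neg hf).abs_rpow hs).integrable (hf.abs_rpow hs).integrable fun x => ?_
    refine Real.rpow_le_rpow (abs_nonneg _) ?_ hs.le
    rw [abs_of_nonneg (le_max_right _ _)]
    exact max_le (neg_le_abs _) (abs_nonneg _)
  have split : ∀ (f : E → ℝ) (m : ℕ) (x : E), (Sop l sh)^[m] f x =
      (Sop l sh)^[m] (fun x => max (f x) 0) x - (Sop l sh)^[m] (fun x => max (-f x) 0) x := by
    intro f m x
    have := sop_lin l sh 1 (-1) (fun x => max (f x) 0) (fun x => max (-f x) 0) m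
    have e : (fun x => 1 * max (f x) 0 + -1 * max (-f x) 0) = f := by
      funext x
      rcases le_total 0 (f x) with h | h
      · rw [max_eq_left h, max_eq_right (by linarith)]; ring
      · rw [max_eq_right h, max_eq_left (by linarith)]; ring
    rw [e] at this
    rw [this]; ring
  have k1 := K2 hp hpq l sh hl hl1 (pos hf) (pos hg) (fun x => le_max_right _ _)
    (fun x => le_max_right _ _) r hr a a' b b' ha hb ha' hb' M
  have k2 := K2 hp hpq l sh hl hl1 (pos hf) (neg hg) (fun x => le_max_right _ _)
    (fun x => le_max_right _ _) r hr a a' b b' ha hb ha' hb' M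
  have k3 := K2 hp hpq l sh hl hl1 (neg hf) (pos hg) (fun x => le_max_right _ _)
    (fun x => le_max_right _ _) r hr a a' b b' ha hb ha' hb' M
  have k4 := K2 hp hpq l sh hl hl1 (neg hf) (neg hg) (fun x => le_max_right _ _)
    (fun x => le_max_right _ _) r hr a a' b b' ha hb ha' hb' M
  have f1 := ipos hp0 hf
  have f2 := ineg hp0 hf
  have g1 := ipos hq0 hg
  have g2 := ineg hq0 hg
  have key := Finset.sum_le_sum (s := Finset.range M) fun m _ => by
    have hF := (pos hf).sopm l sh m
    have hG := (pos hg).sopm l sh m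
    have hF' := (neg hf).sopm l sh m
    have hG' := (neg hg).sopm l sh m
    have hFF := hf.sopm l sh m
    have hGG := hg.sopm l sh m
    have := four_terms ((hFF.shift (sh a)).sub (hFF.shift (sh a')))
      ((hGG.shift (sh b)).sub (hGG.shift (sh b')))
      ((hF.shift (sh a)).sub (hF.shift (sh a'))) ((hF'.shift (sh a)).sub (hF'.shift (sh a')))
      ((hG.shift (sh b)).sub (hG.shift (sh b'))) ((hG'.shift (sh b)).sub (hG'.shift (sh b')))
      (fun x => by rw [split f m, split f m]; ring) (fun x => by rw [split g m, split g m]; ring)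
    exact mul_le_mul_of_nonneg_left this hr
  refine key.trans ?_
  simp only [mul_add, Finset.sum_add_distrib]
  have e1 := mul_le_mul_of_nonneg_left f1 hK0
  have e2 := mul_le_mul_of_nonneg_left f2 hK0
  have e3 := mul_le_mul_of_nonneg_left g1 hK0
  have e4 := mul_le_mul_of_nonneg_left g2 hK0
  linarith

/-- Lp norm on Cc -/
noncomputable def nm (p : ℝ) (f : E → ℝ) : ℝ := (∫ x, |f x| ^ p) ^ (1 / p)

lemma nm_nonneg (p : ℝ) (f : E → ℝ) : 0 ≤ nm p f :=
  Real.rpow_nonneg (integral_nonneg fun x => by positivity) _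

lemma nm_rpow {p : ℝ} (hp : 0 < p) (f : E → ℝ) : nm p f ^ p = ∫ x, |f x| ^ p := by
  unfold nm
  rw [← Real.rpow_mul (integral_nonneg fun x => by positivity), one_div_mul_cancel hp.ne',
    Real.rpow_one]

lemma K4 {p q : ℝ} (hp : 2 ≤ p) (hpq : p.HolderConjugate q)
    (l : ι → ℝ) (sh : ι → E) (hl : ∀ i, 0 ≤ l i) (hl1 : ∑ i, l i = 1)
    {f g : E → ℝ} (hf : Cc f) (hg : Cc g)
    (r : ℝ) (hr : 0 ≤ r) (a a' b b' : ι) (ha : r ≤ l a) (hb : r ≤ l b)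
    (ha' : r ≤ l a') (hb' : r ≤ l b') (M : ℕ) :
    ∑ m ∈ Finset.range M, r * ∫ x, |(Sop l sh)^[m] f (x + sh a) - (Sop l sh)^[m] f (x + sh a')| *
      |(Sop l sh)^[m] g (x + sh b) - (Sop l sh)^[m] g (x + sh b')|
      ≤ 32 * K0 p q * (nm p f * nm q g) := by
  have hp0 : 0 < p := by linarith
  have hq0 : 0 < q := hpq.symm.pos
  have hK0 : 0 ≤ K0 p q := by
    have := cB_pos p
    have : 0 < q - 1 := by linarith [hpq.symm.lt]
    unfold K0; positivity
  have sc : ∀ (f : E → ℝ) (s : ℝ) (m : ℕ), (Sop l sh)^[m] (fun x => s * f x) =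
      fun x => s * (Sop l sh)^[m] f x := by
    intro f s m
    have := sop_lin l sh s 0 f f m
    simpa using this
  have isc : ∀ (f : E → ℝ) (s t : ℝ), 0 ≤ s → 0 < t → ∫ x, |s * f x| ^ t = (s * nm t f) ^ t := by
    intro f s t hs ht
    rw [Real.mul_rpow hs (nm_nonneg _ _), nm_rpow ht, ← integral_const_mul]
    congr 1; funext x
    rw [abs_mul, abs_of_nonneg hs, Real.mul_rpow hs (abs_nonneg _)]
  set A := ∑ m ∈ Finset.range M, r * ∫ x, |(Sop l sh)^[m] f (x + sh a) - (Sop l sh)^[m] f (x + sh a')| *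
      |(Sop l sh)^[m] g (x + sh b) - (Sop l sh)^[m] g (x + sh b')| with hA
  have key : ∀ ε > 0, A ≤ 32 * K0 p q * ((nm p f + ε) * (nm q g + ε)) := by
    intro ε hε
    have hN : 0 < nm p f + ε := by linarith [nm_nonneg p f]
    have hN' : 0 < nm q g + ε := by linarith [nm_nonneg q g]
    have := K3 hp hpq l sh hl hl1 (hf.const_mul (nm p f + ε)⁻¹) (hg.const_mul (nm q g + ε)⁻¹)
      r hr a a' b b' ha hb ha' hb' M
    rw [isc f _ _ (by positivity) hp0, isc g _ _ (by positivity) hq0] at this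
    have b1 : ((nm p f + ε)⁻¹ * nm p f) ^ p ≤ 1 := by
      refine Real.rpow_le_one (mul_nonneg (by positivity) (nm_nonneg _ _)) ?_ hp0.le
      rw [inv_mul_le_iff₀ hN]; linarith
    have b2 : ((nm q g + ε)⁻¹ * nm q g) ^ q ≤ 1 := by
      refine Real.rpow_le_one (mul_nonneg (by positivity) (nm_nonneg _ _)) ?_ hq0.le
      rw [inv_mul_le_iff₀ hN']; linarith
    have lhs : ∑ m ∈ Finset.range M, r * ∫ x,
      |(Sop l sh)^[m] (fun x => (nm p f + ε)⁻¹ * f x) (x + sh a)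
        - (Sop l sh)^[m] (fun x => (nm p f + ε)⁻¹ * f x) (x + sh a')| *
      |(Sop l sh)^[m] (fun x => (nm q g + ε)⁻¹ * g x) (x + sh b)
        - (Sop l sh)^[m] (fun x => (nm q g + ε)⁻¹ * g x) (x + sh b')|
      = ((nm p f + ε) * (nm q g + ε))⁻¹ * A := by
      rw [hA, Finset.mul_sum]
      refine Finset.sum_congr rfl fun m _ => ?_
      rw [mul_left_comm (((nm p f + ε) * (nm q g + ε))⁻¹)]
      congr 1
      rw [← integral_const_mul]
      congr 1; funext x
      simp only [sc, ← mul_sub, abs_mul, abs_of_pos (inv_pos.2 hN), abs_of_pos (inv_pos.2 hN'),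
        mul_inv]
      ring
    rw [lhs] at this
    have h3 : ((nm p f + ε) * (nm q g + ε))⁻¹ * A ≤ 32 * K0 p q := by
      nlinarith
    rw [inv_mul_le_iff₀ (by positivity)] at h3
    linarith
  have hcont : Continuous fun ε : ℝ => 32 * K0 p q * ((nm p f + ε) * (nm q g + ε)) := by fun_prop
  have lim := (hcont.tendsto 0).mono_left (nhdsWithin_le_nhds (s := Set.Ioi 0))
  simp only [add_zero] at lim
  exact ge_of_tendsto lim (Filter.eventually_of_mem self_mem_nhdsWithin key)

/-- constant -/
noncomputable def KK (p q : ℝ) : ℝ := 32 * (K0 p q + K0 q p)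

lemma K0_nonneg {p q : ℝ} (hpq : p.HolderConjugate q) : 0 ≤ K0 p q := by
  have := cB_pos p
  have : 0 < q - 1 := by linarith [hpq.symm.lt]
  have := hpq.symm.pos
  unfold K0; positivity

lemma KK_nonneg {p q : ℝ} (hpq : p.HolderConjugate q) : 0 ≤ KK p q := by
  have := K0_nonneg hpq
  have := K0_nonneg hpq.symm
  unfold KK; positivity

lemma K5 {p q : ℝ} (hpq : p.HolderConjugate q)
    (l : ι → ℝ) (sh : ι → E) (hl : ∀ i, 0 ≤ l i) (hl1 : ∑ i, l i = 1)
    {f g : E → ℝ} (hf : Cc f) (hg : Cc g)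
    (r : ℝ) (hr : 0 ≤ r) (a a' b b' : ι) (ha : r ≤ l a) (hb : r ≤ l b)
    (ha' : r ≤ l a') (hb' : r ≤ l b') (M : ℕ) :
    ∑ m ∈ Finset.range M, r * ∫ x, |(Sop l sh)^[m] f (x + sh a) - (Sop l sh)^[m] f (x + sh a')| *
      |(Sop l sh)^[m] g (x + sh b) - (Sop l sh)^[m] g (x + sh b')|
      ≤ KK p q * (nm p f * nm q g) := by
  have h1 := K0_nonneg hpq
  have h2 := K0_nonneg hpq.symm
  have h3 := mul_nonneg (nm_nonneg p f) (nm_nonneg q g)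
  rcases le_total 2 p with hp | hp
  · refine (K4 hp hpq l sh hl hl1 hf hg r hr a a' b b' ha hb ha' hb' M).trans ?_
    unfold KK; nlinarith [mul_nonneg h2 h3]
  · have hq : 2 ≤ q := by
      have := hpq.mul_eq_add
      have := hpq.lt
      nlinarith
    have := K4 hq hpq.symm l sh hl hl1 hg hf r hr b b' a a' hb ha hb' ha' M
    simp only [mul_comm (|(Sop l sh)^[_] g _ - _|)] at this
    refine this.trans ?_
    unfold KK; nlinarith [mul_nonneg h1 h3]

end flow
end CZ

namespace CZ

section flow

variable {E : Type} [NormedAddCommGroup E] [NormedSpace ℝ E] [FiniteDimensional ℝ E]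
  [MeasureSpace E] [BorelSpace E] [(volume : Measure E).IsAddHaarMeasure]
variable {d : ℕ}

/-- weights of the stencil -/
noncomputable def wt (d : ℕ) : Option (Fin d × Bool) → ℝ
  | none => 1 / 2
  | some _ => 1 / (4 * d)

/-- shifts of the stencil -/
def sh (v : Fin d → E) : Option (Fin d × Bool) → E
  | none => 0
  | some (l, true) => v l
  | some (l, false) => -v l

lemma wt_nonneg (i) : 0 ≤ wt d i := by
  rcases i with _ | i <;> simp only [wt] <;> positivity

lemma wt_ge (hd : 0 < d) (i) : 1 / (4 * (d : ℝ)) ≤ wt d i := by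
  rcases i with _ | i <;> simp only [wt]
  · have : (1 : ℝ) ≤ d := by exact_mod_cast hd
    rw [div_le_div_iff₀ (by positivity) (by positivity)]; linarith
  · exact le_rfl

lemma wt_sum (hd : 0 < d) : ∑ i, wt d i = 1 := by
  rw [Fintype.sum_option]
  simp only [wt]
  simp only [Finset.sum_const, Finset.card_univ, Fintype.card_prod, Fintype.card_fin, Fintype.card_bool]
  have : (d : ℝ) ≠ 0 := by positivity
  simp
  field_simp
  norm_num

/-- S -/
noncomputable abbrev SS (v : Fin d → E) : (E → ℝ) → E → ℝ := Sop (wt d) (sh v)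

/-- difference operator -/
def Df (c : E) (f : E → ℝ) : E → ℝ := fun x => f (x + c) - f x

lemma Cc.df {f : E → ℝ} (hf : Cc f) (c : E) : Cc (Df c f) := (hf.shift c).sub hf

lemma df_comm (c e : E) (f : E → ℝ) : Df c (Df e f) = Df e (Df c f) := by
  funext x; simp only [Df, add_right_comm x c e]; ring

lemma df_add (c : E) (f g : E → ℝ) : Df c (fun x => f x + g x) = fun x => Df c f x + Df c g x := by
  funext x; simp only [Df]; ring

lemma df_sum {ι : Type} (s : Finset ι) (c : E) (f : ι → E → ℝ) :
    Df c (fun x => ∑ i ∈ s, f i x) = fun x => ∑ i ∈ s, Df c (f i) x := by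
  funext x; simp only [Df, Finset.sum_sub_distrib]

lemma df_adj (c : E) {f g : E → ℝ} (hf : Cc f) (hg : Cc g) :
    ∫ x, Df (-c) f x * g x = ∫ x, f x * Df c g x := by
  have h := integral_add_right_eq_self (μ := (volume : Measure E)) (fun x => f (x + -c) * g x) c
  simp only [add_neg_cancel_right] at h
  simp only [Df, sub_mul, mul_sub]
  rw [integral_sub ((hf.shift (-c)).mul hg).integrable (hf.mul hg).integrable,
    integral_sub (hf.mul (hg.shift c)).integrable (hf.mul hg).integrable, h]

lemma sop_df (v : Fin d → E) (c : E) (f : E → ℝ) (m : ℕ) :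
    (SS v)^[m] (Df c f) = Df c ((SS v)^[m] f) := by
  have h1 := sop_shift (wt d) (sh v) f c m
  have h2 := sop_lin (wt d) (sh v) 1 (-1) (fun x => f (x + c)) f m
  have e : (fun x => 1 * f (x + c) + -1 * f x) = Df c f := by funext x; simp only [Df]; ring
  rw [e, h1] at h2
  rw [h2]; funext x; simp only [Df]; ring

lemma sop_sub (v : Fin d → E) (f g : E → ℝ) (m : ℕ) :
    (SS v)^[m] (fun x => f x - g x) = fun x => (SS v)^[m] f x - (SS v)^[m] g x := by
  have h2 := sop_lin (wt d) (sh v) 1 (-1) f g m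
  simp only [one_mul, neg_one_mul, ← sub_eq_add_neg] at h2
  exact h2

lemma sop_sum (v : Fin d → E) {ι : Type} (s : Finset ι) (f : ι → E → ℝ) (m : ℕ) :
    (SS v)^[m] (fun x => ∑ i ∈ s, f i x) = fun x => ∑ i ∈ s, (SS v)^[m] (f i) x := by
  classical
  induction s using Finset.induction_on with
  | empty =>
    have h2 := sop_lin (wt d) (sh v) 0 0 (fun _ => 0) (fun _ => 0) m
    simpa using h2
  | insert a s ha ih =>
    simp only [Finset.sum_insert ha]
    have h2 := sop_lin (wt d) (sh v) 1 1 (f a) (fun x => ∑ i ∈ s, f i x) m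
    simp only [one_mul] at h2
    rw [h2, ih]

lemma sub_sop (hd : 0 < d) (v : Fin d → E) (f : E → ℝ) (x : E) :
    f x - SS v f x = 1 / (4 * d) * ∑ l, Df (-v l) (Df (v l) f) x := by
  have hd' : (d : ℝ) ≠ 0 := by positivity
  have e : SS v f x = 1 / 2 * f x + 1 / (4 * d) * ∑ l, (f (x + v l) + f (x + -v l)) := by
    simp only [SS, Sop]
    rw [Fintype.sum_option, Fintype.sum_prod_type]
    simp [wt, sh, Finset.mul_sum, mul_add]
  have e2 : ∑ l, Df (-v l) (Df (v l) f) x = 2 * d * f x - ∑ l, (f (x + v l) + f (x + -v l)) := by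
    rw [eq_sub_iff_add_eq, ← Finset.sum_add_distrib]
    have : ∀ l, Df (-v l) (Df (v l) f) x + (f (x + v l) + f (x + -v l)) = 2 * f x := by
      intro l; simp only [Df, neg_add_cancel_right]; ring
    simp only [this, Finset.sum_const, Finset.card_univ, Fintype.card_fin, nsmul_eq_mul]; ring
  rw [e, e2]
  field_simp
  ring

lemma one_step (hd : 0 < d) (v : Fin d → E) {φ g : E → ℝ} (hφ : Cc φ) (hg : Cc g) :
    (∫ x, φ x * g x) - ∫ x, SS v φ x * SS v g x =
      1 / (4 * d) * ∑ l, ∫ x, Df (v l) φ x * Df (v l) (fun x => g x + SS v g x) x := by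
  have hSφ := hφ.sop (wt d) (sh v)
  have hSg := hg.sop (wt d) (sh v)
  have h1 : ∀ {F G : E → ℝ}, Cc F → Cc G → ∫ x, (F x - SS v F x) * G x =
      1 / (4 * d) * ∑ l, ∫ x, Df (v l) F x * Df (v l) G x := by
    intro F G hF hG
    simp only [sub_sop hd, mul_assoc, Finset.sum_mul]
    rw [integral_const_mul, integral_finsetSum _ fun l _ => (((hF.df _).df _).mul hG).integrable]
    simp only [df_adj _ (hF.df _) hG]
  have h2 : ∫ x, φ x * SS v g x = ∫ x, SS v φ x * g x := by
    have a := h1 hφ hg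
    have b := h1 hg hφ
    have c : ∀ l, ∫ x, Df (v l) φ x * Df (v l) g x = ∫ x, Df (v l) g x * Df (v l) φ x := fun l => by
      simp only [mul_comm]
    simp only [c] at a
    rw [← b] at a
    simp only [sub_mul] at a
    rw [integral_sub (hφ.mul hg).integrable (hSφ.mul hg).integrable,
      integral_sub (hg.mul hφ).integrable (hSg.mul hφ).integrable] at a
    simp only [mul_comm (g _) (φ _), mul_comm _ (φ _)] at a
    linarith
  rw [← h1 hφ (hg.add hSg)]
  have : ∀ x, (φ x - SS v φ x) * (g x + SS v g x) =
    (φ x * g x + φ x * SS v g x) - (SS v φ x * g x + SS v φ x * SS v g x) := fun x => by ring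
  simp only [this]
  rw [integral_sub ((hφ.mul hg).add (hφ.mul hSg)).integrable
    ((hSφ.mul hg).add (hSφ.mul hSg)).integrable,
    integral_add (hφ.mul hg).integrable (hφ.mul hSg).integrable,
    integral_add (hSφ.mul hg).integrable (hSφ.mul hSg).integrable, h2]
  ring

/-- rewriting with curls and divergence -/
lemma hodge (v : Fin d → E) {W : Fin d → E → ℝ} (hW : ∀ k, Cc (W k)) {ψ : E → ℝ} (hψ : Cc ψ)
    (i j : Fin d) :
    ∑ l, ∫ x, Df (v l) (Df (v i) (W j)) x * Df (v l) ψ x =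
      (∑ l, ∫ x, Df (v i) (fun x => Df (v l) (W j) x - Df (v j) (W l) x) x * Df (v l) ψ x)
      + ∫ x, Df (v i) (fun x => ∑ l, Df (-v l) (W l) x) x * Df (-v j) ψ x := by
  have e : ∀ l x, Df (v l) (Df (v i) (W j)) x =
      Df (v i) (fun x => Df (v l) (W j) x - Df (v j) (W l) x) x + Df (v j) (Df (v i) (W l)) x := by
    intro l x
    simp only [Df, add_right_comm x (v l) (v i), add_right_comm x (v j) (v i)]; ring
  have hc : ∀ l, Cc (fun x => Df (v l) (W j) x - Df (v j) (W l) x) := fun l =>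
    ((hW _).df _).sub ((hW _).df _)
  simp only [e, add_mul]
  have : ∀ l, ∫ x, (Df (v i) (fun x => Df (v l) (W j) x - Df (v j) (W l) x) x * Df (v l) ψ x
      + Df (v j) (Df (v i) (W l)) x * Df (v l) ψ x) =
      (∫ x, Df (v i) (fun x => Df (v l) (W j) x - Df (v j) (W l) x) x * Df (v l) ψ x) +
      ∫ x, Df (v j) (Df (v i) (W l)) x * Df (v l) ψ x := fun l =>
    integral_add (((hc l).df _).mul (hψ.df _)).integrable
      ((((hW l).df _).df _).mul (hψ.df _)).integrable
  simp only [this, Finset.sum_add_distrib]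
  congr 1
  have t : ∀ l, ∫ x, Df (v j) (Df (v i) (W l)) x * Df (v l) ψ x =
      ∫ x, Df (v i) (Df (-v l) (W l)) x * Df (-v j) ψ x := by
    intro l
    rw [← df_adj (v l) (((hW l).df _).df _) hψ, df_comm (-v l) (v j), df_comm (-v l) (v i)]
    have := df_adj (-v j) (((hW l).df (-v l)).df (v i)) hψ
    rw [neg_neg] at this
    exact this
  simp only [t]
  rw [← integral_finsetSum _ fun l _ => ((((hW l).df _).df _).mul (hψ.df _)).integrable]
  simp only [df_sum, Finset.sum_mul]

lemma K6 (hd : 0 < d) {p q : ℝ} (hpq : p.HolderConjugate q) (v : Fin d → E)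
    {f g : E → ℝ} (hf : Cc f) (hg : Cc g) (a b : Option (Fin d × Bool)) (M : ℕ) :
    ∑ m ∈ Finset.range M, 1 / (4 * (d : ℝ)) *
      ∫ x, |Df (sh v a) ((SS v)^[m] f) x| * |Df (sh v b) ((SS v)^[m] g) x|
      ≤ KK p q * (nm p f * nm q g) := by
  have := K5 hpq (wt d) (sh v) wt_nonneg (wt_sum hd) hf hg (1 / (4 * (d : ℝ))) (by positivity)
    a none b none (wt_ge hd _) (wt_ge hd _) (wt_ge hd _) (wt_ge hd _) M
  simpa only [sh, add_zero, Df] using this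

lemma K7 (hd : 0 < d) {p q : ℝ} (hpq : p.HolderConjugate q) (v : Fin d → E)
    {f g : E → ℝ} (hf : Cc f) (hg : Cc g) (a b : Option (Fin d × Bool)) (M : ℕ) :
    ∑ m ∈ Finset.range M, 1 / (4 * (d : ℝ)) *
      ∫ x, Df (sh v a) ((SS v)^[m] f) x * Df (sh v b)
        (fun x => (SS v)^[m] g x + (SS v)^[m+1] g x) x
      ≤ 2 * KK p q * (nm p f * nm q g) := by
  have k1 := K6 hd hpq v hf hg a b M
  have k2 := K6 hd hpq v hf (hg.sop (wt d) (sh v)) a b M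
  have hKK := KK_nonneg hpq
  have hn : nm q (Sop (wt d) (sh v) g) ≤ nm q g := by
    have := sop_contr hg (wt d) (sh v) wt_nonneg (wt_sum hd) hpq.symm.lt.le 1
    have hq := hpq.symm.pos
    exact Real.rpow_le_rpow (integral_nonneg fun x => by positivity) this (by positivity)
  have k3 : KK p q * (nm p f * nm q (Sop (wt d) (sh v) g)) ≤ KK p q * (nm p f * nm q g) := by
    have := nm_nonneg p f
    gcongr
  have key : ∀ m ∈ Finset.range M, 1 / (4 * (d : ℝ)) *
      ∫ x, Df (sh v a) ((SS v)^[m] f) x * Df (sh v b)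
        (fun x => (SS v)^[m] g x + (SS v)^[m+1] g x) x ≤
      (1 / (4 * (d : ℝ)) * ∫ x, |Df (sh v a) ((SS v)^[m] f) x| * |Df (sh v b) ((SS v)^[m] g) x|) +
      1 / (4 * (d : ℝ)) * ∫ x, |Df (sh v a) ((SS v)^[m] f) x| *
        |Df (sh v b) ((SS v)^[m] (SS v g)) x| := by
    intro m _
    have hF := (hf.sopm (wt d) (sh v) m).df (sh v a)
    have hG0 := (hg.sopm (wt d) (sh v) m)
    have hG0' := ((hg.sop (wt d) (sh v)).sopm (wt d) (sh v) m)
    have hG := hG0.df (sh v b)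
    have hG' := hG0'.df (sh v b)
    rw [← mul_add, ← integral_add (hF.abs.mul hG.abs).integrable (hF.abs.mul hG'.abs).integrable]
    refine mul_le_mul_of_nonneg_left ?_ (by positivity)
    simp only [Function.iterate_succ_apply]
    refine integral_mono (hF.mul ((hG0.add hG0').df _)).integrable
      ((hF.abs.mul hG.abs).add (hF.abs.mul hG'.abs)).integrable fun x => ?_
    simp only [df_add]
    rw [mul_add, ← abs_mul, ← abs_mul]
    exact add_le_add (le_abs_self _) (le_abs_self _)
  refine (Finset.sum_le_sum key).trans ?_
  rw [Finset.sum_add_distrib]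
  linarith

end flow
end CZ

namespace CZ

section flow

variable {E : Type} [NormedAddCommGroup E] [NormedSpace ℝ E] [FiniteDimensional ℝ E]
  [MeasureSpace E] [BorelSpace E] [(volume : Measure E).IsAddHaarMeasure]
variable {d : ℕ}

lemma pairing (hd : 0 < d) {p q : ℝ} (hpq : p.HolderConjugate q) (v : Fin d → E)
    {U : Fin d → E → ℝ} (hU : ∀ k, Cc (U k)) {g : E → ℝ} (hg : Cc g) (i j : Fin d) :
    ∫ x, Df (v i) (U j) x * g x ≤ 2 * KK p q *
      ((∑ l, nm p (fun x => Df (v l) (U j) x - Df (v j) (U l) x)) +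
        nm p (fun x => ∑ l, Df (-v l) (U l) x)) * nm q g := by
  set c : Fin d → E → ℝ := fun l x => Df (v l) (U j) x - Df (v j) (U l) x with hcdef
  set ρ : E → ℝ := fun x => ∑ l, Df (-v l) (U l) x with hρdef
  have hc : ∀ l, Cc (c l) := fun l => ((hU _).df _).sub ((hU _).df _)
  have hρ : Cc ρ := Cc.sum _ fun l => (hU l).df _
  set φ : ℕ → E → ℝ := fun m => Df (v i) ((SS v)^[m] (U j)) with hφdef
  have hφ : ∀ m, Cc (φ m) := fun m => ((hU j).sopm _ _ m).df _
  set γ : ℕ → E → ℝ := fun m => (SS v)^[m] g with hγdef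
  have hγ : ∀ m, Cc (γ m) := fun m => hg.sopm _ _ m
  set B := 2 * KK p q * ((∑ l, nm p (c l)) + nm p ρ) * nm q g with hB
  have step : ∀ m, (∫ x, φ m x * γ m x) - ∫ x, φ (m+1) x * γ (m+1) x =
      (∑ l, 1 / (4 * (d : ℝ)) * ∫ x, Df (v i) ((SS v)^[m] (c l)) x * Df (v l)
        (fun x => (SS v)^[m] g x + (SS v)^[m+1] g x) x) +
      1 / (4 * (d : ℝ)) * ∫ x, Df (v i) ((SS v)^[m] ρ) x * Df (-v j)
        (fun x => (SS v)^[m] g x + (SS v)^[m+1] g x) x := by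
    intro m
    have h1 := one_step hd v (hφ m) (hγ m)
    have e1 : SS v (φ m) = φ (m+1) := by
      have := sop_df v (v i) ((SS v)^[m] (U j)) 1
      simp only [Function.iterate_one] at this
      simp only [hφdef, Function.iterate_succ_apply', this]
    have e2 : SS v (γ m) = γ (m+1) := by
      simp only [hγdef, Function.iterate_succ_apply']
    rw [e1, e2] at h1
    rw [h1, hφdef]
    simp only []
    rw [hodge v (W := fun k => (SS v)^[m] (U k)) (fun k => (hU k).sopm _ _ m)
      ((hγ m).add (hγ (m+1))) i j]
    have e3 : ∀ l, (SS v)^[m] (c l) = fun x =>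
      Df (v l) ((SS v)^[m] (U j)) x - Df (v j) ((SS v)^[m] (U l)) x := by
      intro l
      simp only [hcdef, sop_sub, sop_df]
    have e4 : (SS v)^[m] ρ = fun x => ∑ l, Df (-v l) ((SS v)^[m] (U l)) x := by
      simp only [hρdef, sop_sum, sop_df]
    simp only [e3, e4, mul_add, Finset.mul_sum]
    rfl
  have tel : ∀ M, (∫ x, φ 0 x * γ 0 x) - ∫ x, φ M x * γ M x ≤ B := by
    intro M
    rw [← Finset.sum_range_sub' (fun m => ∫ x, φ m x * γ m x) M]
    simp only [step]
    rw [Finset.sum_add_distrib, Finset.sum_comm]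
    have k1 : ∀ l ∈ Finset.univ, ∑ m ∈ Finset.range M, 1 / (4 * (d : ℝ)) *
        ∫ x, Df (v i) ((SS v)^[m] (c l)) x * Df (v l)
        (fun x => (SS v)^[m] g x + (SS v)^[m+1] g x) x ≤ 2 * KK p q * (nm p (c l) * nm q g) :=
      fun l _ => K7 hd hpq v (hc l) hg (some (i, true)) (some (l, true)) M
    have k2 := K7 hd hpq v hρ hg (some (i, true)) (some (j, false)) M
    refine (add_le_add (Finset.sum_le_sum k1) k2).trans (le_of_eq ?_)
    rw [hB, ← Finset.mul_sum, ← Finset.sum_mul]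
    ring
  have h22 : (2 : ℝ).HolderConjugate 2 := Real.HolderConjugate.two_two
  have lim0 : Filter.Tendsto (fun m => ∫ x, |φ m x| * |φ m x|) Filter.atTop (nhds 0) := by
    refine Summable.tendsto_atTop_zero ?_
    refine summable_of_sum_range_le (c := 4 * d * (KK 2 2 * (nm 2 (U j) * nm 2 (U j))))
      (fun m => integral_nonneg fun x => by positivity) fun M => ?_
    have := K6 hd h22 v (hU j) (hU j) (some (i, true)) (some (i, true)) M
    rw [← Finset.mul_sum, one_div, inv_mul_le_iff₀ (by positivity)] at this
    exact this
  have hG : ∀ M, ∫ x, |γ M x| * |γ M x| ≤ ∫ x, |g x| ^ (2:ℝ) := by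
    intro M
    have := sop_contr hg (wt d) (sh v) wt_nonneg (wt_sum hd) (by norm_num : (1:ℝ) ≤ 2) M
    refine le_trans (le_of_eq ?_) this
    congr 1; funext x
    rw [Real.rpow_two, sq]
  set G := ∫ x, |g x| ^ (2:ℝ)
  have main : ∀ ε > 0, ∀ M, ∫ x, φ 0 x * γ 0 x ≤
      B + (ε⁻¹ * ∫ x, |φ M x| * |φ M x|) + ε * G := by
    intro ε hε M
    have h1 := tel M
    have h2 : ∫ x, φ M x * γ M x ≤ (ε⁻¹ * ∫ x, |φ M x| * |φ M x|) + ε * ∫ x, |γ M x| * |γ M x| := by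
      rw [← integral_const_mul, ← integral_const_mul]
      have i1 := ((hφ M).abs.mul (hφ M).abs).const_mul ε⁻¹
      have i2 := ((hγ M).abs.mul (hγ M).abs).const_mul ε
      rw [← integral_add i1.integrable i2.integrable]
      refine integral_mono ((hφ M).mul (hγ M)).integrable (i1.add i2).integrable fun x => ?_
      simp only [abs_mul_abs_self]
      have : 0 < ε⁻¹ := by positivity
      have e : ε⁻¹ * ε = 1 := inv_mul_cancel₀ hε.ne'
      have key : ε⁻¹ * (φ M x * φ M x) + ε * (γ M x * γ M x) - φ M x * γ M x =
        ε⁻¹ * (φ M x - ε * γ M x / 2) ^ 2 + 3 / 4 * ε * (γ M x) ^ 2 := by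
        field_simp
        ring
      have : 0 ≤ ε⁻¹ * (φ M x - ε * γ M x / 2) ^ 2 + 3 / 4 * ε * (γ M x) ^ 2 := by positivity
      linarith
    have h3 := mul_le_mul_of_nonneg_left (hG M) hε.le
    linarith
  have main2 : ∀ ε > 0, ∫ x, φ 0 x * γ 0 x ≤ B + ε * G := by
    intro ε hε
    have t : Filter.Tendsto (fun M => B + (ε⁻¹ * ∫ x, |φ M x| * |φ M x|) + ε * G) Filter.atTop
      (nhds (B + ε⁻¹ * 0 + ε * G)) := ((lim0.const_mul _).const_add B).add_const _
    rw [mul_zero, add_zero] at t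
    exact ge_of_tendsto' t (main ε hε)
  have hcont : Continuous fun ε : ℝ => B + ε * G := by fun_prop
  have lim := (hcont.tendsto 0).mono_left (nhdsWithin_le_nhds (s := Set.Ioi 0))
  simp only [zero_mul, add_zero] at lim
  exact ge_of_tendsto lim (Filter.eventually_of_mem self_mem_nhdsWithin main2)

theorem discrete (hd : 0 < d) {p q : ℝ} (hpq : p.HolderConjugate q) (v : Fin d → E)
    {U : Fin d → E → ℝ} (hU : ∀ k, Cc (U k)) (i j : Fin d) :
    nm p (Df (v i) (U j)) ≤ 2 * KK p q *
      ((∑ l, nm p (fun x => Df (v l) (U j) x - Df (v j) (U l) x)) +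
        nm p (fun x => ∑ l, Df (-v l) (U l) x)) := by
  have hp := hpq.lt
  have hp0 := hpq.pos
  have hq0 := hpq.symm.pos
  set φ := Df (v i) (U j) with hφdef
  have hφ : Cc φ := (hU j).df _
  set B := 2 * KK p q *
      ((∑ l, nm p (fun x => Df (v l) (U j) x - Df (v j) (U l) x)) +
        nm p (fun x => ∑ l, Df (-v l) (U l) x)) with hB
  have hB0 : 0 ≤ B := by
    have := KK_nonneg hpq
    have h1 : 0 ≤ ∑ l, nm p (fun x => Df (v l) (U j) x - Df (v j) (U l) x) :=
      Finset.sum_nonneg fun l _ => nm_nonneg _ _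
    have := nm_nonneg p (fun x => ∑ l, Df (-v l) (U l) x)
    positivity
  have hc : Continuous fun t : ℝ => (max t 0) ^ (p - 1) - (max (-t) 0) ^ (p - 1) := by
    have h1 : Continuous fun t : ℝ => (max t 0) ^ (p - 1) :=
      (by fun_prop : Continuous fun t : ℝ => max t 0).rpow_const fun _ => Or.inr (by linarith)
    have h2 : Continuous fun t : ℝ => (max (-t) 0) ^ (p - 1) :=
      (by fun_prop : Continuous fun t : ℝ => max (-t) 0).rpow_const fun _ => Or.inr (by linarith)
    exact h1.sub h2
  have hz : (0 : ℝ) ^ (p - 1) = 0 := Real.zero_rpow (by linarith)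
  have hg := hφ.comp1 _ hc (by simp)
  have t1 : ∀ t : ℝ, t * ((max t 0) ^ (p - 1) - (max (-t) 0) ^ (p - 1)) = |t| ^ p := by
    intro t
    rcases le_total 0 t with h | h
    · rw [max_eq_left h, max_eq_right (by linarith), hz, abs_of_nonneg h, sub_zero]
      nth_rewrite 1 [← Real.rpow_one t]
      rw [← Real.rpow_add' h (by linarith)]; congr 1; ring
    · rw [max_eq_right h, max_eq_left (by linarith), hz, abs_of_nonpos h, zero_sub]
      rw [mul_neg, ← neg_mul]
      nth_rewrite 1 [← Real.rpow_one (-t)]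
      rw [← Real.rpow_add' (by linarith) (by linarith)]; congr 1; ring
  have t2 : ∀ t : ℝ, |(max t 0) ^ (p - 1) - (max (-t) 0) ^ (p - 1)| ^ q = |t| ^ p := by
    intro t
    have : |(max t 0) ^ (p - 1) - (max (-t) 0) ^ (p - 1)| = |t| ^ (p - 1) := by
      rcases le_total 0 t with h | h
      · rw [max_eq_left h, max_eq_right (by linarith), hz, abs_of_nonneg h, sub_zero,
          abs_of_nonneg (by positivity)]
      · rw [max_eq_right h, max_eq_left (by linarith), hz, abs_of_nonpos h, zero_sub, abs_neg,
          abs_of_nonneg (Real.rpow_nonneg (by linarith) _)]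
    rw [this, ← Real.rpow_mul (abs_nonneg _)]
    congr 1
    have := hpq.mul_eq_add; linarith
  have main := pairing hd hpq v hU hg i j
  simp only [← hφdef, t1] at main
  rw [← hB] at main
  have e : nm q (fun x => (max (φ x) 0) ^ (p - 1) - (max (-φ x) 0) ^ (p - 1)) = nm p φ ^ (p - 1) := by
    unfold nm
    simp only [t2]
    rw [← Real.rpow_mul (integral_nonneg fun x => by positivity)]
    congr 1
    have := hpq.mul_eq_add
    field_simp
    linarith
  rw [e, ← nm_rpow hp0] at main
  rcases (nm_nonneg p φ).eq_or_lt with h | h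
  · rw [← h]; exact hB0
  · have e2 : nm p φ ^ p = nm p φ * nm p φ ^ (p - 1) := by
      nth_rewrite 2 [← Real.rpow_one (nm p φ)]
      rw [← Real.rpow_add h]; congr 1; ring
    rw [e2] at main
    exact le_of_mul_le_mul_right main (by positivity)

end flow
end CZ

namespace CZ

section flow

variable {E : Type} [NormedAddCommGroup E] [NormedSpace ℝ E] [FiniteDimensional ℝ E]
  [MeasureSpace E] [BorelSpace E] [(volume : Measure E).IsAddHaarMeasure]
variable {d : ℕ}

/-- dominated family -/
def Good (Q : ℝ → E → ℝ) (q : E → ℝ) : Prop :=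
  (∃ C : ℝ, ∃ K : Set E, 0 ≤ C ∧ IsCompact K ∧ ∀ h, 0 < h → h < 1 → ∀ x, |Q h x| ≤ K.indicator (fun _ => C) x)
    ∧ (∀ h, Continuous (Q h)) ∧ ∀ x, Filter.Tendsto (fun h => Q h x) (nhdsWithin 0 (Set.Ioi 0)) (nhds (q x))

lemma Good.add {Q R : ℝ → E → ℝ} {q r : E → ℝ} (hQ : Good Q q) (hR : Good R r) :
    Good (fun h x => Q h x + R h x) (fun x => q x + r x) := by
  obtain ⟨⟨C, K, hC, hK, hb⟩, hc, ht⟩ := hQ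
  obtain ⟨⟨C', K', hC', hK', hb'⟩, hc', ht'⟩ := hR
  refine ⟨⟨C + C', K ∪ K', by positivity, hK.union hK', fun h h0 h1 x => ?_⟩, fun h => (hc h).add (hc' h),
    fun x => (ht x).add (ht' x)⟩
  refine (abs_add_le _ _).trans ((add_le_add (hb h h0 h1 x) (hb' h h0 h1 x)).trans ?_)
  by_cases m : x ∈ K <;> by_cases m' : x ∈ K' <;> simp [m, m', hC, hC']

lemma Good.neg {Q : ℝ → E → ℝ} {q : E → ℝ} (hQ : Good Q q) :
    Good (fun h x => - Q h x) (fun x => - q x) := by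
  obtain ⟨⟨C, K, hC, hK, hb⟩, hc, ht⟩ := hQ
  exact ⟨⟨C, K, hC, hK, fun h h0 h1 x => by simpa using hb h h0 h1 x⟩, fun h => (hc h).neg,
    fun x => (ht x).neg⟩

lemma Good.sum {ι : Type} (s : Finset ι) {Q : ι → ℝ → E → ℝ} {q : ι → E → ℝ}
    (hQ : ∀ i, Good (Q i) (q i)) :
    Good (fun h x => ∑ i ∈ s, Q i h x) (fun x => ∑ i ∈ s, q i x) := by
  classical
  induction s using Finset.induction_on with
  | empty =>
    refine ⟨⟨0, ∅, le_rfl, isCompact_empty, fun h h0 h1 x => by simp⟩, fun h => by simpa using continuous_const,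
      fun x => by simp⟩
  | insert a s ha ih => simpa [Finset.sum_insert ha] using (hQ a).add ih

lemma Good.nm_tendsto {Q : ℝ → E → ℝ} {q : E → ℝ} (hQ : Good Q q) {p : ℝ} (hp : 0 < p) :
    Filter.Tendsto (fun h => nm p (Q h)) (nhdsWithin 0 (Set.Ioi 0)) (nhds (nm p q)) := by
  obtain ⟨⟨C, K, hC, hK, hb⟩, hc, ht⟩ := hQ
  unfold nm
  refine Filter.Tendsto.rpow_const ?_ (Or.inr (by positivity))
  refine tendsto_integral_filter_of_dominated_convergence (K.indicator (fun _ => C ^ p)) ?_ ?_ ?_ ?_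
  · exact Filter.Eventually.of_forall fun h =>
      ((hc h).abs.rpow_const fun _ => Or.inr hp.le).aestronglyMeasurable
  · have : Set.Ioo (0:ℝ) 1 ∈ nhdsWithin (0:ℝ) (Set.Ioi 0) := Ioo_mem_nhdsGT (by norm_num)
    filter_upwards [this] with h hh
    refine Filter.Eventually.of_forall fun x => ?_
    have := hb h hh.1 hh.2 x
    rw [Real.norm_of_nonneg (by positivity)]
    by_cases m : x ∈ K
    · simp only [m, Set.indicator_of_mem] at this ⊢
      exact Real.rpow_le_rpow (abs_nonneg _) this hp.le
    · simp only [m, not_false_eq_true, Set.indicator_of_notMem] at this ⊢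
      have : |Q h x| = 0 := le_antisymm this (abs_nonneg _)
      rw [this, Real.zero_rpow hp.ne']
  · exact (integrable_indicator_iff hK.measurableSet).2
      (integrableOn_const hK.measure_lt_top.ne)
  · refine Filter.Eventually.of_forall fun x => ?_
    exact ((ht x).abs).rpow_const (Or.inr hp.le)

open Pointwise in
lemma good_diff {U : E → ℝ} (hU : ContDiff ℝ 1 U) (hc : HasCompactSupport U) (e : E) :
    Good (fun h x => h⁻¹ * Df (h • e) U x) (fun x => fderiv ℝ U x e) := by
  obtain ⟨L, hL⟩ := hU.lipschitzWith_of_hasCompactSupport hc one_ne_zero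
  refine ⟨⟨L * ‖e‖, tsupport U + Metric.closedBall 0 ‖e‖, by positivity,
    hc.isCompact.add (isCompact_closedBall _ _), fun h h0 h1 x => ?_⟩, fun h => ?_, fun x => ?_⟩
  · have hhe : ‖h • e‖ ≤ ‖e‖ := by
      rw [norm_smul, Real.norm_of_nonneg h0.le]
      exact mul_le_of_le_one_left (norm_nonneg _) h1.le
    by_cases m : x ∈ tsupport U + Metric.closedBall 0 ‖e‖
    · simp only [m, Set.indicator_of_mem]
      have := hL.dist_le_mul (x + h • e) x
      rw [Real.dist_eq, dist_eq_norm, add_sub_cancel_left, norm_smul, Real.norm_of_nonneg h0.le] at this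
      rw [abs_mul, abs_of_pos (inv_pos.2 h0), inv_mul_le_iff₀ h0]
      simp only [Df]; linarith
    · simp only [m, not_false_eq_true, Set.indicator_of_notMem]
      have z1 : U x = 0 := by
        by_contra hne
        exact m (Set.mem_add.2 ⟨x, subset_tsupport _ hne, 0, by simp, by simp⟩)
      have z2 : U (x + h • e) = 0 := by
        by_contra hne
        exact m (Set.mem_add.2 ⟨x + h • e, subset_tsupport _ hne, -(h • e), by simpa using hhe, by simp⟩)
      simp [Df, z1, z2]
  · have := hU.continuous
    unfold Df
    fun_prop
  · have hd := ((hU.differentiable one_ne_zero) x).hasFDerivAt.hasLineDerivAt e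
    have hd2 : HasDerivAt (fun t : ℝ => U (x + t • e)) (fderiv ℝ U x e) 0 := hd
    have := hd2.tendsto_slope_zero_right
    simpa [Df, smul_eq_mul] using this

lemma nm_scale {p : ℝ} (hp : 0 < p) (c : ℝ) (hc : 0 ≤ c) (f : E → ℝ) :
    nm p (fun x => c * f x) = c * nm p f := by
  unfold nm
  have : ∀ x, |c * f x| ^ p = c ^ p * |f x| ^ p := fun x => by
    rw [abs_mul, abs_of_nonneg hc, Real.mul_rpow hc (abs_nonneg _)]
  simp only [this]
  rw [integral_const_mul, Real.mul_rpow (by positivity) (integral_nonneg fun x => by positivity),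
    ← Real.rpow_mul hc, mul_one_div_cancel hp.ne', Real.rpow_one]

theorem cont_est (hd : 0 < d) {p q : ℝ} (hpq : p.HolderConjugate q) (e : Fin d → E)
    {U : Fin d → E → ℝ} (hU : ∀ k, ContDiff ℝ 1 (U k)) (hc : ∀ k, HasCompactSupport (U k))
    (i j : Fin d) :
    nm p (fun x => fderiv ℝ (U j) x (e i)) ≤ 2 * KK p q *
      ((∑ l, nm p (fun x => fderiv ℝ (U j) x (e l) - fderiv ℝ (U l) x (e j))) +
        nm p (fun x => ∑ l, fderiv ℝ (U l) x (e l))) := by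
  have hp0 := hpq.pos
  have g := fun (k l : Fin d) => good_diff (hU k) (hc k) (e l)
  have g' := fun (k : Fin d) => good_diff (hU k) (hc k) (-e k)
  have t1 := (g j i).nm_tendsto hp0
  have t2 := fun l => ((g j l).add (g l j).neg).nm_tendsto hp0
  have t3 := (Good.sum Finset.univ g').nm_tendsto hp0
  have e3 : nm p (fun x => ∑ l, fderiv ℝ (U l) x (-e l)) = nm p (fun x => ∑ l, fderiv ℝ (U l) x (e l)) := by
    unfold nm; simp
  rw [e3] at t3
  simp only [← sub_eq_add_neg] at t2
  have T := ((tendsto_finsetSum Finset.univ fun l _ => t2 l).add t3).const_mul (2 * KK p q)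
  refine le_of_tendsto_of_tendsto t1 T ?_
  filter_upwards [self_mem_nhdsWithin] with h hh
  have hh0 : 0 ≤ h⁻¹ := inv_nonneg.2 (le_of_lt hh)
  simp only [← mul_sub, ← Finset.mul_sum]
  simp only [nm_scale hp0 _ hh0]
  rw [← Finset.mul_sum, ← mul_add]
  have D := discrete hd hpq (fun l => h • e l) (U := U) (fun k => ⟨(hU k).continuous, hc k⟩) i j
  have := mul_le_mul_of_nonneg_left D hh0
  simp only [smul_neg]
  refine this.trans (le_of_eq ?_)
  ring

end flow
end CZ

namespace CZ

/-- Euclidean space -/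
abbrev EE (d : ℕ) := EuclideanSpace ℝ (Fin d)

noncomputable def om (d : ℕ) : ℝ := (volume : Measure (EE d)).real (Metric.ball 0 1)

lemma om_pos (d : ℕ) : 0 < om d := by
  unfold om
  rw [Measure.real, ENNReal.toReal_pos_iff]
  exact ⟨Metric.measure_ball_pos _ _ one_pos, measure_ball_lt_top⟩

lemma nontriv {d : ℕ} (hd : 0 < d) : Nontrivial (EE d) := by
  have : Nonempty (Fin d) := ⟨⟨0, hd⟩⟩
  infer_instance

lemma polar {d : ℕ} (hd : 0 < d) (s : ℝ) (I : Set ℝ) (hI : MeasurableSet I)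
    (hIntg : IntegrableOn (fun r : ℝ => r ^ ((d : ℝ) - 1 + s)) (Set.Ioi 0 ∩ I)) :
    ∫⁻ x : EE d, ENNReal.ofReal (I.indicator (fun r => r ^ s) ‖x‖) =
      ENNReal.ofReal (d * om d * ∫ r in Set.Ioi 0 ∩ I, r ^ ((d : ℝ) - 1 + s)) := by
  have := nontriv hd
  have e : ∀ r ∈ Set.Ioi (0 : ℝ), r ^ (Module.finrank ℝ (EE d) - 1) • I.indicator (fun r => r ^ s) r =
      I.indicator (fun r => r ^ ((d : ℝ) - 1 + s)) r := by
    intro r hr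
    rw [finrank_euclideanSpace_fin]
    by_cases m : r ∈ I
    · simp only [m, Set.indicator_of_mem, smul_eq_mul]
      rw [Real.rpow_add hr, ← Real.rpow_natCast, Nat.cast_sub hd, Nat.cast_one]
    · simp [m]
  have i1 : Integrable (fun x : EE d => I.indicator (fun r => r ^ s) ‖x‖) := by
    rw [integrable_fun_norm_addHaar volume (f := I.indicator (fun r => r ^ s))]
    rw [integrableOn_congr_fun e measurableSet_Ioi, IntegrableOn, integrable_indicator_iff hI, IntegrableOn,
      Measure.restrict_restrict hI, Set.inter_comm]
    exact hIntg
  rw [← ofReal_integral_eq_lintegral_ofReal i1]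
  · congr 1
    rw [integral_fun_norm_addHaar volume (I.indicator (fun r => r ^ s)),
      setIntegral_congr_fun measurableSet_Ioi e, setIntegral_indicator hI, finrank_euclideanSpace_fin]
    simp only [nsmul_eq_mul, smul_eq_mul, om]
    ring
  · refine Filter.Eventually.of_forall fun x => ?_
    exact Set.indicator_apply_nonneg fun _ => by positivity

lemma polar_in {d : ℕ} (hd : 0 < d) (s : ℝ) (hs : -(d : ℝ) < s) (R : ℝ) (hR : 0 < R) :
    ∫⁻ x : EE d, ENNReal.ofReal ((Set.Iio R).indicator (fun r => r ^ s) ‖x‖) =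
      ENNReal.ofReal (d * om d / (d + s) * R ^ (d + s)) := by
  have h1 : Set.Ioi 0 ∩ Set.Iio R = Set.Ioo 0 R := Set.Ioi_inter_Iio
  rw [polar hd s _ measurableSet_Iio (by
    rw [h1, intervalIntegral.integrableOn_Ioo_rpow_iff hR]; linarith)]
  rw [h1, ← integral_Ioc_eq_integral_Ioo, ← intervalIntegral.integral_of_le hR.le,
    integral_rpow (Or.inl (by linarith)), Real.zero_rpow (by linarith)]
  congr 1
  rw [show (d : ℝ) - 1 + s + 1 = d + s by ring]; ring

lemma polar_out {d : ℕ} (hd : 0 < d) (s : ℝ) (hs : s < -(d : ℝ)) (R : ℝ) (hR : 0 < R) :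
    ∫⁻ x : EE d, ENNReal.ofReal ((Set.Ioi R).indicator (fun r => r ^ s) ‖x‖) =
      ENNReal.ofReal (d * om d / (-(d + s)) * R ^ (d + s)) := by
  have h1 : Set.Ioi 0 ∩ Set.Ioi R = Set.Ioi R := by
    rw [Set.Ioi_inter_Ioi]; congr 1; exact max_eq_right hR.le
  rw [polar hd s _ measurableSet_Ioi (by
    rw [h1]; exact integrableOn_Ioi_rpow_of_lt (by linarith) hR)]
  rw [h1, integral_Ioi_rpow_of_lt (by linarith) hR]
  congr 1
  rw [show (d : ℝ) - 1 + s + 1 = d + s by ring, div_neg]; ring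

/-- weight -/
noncomputable def J {d : ℕ} (x : EE d) : ℝ := Real.sqrt (1 + ‖x‖ ^ 2)

variable {d : ℕ}

lemma J_ge_one (x : EE d) : 1 ≤ J x := by
  unfold J; rw [Real.one_le_sqrt]; nlinarith [sq_nonneg ‖x‖]

lemma J_pos (x : EE d) : 0 < J x := by linarith [J_ge_one x]

lemma J_ge_norm (x : EE d) : ‖x‖ ≤ J x := by
  unfold J; exact Real.le_sqrt_of_sq_le (by linarith)

lemma J_lip (x y : EE d) : J x ≤ J y + ‖x - y‖ := by
  have h1 : J x = Real.sqrt (1 + ‖x‖ ^ 2) := rfl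
  have hy := J_ge_norm y
  have hy2 : J y ^ 2 = 1 + ‖y‖ ^ 2 := Real.sq_sqrt (by positivity)
  have h2 : ‖x‖ ≤ ‖y‖ + ‖x - y‖ := by
    have := norm_add_le y (x - y); simpa using this
  rw [h1, Real.sqrt_le_left (by have := J_pos y; positivity)]
  have h3 : ‖x‖ ^ 2 ≤ (‖y‖ + ‖x - y‖) ^ 2 := by gcongr
  nlinarith [mul_le_mul_of_nonneg_right hy (norm_nonneg (x - y))]

lemma J_cont : Continuous (J : EE d → ℝ) := by unfold J; fun_prop

/-- Riesz kernel -/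
noncomputable def rk {d : ℕ} (z : EE d) : ℝ := ‖z‖ ^ (1 - (d : ℝ))

lemma rk_nonneg (z : EE d) : 0 ≤ rk z := by unfold rk; positivity

lemma rk_meas : Measurable (rk : EE d → ℝ) := by unfold rk; fun_prop

lemma lemI_pt (hd : 2 ≤ d) (b : ℝ) (hb : 1 < b) (x y : EE d) (hy0 : 0 < ‖y‖) :
    rk (x - y) * J y ^ (-b) ≤
      (J x / 2) ^ (-b) * (Set.Iio (J x / 2)).indicator (fun r => r ^ (1 - (d : ℝ))) ‖x - y‖
      + (J x / 2) ^ (1 - (d : ℝ)) * (Set.Iio (3 * J x)).indicator (fun r => r ^ (-b)) ‖y‖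
      + (1 / 2) ^ (1 - (d : ℝ)) * (Set.Ioi (2 * J x)).indicator (fun r => r ^ (1 - (d : ℝ) - b)) ‖y‖ := by
  have hd2 : (2 : ℝ) ≤ d := by exact_mod_cast hd
  have hJx := J_ge_one x
  have hJy := J_ge_one y
  have n1 : 0 ≤ (J x / 2) ^ (-b) * (Set.Iio (J x / 2)).indicator (fun r => r ^ (1 - (d : ℝ))) ‖x - y‖ :=
    mul_nonneg (by positivity) (Set.indicator_apply_nonneg fun _ => by positivity)
  have n2 : 0 ≤ (J x / 2) ^ (1 - (d : ℝ)) * (Set.Iio (3 * J x)).indicator (fun r => r ^ (-b)) ‖y‖ :=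
    mul_nonneg (by positivity) (Set.indicator_apply_nonneg fun _ => by positivity)
  have n3 : 0 ≤ (1 / 2) ^ (1 - (d : ℝ)) * (Set.Ioi (2 * J x)).indicator (fun r => r ^ (1 - (d : ℝ) - b)) ‖y‖ :=
    mul_nonneg (by positivity) (Set.indicator_apply_nonneg fun _ => by positivity)
  rcases lt_or_ge ‖x - y‖ (J x / 2) with h | h
  · refine le_trans ?_ (le_add_of_nonneg_right n3)
    refine le_trans ?_ (le_add_of_nonneg_right n2)
    rw [Set.indicator_of_mem (Set.mem_Iio.2 h), mul_comm]
    have := J_lip x y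
    unfold rk
    refine mul_le_mul_of_nonneg_right ?_ (by positivity)
    exact Real.rpow_le_rpow_of_nonpos (by positivity) (by linarith) (by linarith)
  rcases le_or_gt ‖y‖ (2 * J x) with h2 | h2
  · refine le_trans ?_ (le_add_of_nonneg_right n3)
    refine le_trans ?_ (le_add_of_nonneg_left n1)
    rw [Set.indicator_of_mem (Set.mem_Iio.2 (by linarith))]
    unfold rk
    have a1 : ‖x - y‖ ^ (1 - (d : ℝ)) ≤ (J x / 2) ^ (1 - (d : ℝ)) :=
      Real.rpow_le_rpow_of_nonpos (by positivity) h (by linarith)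
    have a2 : J y ^ (-b) ≤ ‖y‖ ^ (-b) :=
      Real.rpow_le_rpow_of_nonpos hy0 (J_ge_norm y) (by linarith)
    gcongr
  · refine le_trans ?_ (le_add_of_nonneg_left (add_nonneg n1 n2))
    rw [Set.indicator_of_mem (Set.mem_Ioi.2 h2)]
    have hx := J_ge_norm x
    have hy0 : 0 < ‖y‖ := by linarith
    have h3 : 1 / 2 * ‖y‖ ≤ ‖x - y‖ := by
      have := norm_sub_norm_le y x
      rw [norm_sub_rev] at this; linarith
    have a1 : rk (x - y) ≤ (1 / 2 * ‖y‖) ^ (1 - (d : ℝ)) :=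
        Real.rpow_le_rpow_of_nonpos (by positivity) h3 (by linarith)
    have a2 : J y ^ (-b) ≤ ‖y‖ ^ (-b) :=
        Real.rpow_le_rpow_of_nonpos hy0 (J_ge_norm y) (by linarith)
    rw [Real.mul_rpow (by norm_num) hy0.le] at a1
    rw [sub_eq_add_neg (1 - (d : ℝ)) b, Real.rpow_add hy0, ← mul_assoc]
    have := rk_nonneg (x - y)
    gcongr

end CZ

namespace CZ
variable {d : ℕ}

/-- weight in ENNReal -/
noncomputable def Jr (r : ℝ) (x : EE d) : ENNReal := ENNReal.ofReal (J x ^ r)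

lemma Jr_mul (r s : ℝ) (x : EE d) : Jr r x * Jr s x = Jr (r + s) x := by
  unfold Jr
  have := J_pos x
  rw [← ENNReal.ofReal_mul (by positivity), Real.rpow_add this]

lemma Jr_rpow (r s : ℝ) (hs : 0 ≤ s) (x : EE d) : (Jr r x) ^ s = Jr (r * s) x := by
  unfold Jr
  have := J_pos x
  rw [ENNReal.ofReal_rpow_of_nonneg (by positivity) hs, Real.rpow_mul this.le]

lemma Jr_zero (x : EE d) : Jr 0 x = 1 := by simp [Jr]

lemma Jr_meas (r : ℝ) : Measurable (Jr r : EE d → ENNReal) := by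
  unfold Jr
  have := (J_cont (d := d)).measurable
  fun_prop

/-- kernel in ENNReal -/
noncomputable def kk (z : EE d) : ENNReal := ENNReal.ofReal (rk z)

lemma kk_meas : Measurable (kk : EE d → ENNReal) := by
  unfold kk
  have := rk_meas (d := d)
  fun_prop

lemma kk_symm (x y : EE d) : kk (x - y) = kk (y - x) := by
  simp [kk, rk, norm_sub_rev]

lemma lemI (hd : 2 ≤ d) (b : ℝ) (hb : 1 < b) (hb' : b < d) :
    ∃ C : ENNReal, C ≠ ⊤ ∧ ∀ x : EE d, ∫⁻ y, kk (x - y) * Jr (-b) y ≤ C * Jr (1 - b) x := by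
  have hd0 : 0 < d := by omega
  have hd2 : (2 : ℝ) ≤ d := by exact_mod_cast hd
  have := nontriv hd0
  have hom := om_pos d
  set c1 : ℝ := (1/2) ^ (-b) * (d * om d / (d + (1 - (d:ℝ))) * (1/2) ^ (d + (1 - (d:ℝ))))
  set c2 : ℝ := (1/2) ^ (1 - (d : ℝ)) * (d * om d / (d + (-b)) * 3 ^ (d + (-b)))
  set c3 : ℝ := (1/2) ^ (1 - (d : ℝ)) * (d * om d / (-(d + (1 - (d : ℝ) - b))) * 2 ^ (d + (1 - (d : ℝ) - b)))
  have hc1 : 0 ≤ c1 := by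
    have : 0 < d + (1 - (d:ℝ)) := by linarith
    positivity
  have hc2 : 0 ≤ c2 := by
    have : 0 < d + (-b) := by linarith
    positivity
  have hc3 : 0 ≤ c3 := by
    have : 0 < -(d + (1 - (d : ℝ) - b)) := by linarith
    positivity
  refine ⟨ENNReal.ofReal (c1 + c2 + c3), ENNReal.ofReal_ne_top, fun x => ?_⟩
  have hJ := J_pos x
  have ae0 : ∀ᵐ y : EE d, 0 < ‖y‖ := by
    have : ∀ᵐ y : EE d, y ≠ 0 := by
      rw [ae_iff]; simp
    filter_upwards [this] with y hy
    exact norm_pos_iff.2 hy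
  have meas : ∀ (I : Set ℝ) (s : ℝ), MeasurableSet I →
      Measurable fun y : EE d => ENNReal.ofReal (I.indicator (fun r => r ^ s) ‖y‖) := by
    intro I s hI
    have : Measurable (I.indicator (fun r : ℝ => r ^ s)) :=
      (by fun_prop : Measurable fun r : ℝ => r ^ s).indicator hI
    exact (this.comp measurable_norm).ennreal_ofReal
  have nn : ∀ (I : Set ℝ) (s : ℝ) (y : EE d), 0 ≤ I.indicator (fun r => r ^ s) ‖y‖ := fun I s y =>
    Set.indicator_apply_nonneg fun _ => by positivity
  calc ∫⁻ y, kk (x - y) * Jr (-b) y ≤ ∫⁻ y,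
      (ENNReal.ofReal ((J x / 2) ^ (-b)) * ENNReal.ofReal ((Set.Iio (J x / 2)).indicator (fun r => r ^ (1 - (d : ℝ))) ‖x - y‖)
      + ENNReal.ofReal ((J x / 2) ^ (1 - (d : ℝ))) * ENNReal.ofReal ((Set.Iio (3 * J x)).indicator (fun r => r ^ (-b)) ‖y‖))
      + ENNReal.ofReal ((1 / 2) ^ (1 - (d : ℝ))) * ENNReal.ofReal ((Set.Ioi (2 * J x)).indicator (fun r => r ^ (1 - (d : ℝ) - b)) ‖y‖) := by
        refine lintegral_mono_ae ?_
        filter_upwards [ae0] with y hy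
        unfold kk Jr
        rw [← ENNReal.ofReal_mul (rk_nonneg _), ← ENNReal.ofReal_mul (by positivity),
          ← ENNReal.ofReal_mul (by positivity), ← ENNReal.ofReal_mul (by positivity),
          ← ENNReal.ofReal_add (mul_nonneg (by positivity) (nn _ _ _)) (mul_nonneg (by positivity) (nn _ _ _)),
          ← ENNReal.ofReal_add (add_nonneg (mul_nonneg (by positivity) (nn _ _ _))
            (mul_nonneg (by positivity) (nn _ _ _))) (mul_nonneg (by positivity) (nn _ _ _))]
        exact ENNReal.ofReal_le_ofReal (lemI_pt hd b hb x y hy)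
    _ = ENNReal.ofReal ((J x / 2) ^ (-b)) * ENNReal.ofReal (d * om d / (d + (1 - (d:ℝ))) * (J x / 2) ^ (d + (1 - (d:ℝ))))
      + ENNReal.ofReal ((J x / 2) ^ (1 - (d : ℝ))) * ENNReal.ofReal (d * om d / (d + (-b)) * (3 * J x) ^ (d + (-b)))
      + ENNReal.ofReal ((1 / 2) ^ (1 - (d : ℝ))) * ENNReal.ofReal (d * om d / (-(d + (1 - (d : ℝ) - b))) * (2 * J x) ^ (d + (1 - (d : ℝ) - b))) := by
        have m1 : Measurable fun y => ENNReal.ofReal ((Set.Iio (J x / 2)).indicator (fun r => r ^ (1 - (d : ℝ))) ‖x - y‖) :=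
          (meas (Set.Iio (J x / 2)) (1 - (d:ℝ)) measurableSet_Iio).comp (by fun_prop : Measurable fun y => x - y)
        have m2 := meas (Set.Iio (3 * J x)) (-b) measurableSet_Iio
        have m3 := meas (Set.Ioi (2 * J x)) (1 - (d : ℝ) - b) measurableSet_Ioi
        rw [lintegral_add_right _ (m3.const_mul _), lintegral_add_right _ (m2.const_mul _),
          lintegral_const_mul _ m1, lintegral_const_mul _ m2, lintegral_const_mul _ m3,
          lintegral_sub_left_eq_self (μ := (volume : Measure (EE d)))
            (fun z => ENNReal.ofReal ((Set.Iio (J x / 2)).indicator (fun r => r ^ (1 - (d : ℝ))) ‖z‖)) x,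
          polar_in hd0 _ (by linarith) _ (by positivity), polar_in hd0 _ (by linarith) _ (by positivity),
          polar_out hd0 _ (by linarith) _ (by positivity)]
    _ = ENNReal.ofReal (c1 + c2 + c3) * Jr (1 - b) x := by
        unfold Jr
        have p1 : (J x / 2) ^ (-b) * (d * om d / (d + (1 - (d:ℝ))) * (J x / 2) ^ (d + (1 - (d:ℝ)))) =
            c1 * J x ^ (1 - b) := by
          rw [div_eq_mul_one_div (J x) 2, Real.mul_rpow hJ.le (by norm_num), Real.mul_rpow hJ.le (by norm_num)]
          have rr : J x ^ (1 - b) = J x ^ (-b) * J x ^ (d + (1 - (d:ℝ))) := by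
            rw [← Real.rpow_add hJ]; congr 1; ring
          rw [rr]; simp only [c1]; ring
        have p2 : (J x / 2) ^ (1 - (d : ℝ)) * (d * om d / (d + (-b)) * (3 * J x) ^ (d + (-b))) =
            c2 * J x ^ (1 - b) := by
          rw [div_eq_mul_one_div (J x) 2, Real.mul_rpow hJ.le (by norm_num), Real.mul_rpow (by norm_num) hJ.le]
          have rr : J x ^ (1 - b) = J x ^ (1 - (d : ℝ)) * J x ^ (d + (-b)) := by
            rw [← Real.rpow_add hJ]; congr 1; ring
          rw [rr]; simp only [c2]; ring
        have p3 : (1 / 2) ^ (1 - (d : ℝ)) * (d * om d / (-(d + (1 - (d : ℝ) - b))) * (2 * J x) ^ (d + (1 - (d : ℝ) - b))) =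
            c3 * J x ^ (1 - b) := by
          rw [Real.mul_rpow (by norm_num) hJ.le,
            show (1 - b) = (d + (1 - (d : ℝ) - b)) by ring]
          ring
        rw [← ENNReal.ofReal_mul (by positivity), ← ENNReal.ofReal_mul (by positivity),
          ← ENNReal.ofReal_mul (by positivity), p1, p2, p3, ← ENNReal.ofReal_mul (by positivity),
          ← ENNReal.ofReal_add (by positivity) (by positivity),
          ← ENNReal.ofReal_add (by positivity) (by positivity)]
        congr 1; ring

theorem schur (hd : 2 ≤ d) {p q θ : ℝ} (hpq : p.HolderConjugate q) (hθ : 1 < θ) (hθ' : θ < d) :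
    ∃ C : ENNReal, C ≠ ⊤ ∧ ∀ φ : EE d → ENNReal, Measurable φ →
      ∫⁻ x, (Jr (θ - d / p - 1) x * ∫⁻ y, kk (x - y) * φ y) ^ p ≤
        C * ∫⁻ y, (Jr (θ - d / p) y * φ y) ^ p := by
  obtain ⟨C1, hC1, h1⟩ := lemI hd θ hθ hθ'
  obtain ⟨C2, hC2, h2⟩ := lemI hd (d + 1 - θ) (by linarith) (by linarith)
  have hp0 := hpq.pos
  have hq0 := hpq.symm.pos
  have hmul := hpq.mul_eq_add
  set a := θ - d / p with ha
  have hap : a * p = θ * p - d := by rw [ha]; field_simp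
  have hpq1 : p / q = p - 1 := by
    rw [div_eq_iff hq0.ne']; linarith
  have hmulr : ∀ (x y : ENNReal) (z : ℝ), 0 ≤ z → (x * y) ^ z = x ^ z * y ^ z :=
    fun x y z hz => ENNReal.mul_rpow_of_nonneg x y hz
  refine ⟨C1 ^ (p - 1) * C2, ENNReal.mul_ne_top (ENNReal.rpow_ne_top_of_nonneg (by linarith [hpq.lt]) hC1) hC2,
    fun φ hφ => ?_⟩
  set g : EE d → ENNReal := fun y => Jr a y * φ y with hg
  have hgm : Measurable g := (Jr_meas a).mul hφ
  have hkm : ∀ x : EE d, Measurable fun y => kk (x - y) := fun x => kk_meas.comp (by fun_prop)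
  have hold : ∀ x, ∫⁻ y, kk (x - y) * φ y ≤ (C1 * Jr (1 - θ) x) ^ (1 / q) *
      (∫⁻ y, kk (x - y) * (Jr (d - θ) y * g y ^ p)) ^ (1 / p) := by
    intro x
    have m1 : Measurable fun y => kk (x - y) ^ (1/q) * Jr (-θ/q) y :=
      ((hkm x).pow_const _).mul (Jr_meas _)
    have m2 : Measurable fun y => kk (x - y) ^ (1/p) * (Jr (θ/q - a) y * g y) :=
      ((hkm x).pow_const _).mul ((Jr_meas _).mul hgm)
    have H := ENNReal.lintegral_mul_le_Lp_mul_Lq volume hpq.symm m1.aemeasurable m2.aemeasurable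
    have e0 : ∫⁻ y, kk (x - y) * φ y = ∫⁻ y, ((fun y => kk (x - y) ^ (1/q) * Jr (-θ/q) y : EE d → ENNReal) *
        (fun y => kk (x - y) ^ (1/p) * (Jr (θ/q - a) y * g y) : EE d → ENNReal) : EE d → ENNReal) y := by
      congr 1; funext y
      simp only [Pi.mul_apply, hg]
      have : kk (x - y) = kk (x - y) ^ (1/q) * kk (x - y) ^ (1/p) := by
        rw [← ENNReal.rpow_add_of_nonneg _ _ (by positivity) (by positivity)]
        have : 1/q + 1/p = 1 := by
          have := hpq.symm.inv_add_inv_eq_one; simpa [one_div] using this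
        rw [this, ENNReal.rpow_one]
      have e : Jr (-θ/q) y * (Jr (θ/q - a) y * Jr a y) = 1 := by
        rw [Jr_mul, Jr_mul, ← Jr_zero y]; congr 1; ring
      calc kk (x - y) * φ y = kk (x - y) ^ (1/q) * kk (x - y) ^ (1/p) * φ y := by rw [← this]
        _ = kk (x - y) ^ (1/q) * kk (x - y) ^ (1/p) * φ y * (Jr (-θ/q) y * (Jr (θ/q - a) y * Jr a y)) := by
          rw [e, mul_one]
        _ = _ := by ring
    have e1 : ∫⁻ y, (kk (x - y) ^ (1/q) * Jr (-θ/q) y) ^ q = ∫⁻ y, kk (x - y) * Jr (-θ) y := by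
      congr 1; funext y
      rw [hmulr _ _ _ hq0.le, ← ENNReal.rpow_mul, one_div_mul_cancel hq0.ne', ENNReal.rpow_one,
        Jr_rpow _ _ hq0.le, div_mul_cancel₀ _ hq0.ne']
    have e2 : ∫⁻ y, (kk (x - y) ^ (1/p) * (Jr (θ/q - a) y * g y)) ^ p =
        ∫⁻ y, kk (x - y) * (Jr (d - θ) y * g y ^ p) := by
      congr 1; funext y
      rw [hmulr _ _ _ hp0.le, ← ENNReal.rpow_mul, one_div_mul_cancel hp0.ne', ENNReal.rpow_one,
        hmulr _ _ _ hp0.le, Jr_rpow _ _ hp0.le]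
      congr 3
      have : θ / q * p = θ * (p / q) := by ring
      rw [sub_mul, hap, this, hpq1]; ring
    rw [e0]
    refine H.trans ?_
    rw [e1, e2]
    gcongr
    exact h1 x
  have pt : ∀ x, (Jr (a - 1) x * ∫⁻ y, kk (x - y) * φ y) ^ p ≤
      C1 ^ (p - 1) * ∫⁻ y, Jr (-(d + 1 - θ)) x * (kk (x - y) * (Jr (d - θ) y * g y ^ p)) := by
    intro x
    have mm : Measurable fun y => kk (x - y) * (Jr (d - θ) y * g y ^ p) :=
      (hkm x).mul ((Jr_meas _).mul (hgm.pow_const _))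
    calc (Jr (a - 1) x * ∫⁻ y, kk (x - y) * φ y) ^ p ≤ (Jr (a - 1) x * ((C1 * Jr (1 - θ) x) ^ (1 / q) *
      (∫⁻ y, kk (x - y) * (Jr (d - θ) y * g y ^ p)) ^ (1 / p))) ^ p := by
          gcongr
          exact hold x
      _ = _ := by
        rw [hmulr _ _ _ hp0.le, hmulr _ _ _ hp0.le, ← ENNReal.rpow_mul, ← ENNReal.rpow_mul,
          one_div_mul_cancel hp0.ne', ENNReal.rpow_one, one_div_mul_eq_div, hpq1,
          hmulr _ _ _ (by linarith [hpq.lt]), Jr_rpow _ _ hp0.le, Jr_rpow _ _ (by linarith [hpq.lt]),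
          lintegral_const_mul _ mm]
        have : Jr (-(d + 1 - θ)) x = Jr ((a - 1) * p) x * Jr ((1 - θ) * (p - 1)) x := by
          rw [Jr_mul]; congr 1
          rw [sub_mul, hap]; ring
        rw [this]; ring
  calc ∫⁻ x, (Jr (a - 1) x * ∫⁻ y, kk (x - y) * φ y) ^ p
      ≤ ∫⁻ x, C1 ^ (p - 1) * ∫⁻ y, Jr (-(d + 1 - θ)) x * (kk (x - y) * (Jr (d - θ) y * g y ^ p)) :=
        lintegral_mono pt
    _ = C1 ^ (p - 1) * ∫⁻ x, ∫⁻ y, Jr (-(d + 1 - θ)) x * (kk (x - y) * (Jr (d - θ) y * g y ^ p)) := by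
        rw [lintegral_const_mul' _ _ (ENNReal.rpow_ne_top_of_nonneg (by linarith [hpq.lt]) hC1)]
    _ = C1 ^ (p - 1) * ∫⁻ y, ∫⁻ x, Jr (-(d + 1 - θ)) x * (kk (x - y) * (Jr (d - θ) y * g y ^ p)) := by
        rw [lintegral_lintegral_swap]
        refine Measurable.aemeasurable ?_
        have a1 : Measurable fun z : EE d × EE d => kk (z.1 - z.2) := kk_meas.comp (by fun_prop)
        have a2 : Measurable fun z : EE d × EE d => Jr (-(d + 1 - θ)) z.1 := (Jr_meas _).comp measurable_fst
        have a3 : Measurable fun z : EE d × EE d => Jr (d - θ) z.2 := (Jr_meas _).comp measurable_snd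
        have a4 : Measurable fun z : EE d × EE d => g z.2 ^ p := (hgm.comp measurable_snd).pow_const _
        exact a2.mul (a1.mul (a3.mul a4))
    _ ≤ C1 ^ (p - 1) * ∫⁻ y, C2 * g y ^ p := by
        gcongr with y
        have : ∫⁻ x, Jr (-(d + 1 - θ)) x * (kk (x - y) * (Jr (d - θ) y * g y ^ p)) =
            (∫⁻ x, kk (y - x) * Jr (-(d + 1 - θ)) x) * (Jr (d - θ) y * g y ^ p) := by
          have m : Measurable fun x => kk (y - x) * Jr (-(d + 1 - θ)) x := (hkm y).mul (Jr_meas _)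
          rw [← lintegral_mul_const _ m]
          congr 1; funext x
          rw [kk_symm]; ring
        rw [this]
        calc _ ≤ (C2 * Jr (1 - (d + 1 - θ)) y) * (Jr (d - θ) y * g y ^ p) := by
              gcongr
              exact h2 y
          _ = C2 * (Jr (1 - (d + 1 - θ)) y * Jr (d - θ) y) * g y ^ p := by ring
          _ = C2 * g y ^ p := by
            rw [Jr_mul, show 1 - (d + 1 - θ) + (d - θ) = 0 by ring, Jr_zero, mul_one]
    _ = _ := by
        rw [lintegral_const_mul _ (hgm.pow_const _), mul_assoc]

end CZ

namespace CZ

variable {d : ℕ}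

/-- standard basis -/
noncomputable def bs (i : Fin d) : EE d := EuclideanSpace.single i 1

lemma bs_apply (i j : Fin d) : (bs i : EE d) j = if j = i then 1 else 0 := by
  simp [bs]

lemma bs_inner (z : EE d) (i : Fin d) : inner ℝ z (bs i) = z i := by
  simp [bs, EuclideanSpace.inner_single_right]

/-- regularized kernel -/
noncomputable def ke (ε : ℝ) (j : Fin d) (z : EE d) : ℝ := z j * (‖z‖ ^ 2 + ε ^ 2) ^ (-(d : ℝ) / 2)

lemma pos_aux {ε : ℝ} (hε : 0 < ε) (z : EE d) : 0 < ‖z‖ ^ 2 + ε ^ 2 := by positivity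

lemma ke_hasFDerivAt {ε : ℝ} (hε : 0 < ε) (j : Fin d) (z : EE d) :
    HasFDerivAt (ke ε j : EE d → ℝ)
      (z j • ((-(d : ℝ) / 2 * (‖z‖ ^ 2 + ε ^ 2) ^ (-(d : ℝ) / 2 - 1)) • (2 • innerSL ℝ z))
        + ((‖z‖ ^ 2 + ε ^ 2) ^ (-(d : ℝ) / 2)) • (EuclideanSpace.proj j : EE d →L[ℝ] ℝ)) z := by
  have h1 : HasFDerivAt (fun z : EE d => ‖z‖ ^ 2 + ε ^ 2) (2 • innerSL ℝ z) z :=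
    (hasStrictFDerivAt_norm_sq z).hasFDerivAt.add_const _
  have h2 := h1.rpow_const (p := -(d : ℝ) / 2) (Or.inl (pos_aux hε z).ne')
  have h3 : HasFDerivAt (fun z : EE d => z j) (EuclideanSpace.proj j : EE d →L[ℝ] ℝ) z :=
    (EuclideanSpace.proj j : EE d →L[ℝ] ℝ).hasFDerivAt
  exact h3.mul h2

lemma ke_fderiv {ε : ℝ} (hε : 0 < ε) (j l : Fin d) (z : EE d) :
    fderiv ℝ (ke ε j : EE d → ℝ) z (bs l) =
      (if j = l then 1 else 0) * (‖z‖ ^ 2 + ε ^ 2) ^ (-(d : ℝ) / 2)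
      - d * (z j * z l) * (‖z‖ ^ 2 + ε ^ 2) ^ (-(d : ℝ) / 2 - 1) := by
  rw [(ke_hasFDerivAt hε j z).fderiv]
  have hp : (EuclideanSpace.proj j : EE d →L[ℝ] ℝ) (bs l) = if j = l then 1 else 0 := bs_apply l j
  simp only [add_apply, smul_apply, innerSL_apply_apply, bs_inner,
    hp, smul_eq_mul, nsmul_eq_mul]
  push_cast
  ring

lemma ke_fderiv_symm {ε : ℝ} (hε : 0 < ε) (j l : Fin d) (z : EE d) :
    fderiv ℝ (ke ε j : EE d → ℝ) z (bs l) = fderiv ℝ (ke ε l : EE d → ℝ) z (bs j) := by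
  rw [ke_fderiv hε, ke_fderiv hε, mul_comm (z j)]
  simp only [eq_comm (a := j)]

lemma ke_div {ε : ℝ} (hε : 0 < ε) (z : EE d) :
    ∑ l, fderiv ℝ (ke ε l : EE d → ℝ) z (bs l) =
      d * ε ^ 2 * (‖z‖ ^ 2 + ε ^ 2) ^ (-(d : ℝ) / 2 - 1) := by
  simp only [ke_fderiv hε]
  rw [Finset.sum_sub_distrib]
  simp only [if_true, Finset.sum_const, Finset.card_univ, Fintype.card_fin, nsmul_eq_mul]
  rw [← Finset.sum_mul, ← Finset.mul_sum]
  have : ∑ i, z i * z i = ‖z‖ ^ 2 := by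
    rw [EuclideanSpace.real_norm_sq_eq]; simp [sq]
  rw [this, Real.rpow_sub_one (pos_aux hε z).ne']
  have := pos_aux hε z
  field_simp
  ring

lemma ke_cont {ε : ℝ} (hε : 0 < ε) (j : Fin d) : Continuous (ke ε j : EE d → ℝ) :=
  continuous_iff_continuousAt.2 fun z => (ke_hasFDerivAt hε j z).continuousAt

lemma ke_fderiv_cont {ε : ℝ} (hε : 0 < ε) (j l : Fin d) :
    Continuous (fun z => fderiv ℝ (ke ε j : EE d → ℝ) z (bs l)) := by
  simp only [ke_fderiv hε]
  have h : ∀ s : ℝ, Continuous fun z : EE d => (‖z‖ ^ 2 + ε ^ 2) ^ s := fun s =>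
    Continuous.rpow_const (by fun_prop) fun z => Or.inl (pos_aux hε z).ne'
  have h1 := h (-(d : ℝ) / 2)
  have h2 := h (-(d : ℝ) / 2 - 1)
  fun_prop

lemma ke_ibp {ε : ℝ} (hε : 0 < ε) (j l : Fin d) {g : EE d → ℝ} (hg : ContDiff ℝ 1 g)
    (hc : HasCompactSupport g) :
    ∫ z, ke ε j z * fderiv ℝ g z (bs l) = - ∫ z, fderiv ℝ (ke ε j : EE d → ℝ) z (bs l) * g z := by
  have hc' : HasCompactSupport (fun z => fderiv ℝ g z (bs l)) := hc.fderiv_apply ℝ _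
  have hgc : Continuous (fun z => fderiv ℝ g z (bs l)) :=
    (hg.continuous_fderiv one_ne_zero).clm_apply continuous_const
  refine integral_mul_fderiv_eq_neg_fderiv_mul_of_integrable ?_ ?_ ?_ ?_ ?_
  · exact ((ke_fderiv_cont hε j l).mul hg.continuous).integrable_of_hasCompactSupport hc.mul_left
  · exact ((ke_cont hε j).mul hgc).integrable_of_hasCompactSupport hc'.mul_left
  · exact ((ke_cont hε j).mul hg.continuous).integrable_of_hasCompactSupport hc.mul_left
  · exact fun z _ => (ke_hasFDerivAt hε j z).differentiableAt
  · exact fun z _ => (hg.differentiable one_ne_zero) z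

lemma ke_curl {ε : ℝ} (hε : 0 < ε) (j l : Fin d) {g : EE d → ℝ} (hg : ContDiff ℝ 1 g)
    (hc : HasCompactSupport g) :
    ∫ z, ke ε j z * fderiv ℝ g z (bs l) = ∫ z, ke ε l z * fderiv ℝ g z (bs j) := by
  rw [ke_ibp hε j l hg hc, ke_ibp hε l j hg hc]
  simp only [ke_fderiv_symm hε j l]

lemma ke_divg {ε : ℝ} (hε : 0 < ε) {g : EE d → ℝ} (hg : ContDiff ℝ 1 g)
    (hc : HasCompactSupport g) :
    ∑ l, ∫ z, ke ε l z * fderiv ℝ g z (bs l) =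
      - ∫ z, d * ε ^ 2 * (‖z‖ ^ 2 + ε ^ 2) ^ (-(d : ℝ) / 2 - 1) * g z := by
  simp only [ke_ibp hε _ _ hg hc]
  rw [Finset.sum_neg_distrib, ← integral_finsetSum]
  · simp only [← Finset.sum_mul, ke_div hε]
  · intro l _
    exact ((ke_fderiv_cont hε l l).mul hg.continuous).integrable_of_hasCompactSupport hc.mul_left

/-- approximate identity -/
noncomputable def eta (z : EE d) : ℝ := (1 / om d) * (1 + ‖z‖ ^ 2) ^ (-(d : ℝ) / 2 - 1)

lemma eta_nonneg (z : EE d) : 0 ≤ eta z := by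
  have := om_pos d
  unfold eta; positivity

lemma eta_scale {c : ℝ} (hc : 0 < c) (z : EE d) :
    c ^ d * eta (c • z) = (1 / om d) * (c⁻¹ ^ 2 * (‖z‖ ^ 2 + c⁻¹ ^ 2) ^ (-(d : ℝ) / 2 - 1)) := by
  unfold eta
  have h : 1 + ‖c • z‖ ^ 2 = c ^ 2 * (‖z‖ ^ 2 + c⁻¹ ^ 2) := by
    rw [norm_smul, Real.norm_of_nonneg hc.le]; field_simp; ring
  have h2 : (c ^ 2) ^ (-(d : ℝ) / 2 - 1) = (c ^ d)⁻¹ * (c ^ 2)⁻¹ := by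
    rw [← Real.rpow_natCast c 2, ← Real.rpow_mul hc.le, ← Real.rpow_natCast c d, ← Real.rpow_neg hc.le,
      ← Real.rpow_neg hc.le, ← Real.rpow_add hc]
    congr 1; push_cast; ring
  rw [h, Real.mul_rpow (by positivity) (by positivity), h2]
  field_simp

lemma eta_deriv (hd : 0 < d) (r : ℝ) :
    HasDerivAt (fun r : ℝ => r ^ d * (1 + r ^ 2) ^ (-(d : ℝ) / 2))
      (d * (r ^ (d - 1) * (1 + r ^ 2) ^ (-(d : ℝ) / 2 - 1))) r := by
  have h0 : 0 < 1 + r ^ 2 := by positivity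
  have h1 : HasDerivAt (fun r : ℝ => 1 + r ^ 2) (2 * r) r := by
    simpa using (hasDerivAt_pow 2 r).const_add 1
  have h2 := h1.rpow_const (p := -(d : ℝ) / 2) (Or.inl h0.ne')
  have h3 := (hasDerivAt_pow d r).mul h2
  refine h3.congr_deriv ?_
  rw [Real.rpow_sub_one h0.ne']
  obtain ⟨k, rfl⟩ : ∃ k, d = k + 1 := ⟨d - 1, by omega⟩
  simp only [Nat.add_sub_cancel]
  field_simp
  ring

lemma eta_lim (hd : 0 < d) :
    Filter.Tendsto (fun r : ℝ => r ^ d * (1 + r ^ 2) ^ (-(d : ℝ) / 2)) Filter.atTop (nhds 1) := by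
  have h1 : Filter.Tendsto (fun r : ℝ => (1 + (r⁻¹) ^ 2) ^ (-(d : ℝ) / 2)) Filter.atTop (nhds ((1 + 0 ^ 2) ^ (-(d : ℝ) / 2))) := by
    have : Filter.Tendsto (fun r : ℝ => 1 + (r⁻¹) ^ 2) Filter.atTop (nhds (1 + 0 ^ 2)) :=
      (tendsto_inv_atTop_zero.pow 2).const_add 1
    exact this.rpow_const (Or.inl (by norm_num))
  simp only [ne_eq, OfNat.ofNat_ne_zero, not_false_eq_true, zero_pow, add_zero, Real.one_rpow] at h1
  refine h1.congr' ?_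
  filter_upwards [Filter.eventually_gt_atTop 0] with r hr
  have h : 1 + r ^ 2 = r ^ 2 * (1 + r⁻¹ ^ 2) := by field_simp; ring
  have h2 : (r ^ 2) ^ (-(d : ℝ) / 2) = (r ^ d)⁻¹ := by
    rw [← Real.rpow_natCast r 2, ← Real.rpow_mul hr.le, ← Real.rpow_natCast r d, ← Real.rpow_neg hr.le]
    congr 1; push_cast; ring
  rw [h, Real.mul_rpow (by positivity) (by positivity), h2]
  field_simp

lemma eta_int (hd : 0 < d) : ∫ z : EE d, eta z = 1 := by
  have := nontriv hd
  have hom := om_pos d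
  unfold eta
  rw [integral_const_mul, integral_fun_norm_addHaar volume (fun r => (1 + r ^ 2) ^ (-(d : ℝ) / 2 - 1)),
    finrank_euclideanSpace_fin]
  have h := integral_Ioi_of_hasDerivAt_of_nonneg' (g := fun r : ℝ => r ^ d * (1 + r ^ 2) ^ (-(d : ℝ) / 2))
    (a := 0) (fun x _ => eta_deriv hd x) (fun x hx => by have : 0 < x := hx; positivity) (eta_lim hd)
  rw [integral_const_mul] at h
  simp only [smul_eq_mul, nsmul_eq_mul]
  have e : (volume : Measure (EE d)).real (Metric.ball 0 1) = om d := rfl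
  rw [e]
  simp [hd.ne'] at h
  rw [show ∀ X : ℝ, 1 / om d * (d * (om d * X)) = d * X from fun X => by field_simp]
  exact h

lemma eta_decay (hd : 0 < d) :
    Filter.Tendsto (fun x : EE d => ‖x‖ ^ Module.finrank ℝ (EE d) * eta x) (Bornology.cobounded (EE d)) (nhds 0) := by
  rw [finrank_euclideanSpace_fin]
  have h : Filter.Tendsto (fun r : ℝ => (1 / om d) * ((r ^ d * (1 + r ^ 2) ^ (-(d : ℝ) / 2)) * (1 + r ^ 2)⁻¹))
      Filter.atTop (nhds ((1 / om d) * (1 * 0))) := by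
    refine ((eta_lim hd).mul ?_).const_mul _
    refine tendsto_inv_atTop_zero.comp ?_
    exact Filter.tendsto_atTop_add_const_left _ _ (Filter.tendsto_pow_atTop two_ne_zero)
  simp only [mul_zero] at h
  refine (h.comp tendsto_norm_cobounded_atTop).congr fun x => ?_
  simp only [Function.comp, eta]
  rw [Real.rpow_sub_one (by positivity)]
  field_simp

end CZ

namespace CZ

variable {d : ℕ}

/-- kernel components -/
noncomputable def kj (j : Fin d) (z : EE d) : ℝ := z j / ‖z‖ ^ d

lemma rk_eq (z : EE d) (hz : z ≠ 0) : rk z = ‖z‖ / ‖z‖ ^ d := by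
  have : 0 < ‖z‖ := norm_pos_iff.2 hz
  unfold rk
  rw [Real.rpow_sub this, Real.rpow_one, Real.rpow_natCast]

lemma kj_meas (j : Fin d) : Measurable (kj j : EE d → ℝ) := by
  unfold kj; fun_prop

lemma coord_le (z : EE d) (j : Fin d) : |z j| ≤ ‖z‖ := by
  have := PiLp.norm_apply_le z j
  rwa [Real.norm_eq_abs] at this

lemma kj_le (j : Fin d) (z : EE d) : |kj j z| ≤ rk z := by
  by_cases hz : z = 0
  · subst hz; simp [kj, rk_nonneg]
  · rw [rk_eq z hz, kj, abs_div, abs_of_nonneg (by positivity : 0 ≤ ‖z‖ ^ d)]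
    gcongr
    exact coord_le z j

lemma rk_li (hd : 2 ≤ d) : LocallyIntegrable (rk : EE d → ℝ) := by
  have hd2 : (2 : ℝ) ≤ d := by exact_mod_cast hd
  refine locallyIntegrable_of_norm_le_rpow (C := 1) (α := d - 1) ?_ ?_ ?_ rk_meas.aestronglyMeasurable
  · rw [finrank_euclideanSpace_fin]; omega
  · rw [finrank_euclideanSpace_fin]; linarith
  · refine Filter.Eventually.of_forall fun z => ?_
    rw [Real.norm_of_nonneg (rk_nonneg z), rk, one_mul, neg_sub]

lemma kj_li (hd : 2 ≤ d) (j : Fin d) : LocallyIntegrable (kj j : EE d → ℝ) := by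
  refine (rk_li hd).mono (kj_meas j).aestronglyMeasurable (Filter.Eventually.of_forall fun z => ?_)
  rw [Real.norm_eq_abs, Real.norm_of_nonneg (rk_nonneg z)]
  exact kj_le j z

lemma sq_rpow_aux {r : ℝ} (hr : 0 < r) (d : ℕ) : (r ^ 2) ^ (-(d : ℝ) / 2) = (r ^ d)⁻¹ := by
  rw [← Real.rpow_natCast r 2, ← Real.rpow_mul hr.le, ← Real.rpow_natCast r d, ← Real.rpow_neg hr.le]
  congr 1; push_cast; ring

lemma ke_le {ε : ℝ} (hε : 0 < ε) (j : Fin d) (z : EE d) : |ke ε j z| ≤ rk z := by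
  by_cases hz : z = 0
  · subst hz; simp [ke, rk_nonneg]
  · have h0 : 0 < ‖z‖ := norm_pos_iff.2 hz
    rw [rk_eq z hz, ke, abs_mul, abs_of_nonneg (by positivity : 0 ≤ (‖z‖ ^ 2 + ε ^ 2) ^ (-(d : ℝ) / 2)),
      div_eq_mul_inv ‖z‖, ← sq_rpow_aux h0 d]
    gcongr ?_ * ?_
    · exact coord_le z j
    · apply Real.rpow_le_rpow_of_nonpos (by positivity) (by nlinarith)
      have : (0 : ℝ) ≤ d := Nat.cast_nonneg d
      linarith

lemma ke_tendsto (j : Fin d) (z : EE d) :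
    Filter.Tendsto (fun c : ℝ => ke c⁻¹ j z) Filter.atTop (nhds (kj j z)) := by
  by_cases hz : z = 0
  · subst hz; simp [ke, kj]
  · have h0 : 0 < ‖z‖ := norm_pos_iff.2 hz
    unfold ke kj
    rw [div_eq_mul_inv (z j), ← sq_rpow_aux h0 d]
    refine Filter.Tendsto.const_mul _ ?_
    have : Filter.Tendsto (fun c : ℝ => ‖z‖ ^ 2 + (c⁻¹) ^ 2) Filter.atTop (nhds (‖z‖ ^ 2 + 0 ^ 2)) :=
      (tendsto_inv_atTop_zero.pow 2).const_add _
    simp only [ne_eq, OfNat.ofNat_ne_zero, not_false_eq_true, zero_pow, add_zero] at this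
    exact this.rpow_const (Or.inl (by positivity))

lemma ke_int_tendsto (hd : 2 ≤ d) (j : Fin d) {h : EE d → ℝ} (hh : Continuous h) (hc : HasCompactSupport h) :
    Filter.Tendsto (fun c : ℝ => ∫ z, ke c⁻¹ j z * h z) Filter.atTop (nhds (∫ z, kj j z * h z)) := by
  refine tendsto_integral_filter_of_dominated_convergence (fun z => rk z * |h z|) ?_ ?_ ?_ ?_
  · filter_upwards [Filter.eventually_gt_atTop 0] with c hc
    exact ((ke_cont (inv_pos.2 hc) j).mul hh).aestronglyMeasurable
  · filter_upwards [Filter.eventually_gt_atTop 0] with c hc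
    refine Filter.Eventually.of_forall fun z => ?_
    rw [Real.norm_eq_abs, abs_mul]
    exact mul_le_mul_of_nonneg_right (ke_le (inv_pos.2 hc) j z) (abs_nonneg _)
  · have := (rk_li hd).integrable_smul_right_of_hasCompactSupport (g := fun z => |h z|) hh.abs
      (hc.comp_left (g := fun t => |t|) abs_zero)
    exact this
  · exact Filter.Eventually.of_forall fun z => (ke_tendsto j z).mul_const _

lemma kj_curl (hd : 2 ≤ d) (j l : Fin d) {g : EE d → ℝ} (hg : ContDiff ℝ 1 g)
    (hc : HasCompactSupport g) :
    ∫ z, kj j z * fderiv ℝ g z (bs l) = ∫ z, kj l z * fderiv ℝ g z (bs j) := by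
  have hc' : ∀ l : Fin d, HasCompactSupport (fun z => fderiv ℝ g z (bs l)) := fun l => hc.fderiv_apply ℝ _
  have hgc : ∀ l : Fin d, Continuous (fun z => fderiv ℝ g z (bs l)) := fun l =>
    (hg.continuous_fderiv one_ne_zero).clm_apply continuous_const
  refine tendsto_nhds_unique (ke_int_tendsto hd j (hgc l) (hc' l)) ?_
  refine (ke_int_tendsto hd l (hgc j) (hc' j)).congr' ?_
  filter_upwards [Filter.eventually_gt_atTop 0] with c hc0
  exact (ke_curl (inv_pos.2 hc0) j l hg hc).symm

lemma kj_div (hd : 2 ≤ d) {g : EE d → ℝ} (hg : ContDiff ℝ 1 g)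
    (hc : HasCompactSupport g) :
    ∑ l, ∫ z, kj l z * fderiv ℝ g z (bs l) = - (d * om d * g 0) := by
  have hc' : ∀ l : Fin d, HasCompactSupport (fun z => fderiv ℝ g z (bs l)) := fun l => hc.fderiv_apply ℝ _
  have hgc : ∀ l : Fin d, Continuous (fun z => fderiv ℝ g z (bs l)) := fun l =>
    (hg.continuous_fderiv one_ne_zero).clm_apply continuous_const
  have hd0 : 0 < d := by omega
  have hom := om_pos d
  have t1 := tendsto_finsetSum (Finset.univ : Finset (Fin d)) fun l _ => ke_int_tendsto hd l (hgc l) (hc' l)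
  have t2 := tendsto_integral_comp_smul_smul_of_integrable eta_nonneg (eta_int hd0) (eta_decay hd0)
    (hg.continuous.integrable_of_hasCompactSupport hc) hg.continuous.continuousAt
  refine tendsto_nhds_unique t1 ?_
  refine ((t2.const_mul (d * om d)).neg).congr' ?_
  filter_upwards [Filter.eventually_gt_atTop 0] with c hc0
  rw [ke_divg (inv_pos.2 hc0) hg hc, ← integral_const_mul]
  congr 2
  ext z
  rw [finrank_euclideanSpace_fin, eta_scale hc0, smul_eq_mul]
  field_simp

/-- potential components -/
noncomputable def Uf (f : EE d → ℝ) (j : Fin d) (x : EE d) : ℝ := ∫ z, kj j z * f (x - z)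

lemma Uf_conv (f : EE d → ℝ) (j : Fin d) :
    Uf f j = convolution (kj j) f (ContinuousLinearMap.mul ℝ ℝ) volume := rfl

lemma Uf_contDiff (hd : 2 ≤ d) {f : EE d → ℝ} (hf : ContDiff ℝ 1 f) (hc : HasCompactSupport f) (j : Fin d) :
    ContDiff ℝ 1 (Uf f j) := by
  rw [Uf_conv]
  exact hc.contDiff_convolution_right (n := 1) _ (kj_li hd j) (by exact_mod_cast hf)

lemma Uf_fderiv (hd : 2 ≤ d) {f : EE d → ℝ} (hf : ContDiff ℝ 1 f) (hc : HasCompactSupport f) (j : Fin d)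
    (x v : EE d) : fderiv ℝ (Uf f j) x v = ∫ z, kj j z * fderiv ℝ f (x - z) v := by
  rw [Uf_conv, (hc.hasFDerivAt_convolution_right (ContinuousLinearMap.mul ℝ ℝ) (kj_li hd j) hf x).fderiv,
    convolution_precompR_apply _ (kj_li hd j) (hc.fderiv ℝ) (hf.continuous_fderiv one_ne_zero)]
  rfl

lemma refl_fderiv {f : EE d → ℝ} (hf : ContDiff ℝ 1 f) (x z v : EE d) :
    fderiv ℝ (fun z => f (x - z)) z v = - fderiv ℝ f (x - z) v := by
  have h1 : HasFDerivAt (fun z : EE d => x - z) (-ContinuousLinearMap.id ℝ (EE d)) z :=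
    (hasFDerivAt_id z).const_sub x
  have h2 := ((hf.differentiable one_ne_zero) (x - z)).hasFDerivAt.comp z h1
  have h3 : HasFDerivAt (fun z : EE d => f (x - z)) _ z := h2
  rw [h3.fderiv]
  simp

lemma refl_cs {f : EE d → ℝ} (hc : HasCompactSupport f) (x : EE d) :
    HasCompactSupport (fun z => f (x - z)) :=
  hc.comp_homeomorph (Homeomorph.subLeft x)

lemma Uf_curl (hd : 2 ≤ d) {f : EE d → ℝ} (hf : ContDiff ℝ 1 f) (hc : HasCompactSupport f) (j l : Fin d)
    (x : EE d) : fderiv ℝ (Uf f j) x (bs l) = fderiv ℝ (Uf f l) x (bs j) := by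
  rw [Uf_fderiv hd hf hc, Uf_fderiv hd hf hc]
  have := kj_curl hd j l (g := fun z => f (x - z)) (by fun_prop) (refl_cs hc x)
  simp only [refl_fderiv hf, mul_neg, integral_neg, neg_inj] at this
  exact this

lemma Uf_div (hd : 2 ≤ d) {f : EE d → ℝ} (hf : ContDiff ℝ 1 f) (hc : HasCompactSupport f)
    (x : EE d) : ∑ l, fderiv ℝ (Uf f l) x (bs l) = d * om d * f x := by
  simp only [Uf_fderiv hd hf hc]
  have := kj_div hd (g := fun z => f (x - z)) (by fun_prop) (refl_cs hc x)
  simp only [refl_fderiv hf, mul_neg, integral_neg, Finset.sum_neg_distrib, neg_inj, sub_zero] at this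
  exact this

lemma u_coord (hd : 2 ≤ d) {f : EE d → ℝ} (hf : ContDiff ℝ 1 f) (hc : HasCompactSupport f)
    {u : EE d → EE d} (hu : ∀ x, u x = ∫ y, (f y / ((d : ℝ) * om d * ‖x - y‖ ^ d)) • (x - y))
    (x : EE d) (j : Fin d) : u x j = (1 / (d * om d)) * Uf f j x := by
  have hom := om_pos d
  have hIntg : Integrable (fun y => (f y / ((d : ℝ) * om d * ‖x - y‖ ^ d)) • (x - y)) := by
    have h1 : Integrable (fun z => rk z * f (x - z)) :=
      (rk_li hd).integrable_smul_right_of_hasCompactSupport (g := fun z => f (x - z))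
        (hf.continuous.comp (by fun_prop)) (refl_cs hc x)
    have h2 := (h1.comp_sub_left x).const_mul (1 / (d * om d))
    refine h2.mono ?_ ?_
    · have := hf.continuous.measurable
      exact (by fun_prop : Measurable fun y => (f y / ((d : ℝ) * om d * ‖x - y‖ ^ d)) • (x - y)).aestronglyMeasurable
    · refine Filter.Eventually.of_forall fun y => ?_
      by_cases hz : x - y = 0
      · rw [hz, smul_zero, norm_zero]; positivity
      · rw [rk_eq _ hz, norm_smul]
        simp only [sub_sub_cancel, Real.norm_eq_abs, abs_div, abs_mul, abs_norm, abs_pow, Nat.abs_cast, abs_one]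
        apply le_of_eq
        field_simp
  have h := (EuclideanSpace.proj j : EE d →L[ℝ] ℝ).integral_comp_comm hIntg
  rw [hu]
  refine h.symm.trans ?_
  rw [Uf, ← integral_const_mul, ← integral_sub_left_eq_self _ volume x]
  congr 1
  ext y
  simp only [sub_sub_cancel]
  have e : ∀ (c : ℝ) (z : EE d), (EuclideanSpace.proj j : EE d →L[ℝ] ℝ) (c • z) = c * z j := fun c z => rfl
  rw [e, kj]
  by_cases hz : y = 0
  · subst hz; simp
  · have h0 : 0 < ‖y‖ := norm_pos_iff.2 hz
    field_simp

lemma u_bound (hd : 2 ≤ d) {f : EE d → ℝ}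
    {u : EE d → EE d} (hu : ∀ x, u x = ∫ y, (f y / ((d : ℝ) * om d * ‖x - y‖ ^ d)) • (x - y))
    (x : EE d) : ENNReal.ofReal ‖u x‖ ≤
      ∫⁻ y, kk (x - y) * (ENNReal.ofReal (1 / (d * om d)) * ENNReal.ofReal |f y|) := by
  have hom := om_pos d
  rw [hu, ofReal_norm]
  refine (enorm_integral_le_lintegral_enorm _).trans (lintegral_mono fun y => ?_)
  rw [← ofReal_norm, kk, ← ENNReal.ofReal_mul (by positivity), ← ENNReal.ofReal_mul (rk_nonneg _)]
  apply ENNReal.ofReal_le_ofReal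
  by_cases hz : x - y = 0
  · rw [hz, smul_zero, norm_zero]
    have := rk_nonneg (0 : EE d)
    positivity
  · rw [rk_eq _ hz, norm_smul]
    simp only [Real.norm_eq_abs, abs_div, abs_mul, abs_norm, abs_pow, Nat.abs_cast]
    rw [abs_of_pos hom]
    apply le_of_eq
    field_simp

end CZ

namespace CZ

variable {d : ℕ}

lemma J_rpow_eq (a : ℝ) (x : EE d) : J x ^ a = (1 + ‖x‖ ^ 2) ^ (a / 2) := by
  unfold J
  rw [Real.sqrt_eq_rpow, ← Real.rpow_mul (by positivity)]
  congr 1; ring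

lemma J_rpow_hasFDerivAt (a : ℝ) (x : EE d) :
    HasFDerivAt (fun x : EE d => J x ^ a) ((a / 2 * (1 + ‖x‖ ^ 2) ^ (a / 2 - 1)) • (2 • innerSL ℝ x)) x := by
  have h1 : HasFDerivAt (fun z : EE d => 1 + ‖z‖ ^ 2) (2 • innerSL ℝ x) x :=
    (hasStrictFDerivAt_norm_sq x).hasFDerivAt.const_add _
  have h2 := h1.rpow_const (p := a / 2) (Or.inl (by positivity))
  simp only [J_rpow_eq]
  exact h2

lemma J_rpow_contDiff (a : ℝ) : ContDiff ℝ 1 (fun x : EE d => J x ^ a) := by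
  simp only [J_rpow_eq]
  refine ContDiff.rpow_const_of_ne ?_ fun x => by positivity
  exact contDiff_const.add (contDiff_norm_sq ℝ)

lemma J_rpow_fderiv_le (a : ℝ) (x v : EE d) :
    |fderiv ℝ (fun x : EE d => J x ^ a) x v| ≤ |a| * J x ^ (a - 1) * ‖v‖ := by
  rw [(J_rpow_hasFDerivAt a x).fderiv]
  have e : (1 + ‖x‖ ^ 2) ^ (a / 2 - 1) = J x ^ (a - 2) := by
    rw [J_rpow_eq]; congr 1; ring
  simp only [smul_apply, innerSL_apply_apply, smul_eq_mul, nsmul_eq_mul, e]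
  have h : |inner ℝ x v| ≤ J x * ‖v‖ :=
    (abs_real_inner_le_norm x v).trans (mul_le_mul_of_nonneg_right (J_ge_norm x) (norm_nonneg _))
  have hJ := J_pos x
  rw [show a / 2 * J x ^ (a - 2) * ((2 : ℕ) * inner ℝ x v) = a * (J x ^ (a - 2) * inner ℝ x v) by push_cast; ring,
    abs_mul, abs_mul, abs_of_nonneg (by positivity : 0 ≤ J x ^ (a - 2))]
  rw [show a - 1 = (a - 2) + 1 by ring, Real.rpow_add_one hJ.ne', mul_assoc, mul_assoc]
  gcongr

lemma cutwt (a : ℝ) : ∃ B : ℝ, 0 ≤ B ∧ ∃ ρ : ℕ → EE d → ℝ, (∀ n, ContDiff ℝ 1 (ρ n)) ∧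
    (∀ n, HasCompactSupport (ρ n)) ∧ (∀ n x, 0 ≤ ρ n x ∧ ρ n x ≤ J x ^ a) ∧
    (∀ n x v, |fderiv ℝ (ρ n) x v| ≤ B * J x ^ (a - 1) * ‖v‖) ∧
    ∀ x, ∀ᶠ n in Filter.atTop, ρ n x = J x ^ a := by
  let χ : ContDiffBump (0 : EE d) := ⟨1, 2, one_pos, one_lt_two⟩
  have hχ : ContDiff ℝ 1 χ := χ.contDiff
  have hχc : HasCompactSupport χ := χ.hasCompactSupport
  obtain ⟨M, hM⟩ := (hχc.fderiv ℝ).exists_bound_of_continuous (hχ.continuous_fderiv one_ne_zero)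
  have hM0 : 0 ≤ M := (norm_nonneg _).trans (hM 0)
  have hR : ∀ n : ℕ, (0 : ℝ) < n + 1 := fun n => by positivity
  let s : ℕ → EE d →L[ℝ] EE d := fun n => ((n : ℝ) + 1)⁻¹ • ContinuousLinearMap.id ℝ (EE d)
  have hs : ∀ n x, s n x = ((n : ℝ) + 1)⁻¹ • x := fun n x => rfl
  have c1 : ∀ n, ContDiff ℝ 1 (fun x => χ (s n x)) := fun n => hχ.comp (s n).contDiff
  have c2 : ∀ n, HasCompactSupport (fun x => χ (s n x)) := fun n =>
    hχc.comp_homeomorph (Homeomorph.smulOfNeZero ((n : ℝ) + 1)⁻¹ (inv_ne_zero (hR n).ne'))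
  have c3 : ∀ n x v, fderiv ℝ (fun x => χ (s n x)) x v = fderiv ℝ χ (s n x) (s n v) := by
    intro n x v
    have : HasFDerivAt (fun x => χ (s n x)) _ x :=
      ((hχ.differentiable one_ne_zero) (s n x)).hasFDerivAt.comp x (s n).hasFDerivAt
    rw [this.fderiv]; rfl
  have c4 : ∀ n x v, |fderiv ℝ (fun x => χ (s n x)) x v| ≤ 3 * M * (J x)⁻¹ * ‖v‖ := by
    intro n x v
    have hJ := J_pos x
    rw [c3]
    by_cases hx : fderiv ℝ χ (s n x) = 0
    · rw [hx]; simp; positivity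
    · have h1 : s n x ∈ Metric.closedBall (0 : EE d) 2 := by
        have := subset_tsupport (fderiv ℝ χ) (Function.mem_support.2 hx)
        have := (tsupport_fderiv_subset ℝ (f := χ)) this
        rwa [χ.tsupport_eq] at this
      rw [mem_closedBall_zero_iff, hs, norm_smul, norm_inv, Real.norm_of_nonneg (hR n).le,
        inv_mul_le_iff₀ (hR n)] at h1
      have h2 : J x ≤ 3 * ((n : ℝ) + 1) := by
        have := J_lip x 0
        have j0 : J (0 : EE d) = 1 := by simp [J]
        rw [j0, sub_zero] at this
        have : (0 : ℝ) ≤ n := Nat.cast_nonneg n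
        linarith
      calc |fderiv ℝ χ (s n x) (s n v)| ≤ ‖fderiv ℝ χ (s n x)‖ * ‖s n v‖ := (fderiv ℝ χ (s n x)).le_opNorm _
        _ ≤ M * (((n : ℝ) + 1)⁻¹ * ‖v‖) := by
          gcongr
          · exact hM _
          · rw [hs, norm_smul, norm_inv, Real.norm_of_nonneg (hR n).le]
        _ ≤ M * ((3 * (J x)⁻¹) * ‖v‖) := by
          gcongr
          rw [inv_eq_one_div, ← div_eq_mul_inv, div_le_div_iff₀ (hR n) hJ]
          linarith
        _ = _ := by ring
  refine ⟨3 * M + |a|, by positivity, fun n x => χ (s n x) * J x ^ a, ?_, ?_, ?_, ?_, ?_⟩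
  · exact fun n => (c1 n).mul (J_rpow_contDiff a)
  · exact fun n => (c2 n).mul_right
  · intro n x
    have : 0 ≤ J x ^ a := Real.rpow_nonneg (J_pos x).le _
    exact ⟨mul_nonneg χ.nonneg this, mul_le_of_le_one_left this χ.le_one⟩
  · intro n x v
    have hJ := J_pos x
    have : HasFDerivAt (fun x => χ (s n x) * J x ^ a) _ x :=
      ((c1 n).differentiable one_ne_zero x).hasFDerivAt.mul
        ((J_rpow_contDiff a).differentiable one_ne_zero x).hasFDerivAt
    rw [this.fderiv]
    simp only [add_apply, smul_apply, smul_eq_mul]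
    refine (abs_add_le _ _).trans ?_
    rw [abs_mul, abs_mul, abs_of_nonneg (χ.nonneg : 0 ≤ χ (s n x)),
      abs_of_nonneg (by positivity : 0 ≤ J x ^ a)]
    have k1 : χ (s n x) * |fderiv ℝ (fun x : EE d => J x ^ a) x v| ≤ |a| * J x ^ (a - 1) * ‖v‖ :=
      (mul_le_of_le_one_left (abs_nonneg _) χ.le_one).trans (J_rpow_fderiv_le a x v)
    have k2 : J x ^ a * |fderiv ℝ (fun x => χ (s n x)) x v| ≤ 3 * M * J x ^ (a - 1) * ‖v‖ := by
      refine (mul_le_mul_of_nonneg_left (c4 n x v) (by positivity)).trans ?_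
      rw [Real.rpow_sub_one hJ.ne']
      apply le_of_eq; field_simp
    linarith
  · intro x
    filter_upwards [Filter.eventually_ge_atTop ⌈‖x‖⌉₊] with n hn
    have h1 : ‖x‖ ≤ n := (Nat.le_ceil _).trans (by exact_mod_cast hn)
    have : χ (s n x) = 1 := by
      apply χ.one_of_mem_closedBall
      rw [mem_closedBall_zero_iff, hs, norm_smul, norm_inv, Real.norm_of_nonneg (hR n).le,
        inv_mul_le_iff₀ (hR n)]
      change ‖x‖ ≤ ((n : ℝ) + 1) * 1
      linarith
    simp [this]

end CZ

namespace CZ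

variable {d : ℕ}

lemma lint_nm {p : ℝ} (hp : 0 < p) {g : EE d → ℝ} (hg : Continuous g)
    (hT : ∫⁻ x, ENNReal.ofReal |g x| ^ p ≠ ⊤) :
    Integrable (fun x => |g x| ^ p) ∧ ∫⁻ x, ENNReal.ofReal |g x| ^ p = ENNReal.ofReal (nm p g ^ p) := by
  have hgp : Continuous fun x => |g x| ^ p := hg.abs.rpow_const fun _ => Or.inr hp.le
  have e : ∀ x, ENNReal.ofReal |g x| ^ p = ENNReal.ofReal (|g x| ^ p) := fun x =>
    ENNReal.ofReal_rpow_of_nonneg (abs_nonneg _) hp.le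
  simp only [e] at hT ⊢
  have hi : Integrable (fun x => |g x| ^ p) := by
    refine ⟨hgp.aestronglyMeasurable, ?_⟩
    rw [hasFiniteIntegral_iff_ofReal (Filter.Eventually.of_forall fun x => by positivity)]
    exact lt_top_iff_ne_top.2 hT
  refine ⟨hi, ?_⟩
  rw [nm_rpow hp, ofReal_integral_eq_lintegral_ofReal hi (Filter.Eventually.of_forall fun x => by positivity)]

lemma nm_mono {p : ℝ} (hp : 0 < p) {g h : EE d → ℝ}
    (hh : Integrable (fun x => |h x| ^ p)) (hgh : ∀ x, |g x| ≤ |h x|) : nm p g ≤ nm p h := by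
  unfold nm
  refine Real.rpow_le_rpow (integral_nonneg fun x => by positivity) ?_ (by positivity)
  refine integral_mono_of_nonneg (Filter.Eventually.of_forall fun x => by positivity) hh
    (Filter.Eventually.of_forall fun x => ?_)
  exact Real.rpow_le_rpow (abs_nonneg _) (hgh x) hp.le

/-- constant -/
noncomputable def C1 (d : ℕ) (p q : ℝ) : ENNReal :=
  2 ^ (p - 1) * (ENNReal.ofReal ((2 * KK p q * (d + 1)) ^ p) + 1)

lemma C1_ne_top (d : ℕ) {p : ℝ} (hp : 1 < p) (q : ℝ) : C1 d p q ≠ ⊤ := by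
  unfold C1
  exact ENNReal.mul_ne_top (ENNReal.rpow_ne_top_of_nonneg (by linarith) (by norm_num))
    (ENNReal.add_ne_top.2 ⟨ENNReal.ofReal_ne_top, ENNReal.one_ne_top⟩)

lemma bs_norm (i : Fin d) : ‖(bs i : EE d)‖ = 1 := by simp [bs]

lemma local_est (hd : 0 < d) {p q : ℝ} (hpq : p.HolderConjugate q) (a B : ℝ) (hB : 0 ≤ B)
    {ρ f nu : EE d → ℝ} {v : Fin d → EE d → ℝ} (hρ : ContDiff ℝ 1 ρ) (hρc : HasCompactSupport ρ)
    (hρ0 : ∀ x, 0 ≤ ρ x ∧ ρ x ≤ J x ^ a)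
    (hρ1 : ∀ x w, |fderiv ℝ ρ x w| ≤ B * J x ^ (a - 1) * ‖w‖)
    (hv : ∀ j, ContDiff ℝ 1 (v j)) (hf : Continuous f) (hnu : Continuous nu)
    (hvn : ∀ j x, |v j x| ≤ nu x)
    (hcurl : ∀ j l x, fderiv ℝ (v j) x (bs l) = fderiv ℝ (v l) x (bs j))
    (hdiv : ∀ x, ∑ l, fderiv ℝ (v l) x (bs l) = f x)
    (hT : ∫⁻ x, ENNReal.ofReal |J x ^ a * |f x| + 2 * d * B * J x ^ (a - 1) * nu x| ^ p ≠ ⊤) (i j : Fin d) :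
    ∫⁻ x, ENNReal.ofReal (ρ x * |fderiv ℝ (v j) x (bs i)|) ^ p ≤
      C1 d p q * ∫⁻ x, ENNReal.ofReal |J x ^ a * |f x| + 2 * d * B * J x ^ (a - 1) * nu x| ^ p := by
  have hp0 : 0 < p := hpq.pos
  have hp1 : 1 < p := hpq.lt
  have hd1 : (1 : ℝ) ≤ d := by exact_mod_cast hd
  set H : EE d → ℝ := fun x => J x ^ a * |f x| + 2 * d * B * J x ^ (a - 1) * nu x with hH
  have hJc : ∀ s : ℝ, Continuous fun x : EE d => J x ^ s := fun s => (J_rpow_contDiff s).continuous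
  have hHc : Continuous H := by
    have := hJc a
    have := hJc (a - 1)
    fun_prop
  have hnu0 : ∀ x, 0 ≤ nu x := fun x => (abs_nonneg _).trans (hvn i x)
  have hJ0 : ∀ (s : ℝ) x, 0 ≤ J (d := d) x ^ s := fun s x => Real.rpow_nonneg (J_pos x).le _
  have hH0 : ∀ x, 0 ≤ H x := fun x => by
    have := hJ0 a x
    have := hJ0 (a - 1) x
    have := hnu0 x
    simp only [hH]; positivity
  obtain ⟨hHi, hHe⟩ := lint_nm hp0 hHc hT
  let U : Fin d → EE d → ℝ := fun k x => ρ x * v k x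
  have hU : ∀ k, ContDiff ℝ 1 (U k) := fun k => hρ.mul (hv k)
  have hUc : ∀ k, HasCompactSupport (U k) := fun k => hρc.mul_right
  have hUd : ∀ k x w, fderiv ℝ (U k) x w = ρ x * fderiv ℝ (v k) x w + v k x * fderiv ℝ ρ x w := by
    intro k x w
    have : HasFDerivAt (U k) _ x := (hρ.differentiable one_ne_zero x).hasFDerivAt.mul
        ((hv k).differentiable one_ne_zero x).hasFDerivAt
    rw [this.fderiv]
    simp only [add_apply, smul_apply, smul_eq_mul]
  have t : ∀ k l x, |v k x * fderiv ℝ ρ x (bs l)| ≤ B * J x ^ (a - 1) * nu x := by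
    intro k l x
    rw [abs_mul, mul_comm]
    have h1 := hρ1 x (bs l)
    rw [bs_norm, mul_one] at h1
    exact mul_le_mul h1 (hvn k x) (abs_nonneg _) (mul_nonneg hB (hJ0 _ _))
  have t0 : ∀ x, 0 ≤ B * J x ^ (a - 1) * nu x := fun x => mul_nonneg (mul_nonneg hB (hJ0 _ _)) (hnu0 x)
  have tf : ∀ x, 0 ≤ J x ^ a * |f x| := fun x => mul_nonneg (hJ0 _ _) (abs_nonneg _)
  have t1 : ∀ k l x, |v k x * fderiv ℝ ρ x (bs l)| ≤ H x := by
    intro k l x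
    refine (t k l x).trans ?_
    have := t0 x
    have := tf x
    simp only [hH]
    nlinarith
  have b1 : ∀ l, nm p (fun x => fderiv ℝ (U j) x (bs l) - fderiv ℝ (U l) x (bs j)) ≤ nm p H := by
    intro l
    refine nm_mono hp0 hHi fun x => ?_
    rw [abs_of_nonneg (hH0 x), hUd, hUd, hcurl j l,
      show ∀ A B C : ℝ, A + B - (A + C) = B - C from fun A B C => by ring]
    refine (abs_sub _ _).trans ?_
    have h1 := t j l x
    have h2 := t l j x
    have := t0 x
    have := tf x
    simp only [hH]
    nlinarith
  have b2 : nm p (fun x => ∑ l, fderiv ℝ (U l) x (bs l)) ≤ nm p H := by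
    refine nm_mono hp0 hHi fun x => ?_
    rw [abs_of_nonneg (hH0 x)]
    simp only [hUd]
    rw [Finset.sum_add_distrib, ← Finset.mul_sum, hdiv]
    refine (abs_add_le _ _).trans ?_
    have h1 : |∑ l, v l x * fderiv ℝ ρ x (bs l)| ≤ d * (B * J x ^ (a - 1) * nu x) := by
      refine (Finset.abs_sum_le_sum_abs _ _).trans ?_
      refine (Finset.sum_le_sum fun l _ => t l l x).trans ?_
      simp
    have h2 : |ρ x * f x| ≤ J x ^ a * |f x| := by
      rw [abs_mul, abs_of_nonneg (hρ0 x).1]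
      exact mul_le_mul_of_nonneg_right (hρ0 x).2 (abs_nonneg _)
    have := t0 x
    simp only [hH]
    nlinarith
  have hK : 0 ≤ KK p q := KK_nonneg hpq
  have hN : 0 ≤ nm p H := nm_nonneg p H
  have main : nm p (fun x => fderiv ℝ (U j) x (bs i)) ≤ (2 * KK p q * (d + 1)) * nm p H := by
    refine (cont_est hd hpq bs hU hUc i j).trans ?_
    have : (∑ l, nm p (fun x => fderiv ℝ (U j) x (bs l) - fderiv ℝ (U l) x (bs j))) ≤ d * nm p H := by
      refine (Finset.sum_le_sum fun l _ => b1 l).trans ?_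
      simp
    calc _ ≤ 2 * KK p q * (d * nm p H + nm p H) := by gcongr
      _ = _ := by ring
  have hUcont : Continuous fun x => fderiv ℝ (U j) x (bs i) :=
    ((hU j).continuous_fderiv one_ne_zero).clm_apply continuous_const
  have hUcs : HasCompactSupport fun x => fderiv ℝ (U j) x (bs i) := (hUc j).fderiv_apply ℝ _
  have hUi : Integrable (fun x => |fderiv ℝ (U j) x (bs i)| ^ p) := by
    refine (hUcont.abs.rpow_const fun _ => Or.inr hp0.le).integrable_of_hasCompactSupport ?_
    exact hUcs.comp_left (g := fun t : ℝ => |t| ^ p) (by simp [hp0.ne'])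
  have hUe : ∫⁻ x, ENNReal.ofReal |fderiv ℝ (U j) x (bs i)| ^ p ≤
      ENNReal.ofReal ((2 * KK p q * (d + 1)) ^ p) * ∫⁻ x, ENNReal.ofReal |H x| ^ p := by
    have e : ∀ x, ENNReal.ofReal |fderiv ℝ (U j) x (bs i)| ^ p = ENNReal.ofReal (|fderiv ℝ (U j) x (bs i)| ^ p) :=
      fun x => ENNReal.ofReal_rpow_of_nonneg (abs_nonneg _) hp0.le
    simp only [e]
    rw [← ofReal_integral_eq_lintegral_ofReal hUi (Filter.Eventually.of_forall fun x => by positivity),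
      hHe, ← ENNReal.ofReal_mul (by positivity), ← Real.mul_rpow (by positivity) hN]
    apply ENNReal.ofReal_le_ofReal
    rw [← nm_rpow hp0]
    exact Real.rpow_le_rpow (nm_nonneg _ _) main hp0.le
  have mU : Measurable fun x => ENNReal.ofReal |fderiv ℝ (U j) x (bs i)| ^ p := by
    have := hUcont.measurable
    fun_prop
  calc ∫⁻ x, ENNReal.ofReal (ρ x * |fderiv ℝ (v j) x (bs i)|) ^ p
      ≤ ∫⁻ x, 2 ^ (p - 1) * (ENNReal.ofReal |fderiv ℝ (U j) x (bs i)| ^ p + ENNReal.ofReal |H x| ^ p) := by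
        refine lintegral_mono fun x => ?_
        refine le_trans ?_ (ENNReal.rpow_add_le_mul_rpow_add_rpow _ _ hp1.le)
        refine ENNReal.rpow_le_rpow ?_ hp0.le
        rw [← ENNReal.ofReal_add (abs_nonneg _) (abs_nonneg _)]
        apply ENNReal.ofReal_le_ofReal
        rw [abs_of_nonneg (hH0 x)]
        have h1 := t1 j i x
        have h2 : ρ x * |fderiv ℝ (v j) x (bs i)| = |fderiv ℝ (U j) x (bs i) - v j x * fderiv ℝ ρ x (bs i)| := by
          rw [hUd, add_sub_cancel_right, abs_mul, abs_of_nonneg (hρ0 x).1]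
        rw [h2]
        exact (abs_sub _ _).trans (by linarith)
    _ = 2 ^ (p - 1) * ((∫⁻ x, ENNReal.ofReal |fderiv ℝ (U j) x (bs i)| ^ p) + (∫⁻ x, ENNReal.ofReal |H x| ^ p)) := by
        rw [lintegral_const_mul' _ _ (ENNReal.rpow_ne_top_of_nonneg (by linarith) (by norm_num)),
          lintegral_add_left mU]
    _ ≤ 2 ^ (p - 1) * (ENNReal.ofReal ((2 * KK p q * (d + 1)) ^ p) * (∫⁻ x, ENNReal.ofReal |H x| ^ p)
          + (∫⁻ x, ENNReal.ofReal |H x| ^ p)) := by gcongr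
    _ = _ := by
        generalize (∫⁻ x, ENNReal.ofReal |H x| ^ p) = T
        rw [C1]; ring

end CZ

namespace CZ

variable {d : ℕ}

lemma z_eq (z : EE d) : z = ∑ i, z i • (bs i : EE d) := by
  ext j
  have : (∑ i, z i • (bs i : EE d)) j = ∑ i, (z i • (bs i : EE d)) j := by simp
  rw [this]
  simp [bs_apply]

lemma norm_le_sum (z : EE d) : ‖z‖ ≤ ∑ j, |z j| := by
  conv_lhs => rw [z_eq z]
  refine (norm_sum_le _ _).trans (le_of_eq ?_)
  refine Finset.sum_congr rfl fun i _ => ?_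
  rw [norm_smul, bs_norm, mul_one, Real.norm_eq_abs]

lemma clm_norm_le (D : EE d →L[ℝ] EE d) : ‖D‖ ≤ ∑ i, ∑ j, |D (bs i) j| := by
  refine D.opNorm_le_bound (by positivity) fun w => ?_
  conv_lhs => rw [z_eq w]
  rw [map_sum, Finset.sum_mul]
  refine (norm_sum_le _ _).trans (Finset.sum_le_sum fun i _ => ?_)
  rw [map_smul, norm_smul, Real.norm_eq_abs, mul_comm]
  exact mul_le_mul (norm_le_sum _) (coord_le w i) (abs_nonneg _) (by positivity)

lemma coord_fderiv {u : EE d → EE d} (hu : Differentiable ℝ u) (x w : EE d) (j : Fin d) :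
    (fderiv ℝ u x w) j = fderiv ℝ (fun x => u x j) x w := by
  have : HasFDerivAt (fun x => u x j) _ x :=
    (EuclideanSpace.proj j : EE d →L[ℝ] ℝ).hasFDerivAt.comp x (hu x).hasFDerivAt
  rw [this.fderiv]; rfl

lemma Jf_meas {g : EE d → ℝ} (hg : Continuous g) (a p : ℝ) :
    Measurable fun x => ENNReal.ofReal (J x ^ a * g x) ^ p := by
  have h1 : Measurable fun x : EE d => J x ^ a * g x :=
    ((J_rpow_contDiff a).continuous.mul hg).measurable
  fun_prop

lemma u_est (hd : 2 ≤ d) {p q θ : ℝ} (hpq : p.HolderConjugate q) (hθ : 1 < θ) (hθ' : θ < d) :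
    ∃ C : ENNReal, C ≠ ⊤ ∧ ∀ f : EE d → ℝ, ContDiff ℝ 1 f → HasCompactSupport f → ∀ u : EE d → EE d,
      (∀ x, u x = ∫ y, (f y / ((d : ℝ) * om d * ‖x - y‖ ^ d)) • (x - y)) →
      ∫⁻ x, ENNReal.ofReal (J x ^ (θ - d / p - 1) * ‖u x‖) ^ p ≤
        C * ∫⁻ x, ENNReal.ofReal (J x ^ (θ - d / p) * |f x|) ^ p := by
  obtain ⟨C, hC, h⟩ := schur hd hpq hθ hθ'
  have hp0 := hpq.pos
  refine ⟨C * ENNReal.ofReal (1 / (d * om d)) ^ p, ENNReal.mul_ne_top hC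
    (ENNReal.rpow_ne_top_of_nonneg hp0.le ENNReal.ofReal_ne_top), fun f hf hc u hu => ?_⟩
  have hm : Measurable fun y => ENNReal.ofReal (1 / (d * om d)) * ENNReal.ofReal |f y| := by
    have := hf.continuous.measurable
    fun_prop
  have h1 := h _ hm
  have hJ0 : ∀ (s : ℝ) x, 0 ≤ J (d := d) x ^ s := fun s x => Real.rpow_nonneg (J_pos x).le _
  calc _ ≤ ∫⁻ x, (Jr (θ - d / p - 1) x * ∫⁻ y, kk (x - y) * (ENNReal.ofReal (1 / (d * om d)) * ENNReal.ofReal |f y|)) ^ p := by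
        refine lintegral_mono fun x => ENNReal.rpow_le_rpow ?_ hp0.le
        rw [ENNReal.ofReal_mul (hJ0 _ _)]
        exact mul_le_mul_right (u_bound hd hu x) _
    _ ≤ _ := h1
    _ = C * ∫⁻ y, ENNReal.ofReal (1 / (d * om d)) ^ p * ENNReal.ofReal (J y ^ (θ - d / p) * |f y|) ^ p := by
        congr 2
        ext y
        rw [← ENNReal.mul_rpow_of_nonneg _ _ hp0.le, ENNReal.ofReal_mul (hJ0 _ _), Jr]
        congr 1
        ring
    _ = _ := by
        rw [lintegral_const_mul' _ _ (ENNReal.rpow_ne_top_of_nonneg hp0.le ENNReal.ofReal_ne_top), mul_assoc]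

theorem main_est (hd : 2 ≤ d) {p q θ : ℝ} (hpq : p.HolderConjugate q) (hθ : 1 < θ) (hθ' : θ < d) :
    ∃ C : ENNReal, C ≠ ⊤ ∧ ∀ f : EE d → ℝ, ContDiff ℝ 1 f → HasCompactSupport f → ∀ u : EE d → EE d,
      (∀ x, u x = ∫ y, (f y / ((d : ℝ) * om d * ‖x - y‖ ^ d)) • (x - y)) →
      ContDiff ℝ 1 u ∧
      ∫⁻ x, ENNReal.ofReal (J x ^ (θ - d / p - 1) * ‖u x‖) ^ p ≤
        C * (∫⁻ x, ENNReal.ofReal (J x ^ (θ - d / p) * |f x|) ^ p) ∧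
      ∫⁻ x, ENNReal.ofReal (J x ^ (θ - d / p) * ‖fderiv ℝ u x‖) ^ p ≤
        C * (∫⁻ x, ENNReal.ofReal (J x ^ (θ - d / p) * |f x|) ^ p) ∧
      ∫⁻ x, ENNReal.ofReal (J x ^ (θ - d / p) * |f x|) ^ p ≠ ⊤ := by
  obtain ⟨C0, hC0, h0⟩ := u_est hd hpq hθ hθ'
  set a := θ - d / p with ha
  obtain ⟨B, hB, ρ, hρ, hρc, hρ0, hρ1, hρl⟩ := cutwt (d := d) a
  have hp0 := hpq.pos
  have hp1 := hpq.lt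
  have hd0 : 0 < d := by omega
  have hom := om_pos d
  have h2p : (2 : ENNReal) ^ (p - 1) ≠ ⊤ := ENNReal.rpow_ne_top_of_nonneg (by linarith) (by norm_num)
  have hbp : ENNReal.ofReal (2 * d * B) ^ p ≠ ⊤ := ENNReal.rpow_ne_top_of_nonneg hp0.le ENNReal.ofReal_ne_top
  let C2 : ENNReal := 2 ^ (p - 1) * (1 + ENNReal.ofReal (2 * d * B) ^ p * C0)
  have hC2 : C2 ≠ ⊤ := ENNReal.mul_ne_top h2p
    (ENNReal.add_ne_top.2 ⟨ENNReal.one_ne_top, ENNReal.mul_ne_top hbp hC0⟩)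
  let s : Finset (Fin d × Fin d) := Finset.univ
  let N : ENNReal := (s.card : ENNReal) ^ (p - 1)
  have hN : N ≠ ⊤ := ENNReal.rpow_ne_top_of_nonneg (by linarith) (ENNReal.natCast_ne_top _)
  let C3 : ENNReal := N * (s.card * (C1 d p q * C2))
  have hC3 : C3 ≠ ⊤ := ENNReal.mul_ne_top hN (ENNReal.mul_ne_top (ENNReal.natCast_ne_top _)
    (ENNReal.mul_ne_top (C1_ne_top d hp1 q) hC2))
  have hJ0 : ∀ (s : ℝ) x, 0 ≤ J (d := d) x ^ s := fun s x => Real.rpow_nonneg (J_pos x).le _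
  refine ⟨C0 + C3, ENNReal.add_ne_top.2 ⟨hC0, hC3⟩, fun f hf hc u hu => ?_⟩
  have hS := h0 f hf hc u hu
  -- components
  have hco : ∀ j : Fin d, (fun x => u x j) = fun x => (1 / (d * om d)) * Uf f j x := fun j =>
    funext fun x => u_coord hd hf hc hu x j
  have hv : ∀ j : Fin d, ContDiff ℝ 1 (fun x => u x j) := fun j => by
    rw [hco]; exact contDiff_const.mul (Uf_contDiff hd hf hc j)
  have hvd : ∀ (j : Fin d) x w, fderiv ℝ (fun x => u x j) x w = (1 / (d * om d)) * fderiv ℝ (Uf f j) x w := by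
    intro j x w
    rw [hco, fderiv_const_mul ((Uf_contDiff hd hf hc j).differentiable one_ne_zero x)]
    rfl
  have hucd : ContDiff ℝ 1 u := (contDiff_euclidean).2 hv
  have hcurl : ∀ (j l : Fin d) x, fderiv ℝ (fun x => u x j) x (bs l) = fderiv ℝ (fun x => u x l) x (bs j) := by
    intro j l x
    rw [hvd, hvd, Uf_curl hd hf hc]
  have hdiv : ∀ x, ∑ l : Fin d, fderiv ℝ (fun x => u x l) x (bs l) = f x := by
    intro x
    simp only [hvd]
    rw [← Finset.mul_sum, Uf_div hd hf hc]
    field_simp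
  set F : ENNReal := ∫⁻ x, ENNReal.ofReal (J x ^ a * |f x|) ^ p with hF
  have hFt : F ≠ ⊤ := by
    have hcont : Continuous fun x => (J x ^ a * |f x|) ^ p :=
      ((J_rpow_contDiff a).continuous.mul hf.continuous.abs).rpow_const fun _ => Or.inr hp0.le
    have hcs : HasCompactSupport fun x => (J x ^ a * |f x|) ^ p := by
      refine hc.mono fun x hx => ?_
      rw [Function.mem_support] at hx ⊢
      intro h; apply hx; simp [h, hp0.ne']
    have hi : Integrable (fun x => (J x ^ a * |f x|) ^ p) := hcont.integrable_of_hasCompactSupport hcs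
    have e : ∀ x, ENNReal.ofReal (J x ^ a * |f x|) ^ p = ENNReal.ofReal ((J x ^ a * |f x|) ^ p) := fun x =>
      ENNReal.ofReal_rpow_of_nonneg (mul_nonneg (hJ0 _ _) (abs_nonneg _)) hp0.le
    simp only [hF, e]
    exact ((hasFiniteIntegral_iff_ofReal (Filter.Eventually.of_forall fun x =>
      Real.rpow_nonneg (mul_nonneg (hJ0 _ _) (abs_nonneg _)) _)).1 hi.2).ne
  have hT : ∫⁻ x, ENNReal.ofReal |J x ^ a * |f x| + 2 * d * B * J x ^ (a - 1) * ‖u x‖| ^ p ≤ C2 * F := by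
    calc _ ≤ ∫⁻ x, 2 ^ (p - 1) * (ENNReal.ofReal (J x ^ a * |f x|) ^ p +
            ENNReal.ofReal (2 * d * B) ^ p * ENNReal.ofReal (J x ^ (a - 1) * ‖u x‖) ^ p) := by
          refine lintegral_mono fun x => ?_
          have e1 : 0 ≤ J x ^ a * |f x| := mul_nonneg (hJ0 _ _) (abs_nonneg _)
          have e2 : 0 ≤ J x ^ (a - 1) * ‖u x‖ := mul_nonneg (hJ0 _ _) (norm_nonneg _)
          have e3 : 0 ≤ 2 * d * B := by positivity
          rw [← ENNReal.mul_rpow_of_nonneg _ _ hp0.le, ← ENNReal.ofReal_mul e3]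
          refine le_trans ?_ (ENNReal.rpow_add_le_mul_rpow_add_rpow _ _ hp1.le)
          rw [← ENNReal.ofReal_add e1 (by positivity), mul_assoc (2 * d * B), abs_of_nonneg (by positivity)]
      _ = 2 ^ (p - 1) * (F + ENNReal.ofReal (2 * d * B) ^ p * (∫⁻ x, ENNReal.ofReal (J x ^ (a - 1) * ‖u x‖) ^ p)) := by
          rw [lintegral_const_mul' _ _ h2p, lintegral_add_left (Jf_meas hf.continuous.abs a p),
            lintegral_const_mul' _ _ hbp]
      _ ≤ 2 ^ (p - 1) * (F + ENNReal.ofReal (2 * d * B) ^ p * (C0 * F)) := by gcongr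
      _ = C2 * F := by simp only [C2]; ring
  have hTt := (hT.trans_lt (lt_top_iff_ne_top.2 (ENNReal.mul_ne_top hC2 hFt))).ne
  have hdv : ∀ i j : Fin d, Continuous fun x => fderiv ℝ (fun x => u x j) x (bs i) := fun i j =>
    ((hv j).continuous_fderiv one_ne_zero).clm_apply continuous_const
  have hloc : ∀ (n : ℕ) (i j : Fin d),
      ∫⁻ x, ENNReal.ofReal (ρ n x * |fderiv ℝ (fun x => u x j) x (bs i)|) ^ p ≤ C1 d p q * (C2 * F) := by
    intro n i j
    refine (local_est (v := fun j x => u x j) (nu := fun x => ‖u x‖) hd0 hpq a B hB (hρ n) (hρc n) (hρ0 n) (hρ1 n) hv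
      hf.continuous hucd.continuous.norm (fun j x => coord_le _ j) hcurl hdiv hTt i j).trans ?_
    exact mul_le_mul_right hT _
  have hglob : ∀ i j : Fin d,
      ∫⁻ x, ENNReal.ofReal (J x ^ a * |fderiv ℝ (fun x => u x j) x (bs i)|) ^ p ≤ C1 d p q * (C2 * F) := by
    intro i j
    have hm : ∀ n : ℕ, Measurable fun x => ENNReal.ofReal (ρ n x * |fderiv ℝ (fun x => u x j) x (bs i)|) ^ p := by
      intro n
      have : Measurable fun x => ρ n x * |fderiv ℝ (fun x => u x j) x (bs i)| :=
        ((hρ n).continuous.mul (hdv i j).abs).measurable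
      fun_prop
    have e : ∀ x, ENNReal.ofReal (J x ^ a * |fderiv ℝ (fun x => u x j) x (bs i)|) ^ p =
        Filter.liminf (fun n : ℕ => ENNReal.ofReal (ρ n x * |fderiv ℝ (fun x => u x j) x (bs i)|) ^ p) Filter.atTop := by
      intro x
      symm
      refine Filter.Tendsto.liminf_eq ?_
      refine Filter.Tendsto.congr' ?_ tendsto_const_nhds
      filter_upwards [hρl x] with n hn
      rw [hn]
    simp only [e]
    refine (lintegral_liminf_le hm).trans ?_
    refine Filter.liminf_le_of_le (by isBoundedDefault) fun b hb => ?_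
    obtain ⟨n, hn⟩ := hb.exists
    exact hn.trans (hloc n i j)
  refine ⟨hucd, hS.trans (mul_le_mul_left le_self_add _), ?_, hFt⟩
  refine le_trans ?_ (mul_le_mul_left (le_add_self : C3 ≤ C0 + C3) _)
  calc ∫⁻ x, ENNReal.ofReal (J x ^ a * ‖fderiv ℝ u x‖) ^ p
      ≤ ∫⁻ x, N * ∑ ij ∈ s, ENNReal.ofReal (J x ^ a * |fderiv ℝ (fun x => u x ij.2) x (bs ij.1)|) ^ p := by
        refine lintegral_mono fun x => ?_
        refine le_trans ?_ (ENNReal.rpow_sum_le_const_mul_sum_rpow s _ hp1.le)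
        refine ENNReal.rpow_le_rpow ?_ hp0.le
        rw [← ENNReal.ofReal_sum_of_nonneg fun ij _ => mul_nonneg (hJ0 _ _) (abs_nonneg _)]
        apply ENNReal.ofReal_le_ofReal
        rw [← Finset.mul_sum]
        refine mul_le_mul_of_nonneg_left ?_ (hJ0 _ _)
        refine (clm_norm_le _).trans (le_of_eq ?_)
        simp only [s, Fintype.sum_prod_type]
        refine Finset.sum_congr rfl fun i _ => Finset.sum_congr rfl fun j _ => ?_
        rw [coord_fderiv (hucd.differentiable one_ne_zero)]
    _ = N * ∑ ij ∈ s, ∫⁻ x, ENNReal.ofReal (J x ^ a * |fderiv ℝ (fun x => u x ij.2) x (bs ij.1)|) ^ p := by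
        rw [lintegral_const_mul' _ _ hN, lintegral_finsetSum]
        exact fun ij _ => Jf_meas (hdv ij.1 ij.2).abs a p
    _ ≤ N * ∑ ij ∈ s, C1 d p q * (C2 * F) := by
        gcongr with ij
        exact hglob _ _
    _ = C3 * F := by
        rw [Finset.sum_const, nsmul_eq_mul]
        simp only [C3]; ring

end CZ

namespace CZ

variable {d : ℕ}

lemma to_real {p : ℝ} (hp : 0 < p) {g : EE d → ℝ} (hg : Continuous g) (hg0 : ∀ x, 0 ≤ g x) :
    ∫ x, (g x) ^ p = (∫⁻ x, ENNReal.ofReal (g x) ^ p).toReal := by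
  have hc : Continuous fun x => (g x) ^ p := hg.rpow_const fun _ => Or.inr hp.le
  rw [integral_eq_lintegral_of_nonneg_ae (Filter.Eventually.of_forall fun x => Real.rpow_nonneg (hg0 x) _)
    hc.aestronglyMeasurable]
  congr 2
  ext x
  rw [ENNReal.ofReal_rpow_of_nonneg (hg0 x) hp.le]

lemma root_le {p : ℝ} (hp : 0 < p) {A F C : ENNReal} (hC : C ≠ ⊤) (hF : F ≠ ⊤) (h : A ≤ C * F) :
    A.toReal ^ (1 / p) ≤ C.toReal ^ (1 / p) * F.toReal ^ (1 / p) := by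
  rw [← Real.mul_rpow ENNReal.toReal_nonneg ENNReal.toReal_nonneg, ← ENNReal.toReal_mul]
  exact Real.rpow_le_rpow ENNReal.toReal_nonneg (ENNReal.toReal_mono (ENNReal.mul_ne_top hC hF) h) (by positivity)

end CZ

theorem stmt15 (d : ℕ) (hd : 2 ≤ d) (p θ : ℝ) (hp : 1 < p)
    (hθ : θ ∈ Set.Ioo (1 : ℝ) (d : ℝ))
    -- `ωd` is the volume of the unit ball in `ℝ^d`
    (ωd : ℝ) (hωd : ωd = (volume (Metric.ball (0 : EuclideanSpace ℝ (Fin d)) 1)).toReal)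
    (w : EuclideanSpace ℝ (Fin d) → ℝ)
    (hw : ∀ x, w x = Real.sqrt (1 + ‖x‖ ^ 2)) :
    ∃ C > 0, ∀ f : EuclideanSpace ℝ (Fin d) → ℝ,
      ContDiff ℝ (⊤ : ℕ∞) f → HasCompactSupport f →
      ∀ u : EuclideanSpace ℝ (Fin d) → EuclideanSpace ℝ (Fin d),
        -- `u = ∇Γ ∗ f`, with `∇Γ(x) = x/(d ω_d |x|^d)`
        (∀ x, u x = ∫ y, (f y / ((d : ℝ) * ωd * ‖x - y‖ ^ d)) • (x - y)) →
        (∫ x, (w x ^ (θ - (d : ℝ) / p - 1) * ‖u x‖) ^ p) ^ (1 / p) +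
            (∫ x, (w x ^ (θ - (d : ℝ) / p) * ‖fderiv ℝ u x‖) ^ p) ^ (1 / p)
          ≤ C * (∫ x, (w x ^ (θ - (d : ℝ) / p) * |f x|) ^ p) ^ (1 / p) := by
  have hwJ : w = CZ.J := funext hw
  have hom : ωd = CZ.om d := hωd
  subst hwJ hom
  have hpq := Real.HolderConjugate.conjExponent hp
  have hp0 : 0 < p := by linarith
  obtain ⟨C, hC, h⟩ := CZ.main_est hd hpq hθ.1 hθ.2
  refine ⟨C.toReal ^ (1 / p) + C.toReal ^ (1 / p) + 1, by positivity, fun f hf hc u hu => ?_⟩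
  obtain ⟨hcd, h1, h2, h3⟩ := h f (hf.of_le (by exact_mod_cast le_top)) hc u hu
  have hJ0 : ∀ (s : ℝ) x, 0 ≤ CZ.J (d := d) x ^ s := fun s x => Real.rpow_nonneg (CZ.J_pos x).le _
  have hJc : ∀ s : ℝ, Continuous fun x : CZ.EE d => CZ.J x ^ s := fun s => (CZ.J_rpow_contDiff s).continuous
  have c1 : Continuous fun x : CZ.EE d => CZ.J x ^ (θ - (d : ℝ) / p - 1) * ‖u x‖ := (hJc _).mul hcd.continuous.norm
  have e1 : ∫ x, (CZ.J x ^ (θ - (d : ℝ) / p - 1) * ‖u x‖) ^ p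
      = (∫⁻ x, ENNReal.ofReal (CZ.J x ^ (θ - (d : ℝ) / p - 1) * ‖u x‖) ^ p).toReal :=
    CZ.to_real hp0 c1 (fun x => mul_nonneg (hJ0 _ _) (norm_nonneg _))
  have c2 : Continuous fun x : CZ.EE d => CZ.J x ^ (θ - (d : ℝ) / p) * ‖fderiv ℝ u x‖ := (hJc _).mul (hcd.continuous_fderiv one_ne_zero).norm
  have e2 : ∫ x, (CZ.J x ^ (θ - (d : ℝ) / p) * ‖fderiv ℝ u x‖) ^ p
      = (∫⁻ x, ENNReal.ofReal (CZ.J x ^ (θ - (d : ℝ) / p) * ‖fderiv ℝ u x‖) ^ p).toReal :=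
    CZ.to_real hp0 c2 (fun x => mul_nonneg (hJ0 _ _) (norm_nonneg _))
  have c3 : Continuous fun x : CZ.EE d => CZ.J x ^ (θ - (d : ℝ) / p) * |f x| := (hJc _).mul hf.continuous.abs
  have e3 : ∫ x, (CZ.J x ^ (θ - (d : ℝ) / p) * |f x|) ^ p
      = (∫⁻ x, ENNReal.ofReal (CZ.J x ^ (θ - (d : ℝ) / p) * |f x|) ^ p).toReal :=
    CZ.to_real hp0 c3 (fun x => mul_nonneg (hJ0 _ _) (abs_nonneg _))
  rw [e1, e2, e3]
  have r1 := CZ.root_le hp0 hC h3 h1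
  have r2 := CZ.root_le hp0 hC h3 h2
  have r3 : 0 ≤ (∫⁻ x, ENNReal.ofReal (CZ.J x ^ (θ - (d : ℝ) / p) * |f x|) ^ p).toReal ^ (1 / p) := by positivity
  linarith
end
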